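/- arXiv:2511.05322 — 3 statements merged into one kernel-verified Lean document; each statement's English description precedes it below -/
import Mathlib

section
/- With F = ℚ(ζ_m), F₀ its maximal totally real subfield, and λ ∈ O_{F₀} totally positive, coprime to m, prime, of odd norm, with −λ a square mod 4·O_{F₀}, and inert in F/F₀: if the class number of F is odd, then the class numbers of E = F(√(−λ)) and of its maximal totally real subfield E₀ are both odd. -/
open NumberField

/-!
Let `L/K` be a quadratic extension with `L = K(s)`, `s² = d` and `d` a square modulo `4`. Suppose
that `h(K)` is odd and that `L` has twice as many infinite places as `K`. The Herbrand quotient of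
the units then gives `2 [𝓞_Kˣ : N 𝓞_Lˣ] = |H¹(𝓞_Lˣ)|`, and `H¹(𝓞_Lˣ)` embeds into the divisors of
`(s)`. If `d` has at most two prime factors, and some unit of `K` is not a norm from `L` when there
are two, then every unit of `K` that is a norm from `L` is the norm of a unit, ideal classes fixed
by `Gal(L/K)` are represented by ambiguous ideals, and these are principal up to an odd power;
hence `h(L)` is odd.

For `E/F` take `d = -λ`, a prime. With `θ = ζ + ζ⁻¹`, so that `(ζ - ζ⁻¹)² = θ² - 4 = π`, the
extension `E₀/F₀` has `d = -λπ`. Its second ramified prime `π` is compensated by a real cyclotomic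
unit `(ζⁿ - ζ⁻ⁿ) / (ζ - ζ⁻¹) ≡ n`, for a quadratic nonresidue `n` modulo `π`: it is not a norm.
Finally `h(F₀)` is odd because ideals of `F₀` that become principal in `F` are already principal.
-/

section Herbrand

open Module

theorem finrank_range_add_finrank_ker_of_isDomain {R M N : Type*} [CommRing R] [IsDomain R]
    [AddCommGroup M] [AddCommGroup N] [Module R M] [Module R N] [Module.Finite R M]
    (f : M →ₗ[R] N) :
    finrank R (LinearMap.range f) + finrank R (LinearMap.ker f) = finrank R M := by
  rw [← (LinearMap.ker f).finrank_quotient_add_finrank, f.quotKerEquivRange.finrank_eq]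

theorem finrank_range_of_isTorsion_ker {R M N : Type*} [CommRing R] [IsDomain R]
    [AddCommGroup M] [AddCommGroup N] [Module R M] [Module R N] [Module.Finite R M]
    (f : M →ₗ[R] N) (hf : Module.IsTorsion R (LinearMap.ker f)) :
    finrank R (LinearMap.range f) = finrank R M := by
  rw [← finrank_range_add_finrank_ker_of_isDomain f,
    finrank_eq_zero_of_rank_eq_zero (Module.rank_eq_zero_iff_isTorsion.mpr hf), add_zero]

theorem finrank_prod_of_finite {A T : Type*} [AddCommGroup A] [AddCommGroup T]
    [Module.Finite ℤ A] [Finite T] : finrank ℤ (A × T) = finrank ℤ A := by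
  have hT : IsTorsion ℤ (LinearMap.ker (LinearMap.fst ℤ A T)) := by
    intro x
    refine ⟨⟨(Nat.card T : ℤ), mem_nonZeroDivisors_of_ne_zero
      (by exact_mod_cast Nat.card_pos.ne')⟩, ?_⟩
    have hx : x.1.1 = 0 := x.2
    have h_smul : (Nat.card T : ℤ) • x.1 = 0 :=
      Prod.ext (by simp [hx]) (by simp [natCast_zsmul])
    exact Subtype.ext h_smul
  rw [← finrank_range_of_isTorsion_ker _ hT,
    LinearMap.range_eq_top.mpr LinearMap.fst_surjective, finrank_top]

theorem index_range_nsmul_eq_of_addEquiv_prod {H A T : Type*} [AddCommGroup H] [AddCommGroup A]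
    [AddCommGroup T] [Module.Finite ℤ A] [Module.Free ℤ A] [Finite T] {n : ℕ} (hn : n ≠ 0)
    (e : H ≃+ A × T) :
    (nsmulAddMonoidHom n : H →+ H).range.index
      = n ^ finrank ℤ H * Nat.card (nsmulAddMonoidHom n : H →+ H).ker := by
  have h_range : (nsmulAddMonoidHom n : A × T →+ A × T).range
      = (nsmulAddMonoidHom n : A →+ A).range.prod (nsmulAddMonoidHom n : T →+ T).range := by
    ext ⟨a, t⟩
    simp [AddSubgroup.mem_prod]
  have h_ker : (nsmulAddMonoidHom n : A × T →+ A × T).ker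
      = (⊥ : AddSubgroup A).prod (nsmulAddMonoidHom n : T →+ T).ker := by
    have : IsAddTorsionFree A := isTorsionFree_int_iff_isAddTorsionFree.mp inferInstance
    ext ⟨a, t⟩
    simp [AddSubgroup.mem_prod, hn]
  have h_card : Nat.card (nsmulAddMonoidHom n : H →+ H).ker
      = Nat.card (nsmulAddMonoidHom n : T →+ T).ker := by
    have h_map : (nsmulAddMonoidHom n : H →+ H).ker.map (e : H →+ A × T)
        = (nsmulAddMonoidHom n : A × T →+ A × T).ker := by
      ext x
      obtain ⟨y, rfl⟩ := e.surjective x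
      simp [← map_nsmul]
    rw [Nat.card_congr (AddSubgroup.equivMapOfInjective _ (e : H →+ A × T) e.injective).toEquiv,
      h_map, h_ker, Nat.card_congr (AddSubgroup.prodEquiv _ _).toEquiv, Nat.card_prod]
    simp
  rw [← AddSubgroup.index_map_equiv _ e, AddEquiv.map_range_nsmulAddMonoidHom, h_range,
    AddSubgroup.index_prod, AddSubgroup.index_range_nsmul, AddSubgroup.index_range, h_card,
    e.toIntLinearEquiv.finrank_eq, finrank_prod_of_finite]

theorem index_range_nsmul_eq_pow_finrank_mul_card_ker {H : Type*} [AddCommGroup H]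
    [Module.Finite ℤ H] {n : ℕ} (hn : n ≠ 0) :
    (nsmulAddMonoidHom n : H →+ H).range.index
      = n ^ finrank ℤ H * Nat.card (nsmulAddMonoidHom n : H →+ H).ker := by
  have : AddGroup.FG H := Module.Finite.iff_addGroup_fg.mp inferInstance
  obtain ⟨r, ι, _, p, hp, k, ⟨e⟩⟩ := AddCommGroup.equiv_free_prod_directSum_zmod H
  have (i : ι) : NeZero (p i ^ k i) := ⟨(pow_pos (hp i).pos _).ne'⟩
  have : Finite (DirectSum ι fun i ↦ ZMod (p i ^ k i)) := by
    classical exact .of_equiv _ (DirectSum.addEquivProd fun i ↦ ZMod (p i ^ k i)).symm.toEquiv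
  exact index_range_nsmul_eq_of_addEquiv_prod hn e

variable {M : Type*} [AddCommGroup M] {n : ℕ} {f g : M →+ M}

theorem card_ker_nsmul_ker_eq (hfg : ∀ x, f x + g x = n • x) :
    Nat.card (nsmulAddMonoidHom n : f.ker →+ f.ker).ker
      = Nat.card (nsmulAddMonoidHom n : g.ker →+ g.ker).ker := by
  have h_ker (u : M →+ M) : (nsmulAddMonoidHom n : u.ker →+ u.ker).ker.map u.ker.subtype
      = u.ker ⊓ (nsmulAddMonoidHom n : M →+ M).ker := by
    ext x
    simp [AddSubgroup.mem_map, Subtype.ext_iff, AddMonoidHom.mem_ker, and_comm]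
  have h_inf : f.ker ⊓ (nsmulAddMonoidHom n : M →+ M).ker
      = g.ker ⊓ (nsmulAddMonoidHom n : M →+ M).ker := by
    ext x
    simp only [AddSubgroup.mem_inf, AddMonoidHom.mem_ker, nsmulAddMonoidHom_apply, ← hfg]
    refine and_congr_left fun h ↦ ?_
    rw [eq_neg_of_add_eq_zero_left h, neg_eq_zero]
  rw [← AddSubgroup.card_map_of_injective f.ker.subtype_injective, h_ker, h_inf, ← h_ker,
    AddSubgroup.card_map_of_injective g.ker.subtype_injective]

variable [Module.Finite ℤ M]

instance moduleFinite_int_ker (f : M →+ M) : Module.Finite ℤ f.ker :=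
  inferInstanceAs (Module.Finite ℤ (AddSubgroup.toIntSubmodule f.ker))

theorem finite_ker_nsmul (hn : n ≠ 0) : Finite (nsmulAddMonoidHom n : M →+ M).ker := by
  refine Module.finite_of_fg_torsion _ fun x ↦
    ⟨⟨(n : ℤ), mem_nonZeroDivisors_of_ne_zero (by exact_mod_cast hn)⟩, ?_⟩
  have h_smul : (n : ℤ) • x.1 = 0 := by
    rw [natCast_zsmul]
    exact x.2
  exact Subtype.ext h_smul

theorem index_ker_sup_ker_mul_relIndex_range (hn : n ≠ 0) (hfg : ∀ x, f x + g x = n • x)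
    (hgf : ∀ x, g (f x) = 0) :
    (g.ker ⊔ f.ker).index * f.range.relIndex g.ker
      = n ^ finrank ℤ g.ker * Nat.card (nsmulAddMonoidHom n : g.ker →+ g.ker).ker := by
  have h_map : g.ker.map f = g.ker.map (nsmulAddMonoidHom n) := by
    ext y
    simp only [AddSubgroup.mem_map, AddMonoidHom.mem_ker, nsmulAddMonoidHom_apply]
    refine exists_congr fun x ↦ and_congr_right fun hx ↦ ?_
    rw [← hfg x, hx, add_zero]
  have h_index : (g.ker.map f).relIndex f.range = (g.ker ⊔ f.ker).index := by
    rw [AddMonoidHom.range_eq_map, AddSubgroup.relIndex_map_map, top_sup_eq,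
      AddSubgroup.relIndex_top_right]
  have h_le : f.range ≤ g.ker := by
    rintro _ ⟨x, rfl⟩
    exact hgf x
  have h_map_le : g.ker.map f ≤ f.range := by
    rw [AddMonoidHom.range_eq_map]
    exact AddSubgroup.map_mono le_top
  rw [← h_index, AddSubgroup.relIndex_mul_relIndex _ _ _ h_map_le h_le, h_map,
    AddSubgroup.relIndex, AddSubgroup.addSubgroupOf_map_nsmulAddMonoidHom_eq_range,
    index_range_nsmul_eq_pow_finrank_mul_card_ker hn]

theorem finrank_ker_add_finrank_ker (hn : n ≠ 0) (hfg : ∀ x, f x + g x = n • x)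
    (hgf : ∀ x, g (f x) = 0) : finrank ℤ g.ker + finrank ℤ f.ker = finrank ℤ M := by
  let F := f.toIntLinearMap
  suffices h : finrank ℤ g.ker = finrank ℤ (LinearMap.range F) by
    rw [h]
    exact finrank_range_add_finrank_ker_of_isDomain F
  apply le_antisymm
  · let F' : g.ker →ₗ[ℤ] M := F ∘ₗ g.ker.subtype.toIntLinearMap
    have h_ker : IsTorsion ℤ (LinearMap.ker F') := by
      intro x
      refine ⟨⟨(n : ℤ), mem_nonZeroDivisors_of_ne_zero (by exact_mod_cast hn)⟩, ?_⟩
      have hf : f x.1.1 = 0 := x.2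
      have hg : g x.1.1 = 0 := x.1.2
      have h_smul : (n : ℤ) • x.1.1 = 0 := by
        rw [natCast_zsmul, ← hfg, hf, hg, add_zero]
      exact Subtype.ext (Subtype.ext h_smul)
    have h_le : LinearMap.range F' ≤ LinearMap.range F := by
      rintro _ ⟨x, rfl⟩
      exact ⟨x.1, rfl⟩
    exact (finrank_range_of_isTorsion_ker F' h_ker).symm.le.trans (Submodule.finrank_mono h_le)
  · have h_le : LinearMap.range F ≤ AddSubgroup.toIntSubmodule g.ker := by
      rintro _ ⟨x, rfl⟩
      exact hgf x
    exact Submodule.finrank_mono h_le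

theorem index_ker_sup_ker_mul_relIndex_range_ne_zero (hn : n ≠ 0)
    (hfg : ∀ x, f x + g x = n • x) (hgf : ∀ x, g (f x) = 0) :
    (g.ker ⊔ f.ker).index * f.range.relIndex g.ker ≠ 0 := by
  have := finite_ker_nsmul (M := g.ker) hn
  rw [index_ker_sup_ker_mul_relIndex_range hn hfg hgf]
  exact mul_ne_zero (pow_ne_zero _ hn) Nat.card_pos.ne'

theorem pow_mul_relIndex_range_ker (hn : n ≠ 0) (hfg : ∀ x, f x + g x = n • x)
    (hgf : ∀ x, g (f x) = 0) (hfg₀ : ∀ x, f (g x) = 0) {k : ℕ}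
    (hrank : finrank ℤ M = 2 * finrank ℤ g.ker + k) :
    n ^ k * f.range.relIndex g.ker = g.range.relIndex f.ker := by
  have h_g := index_ker_sup_ker_mul_relIndex_range hn hfg hgf
  have h_f := index_ker_sup_ker_mul_relIndex_range hn (fun x ↦ by rw [add_comm, hfg]) hfg₀
  have h_rank : finrank ℤ f.ker = finrank ℤ g.ker + k := by
    have := finrank_ker_add_finrank_ker hn hfg hgf
    omega
  apply Nat.eq_of_mul_eq_mul_left (Nat.pos_of_ne_zero
    (left_ne_zero_of_mul (index_ker_sup_ker_mul_relIndex_range_ne_zero hn hfg hgf)))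
  calc (g.ker ⊔ f.ker).index * (n ^ k * f.range.relIndex g.ker)
      = n ^ k * ((g.ker ⊔ f.ker).index * f.range.relIndex g.ker) := by ring
    _ = n ^ finrank ℤ f.ker * Nat.card (nsmulAddMonoidHom n : f.ker →+ f.ker).ker := by
      rw [h_g, h_rank, card_ker_nsmul_ker_eq hfg, pow_add]
      ring
    _ = (g.ker ⊔ f.ker).index * g.range.relIndex f.ker := by rw [← h_f, sup_comm]

theorem pow_mul_relIndex_range_ker_units {G : Type*} [CommGroup G] [Module.Finite ℤ (Additive G)]
    {n : ℕ} {f g : G →* G}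
    (hn : n ≠ 0) (hfg : ∀ x, f x * g x = x ^ n) (hgf : ∀ x, g (f x) = 1)
    (hfg₀ : ∀ x, f (g x) = 1) {k : ℕ}
    (hrank : finrank ℤ (Additive G) = 2 * finrank ℤ (Additive g.ker) + k) :
    n ^ k * f.range.relIndex g.ker = g.range.relIndex f.ker ∧ f.range.relIndex g.ker ≠ 0 :=
  ⟨pow_mul_relIndex_range_ker (f := f.toAdditive) (g := g.toAdditive) hn hfg hgf hfg₀ hrank,
    right_ne_zero_of_mul (index_ker_sup_ker_mul_relIndex_range_ne_zero (f := f.toAdditive)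
      (g := g.toAdditive) hn hfg hgf)⟩

end Herbrand

section PrincipalIdeals

open scoped nonZeroDivisors

variable {R : Type*} [CommRing R]

theorem isPrincipal_right_of_isPrincipal_mul [IsDomain R] {I J : Ideal R} (hI₀ : I ≠ ⊥)
    (hI : I.IsPrincipal) (hIJ : (I * J).IsPrincipal) : J.IsPrincipal := by
  obtain ⟨x, rfl⟩ := hI
  obtain ⟨z, hz⟩ := hIJ
  simp only [Ideal.submodule_span_eq] at hz hI₀
  have hx : x ≠ 0 := by rwa [Ne, Ideal.span_singleton_eq_bot] at hI₀
  obtain ⟨w, -, rfl⟩ : ∃ w ∈ J, x * w = z := by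
    rw [← Ideal.mem_span_singleton_mul, hz]
    exact Ideal.mem_span_singleton_self z
  rw [← Ideal.span_singleton_mul_span_singleton, Ideal.span_singleton_mul_right_inj hx] at hz
  exact ⟨w, hz⟩

theorem isPrincipal_of_sq_of_odd_pow [IsDomain R] {I : Ideal R} (hI₀ : I ≠ ⊥) {n : ℕ}
    (hn : Odd n) (h_sq : (I ^ 2).IsPrincipal) (h_pow : (I ^ n).IsPrincipal) :
    I.IsPrincipal := by
  obtain ⟨k, rfl⟩ := hn
  rw [pow_succ, pow_mul] at h_pow
  exact isPrincipal_right_of_isPrincipal_mul (pow_ne_zero _ (pow_ne_zero _ hI₀))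
    ((Ideal.isPrincipalSubmonoid R).pow_mem h_sq k) h_pow

variable [IsDedekindDomain R]

theorem isPrincipal_pow_card_classGroup (I : Ideal R) :
    (I ^ Nat.card (ClassGroup R)).IsPrincipal := by
  obtain rfl | hI := eq_or_ne I ⊥
  · by_cases h : Nat.card (ClassGroup R) = 0
    · rw [h, pow_zero, Ideal.one_eq_top]
      exact top_isPrincipal
    · rw [← Ideal.zero_eq_bot, zero_pow h]
      exact bot_isPrincipal
  · rw [← ClassGroup.mk0_eq_one_iff (pow_mem (mem_nonZeroDivisors_of_ne_zero hI) _),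
      ← SubmonoidClass.mk_pow I (mem_nonZeroDivisors_of_ne_zero hI), map_pow]
    exact pow_card_eq_one'

theorem odd_card_classGroup_of_isPrincipal_of_sq [Finite (ClassGroup R)]
    (h : ∀ I : Ideal R, I ≠ ⊥ → (I ^ 2).IsPrincipal → I.IsPrincipal) :
    Odd (Nat.card (ClassGroup R)) := by
  rw [← Nat.not_even_iff_odd, even_iff_two_dvd]
  intro h_two
  obtain ⟨c, hc⟩ := exists_prime_orderOf_dvd_card' 2 h_two
  obtain ⟨⟨I, hI⟩, rfl⟩ := ClassGroup.mk0_surjective c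
  have h_sq : (I ^ 2).IsPrincipal := by
    rw [← ClassGroup.mk0_eq_one_iff (pow_mem hI 2), ← SubmonoidClass.mk_pow, map_pow, ← hc]
    exact pow_orderOf_eq_one _
  rw [(ClassGroup.mk0_eq_one_iff hI).mpr (h I (nonZeroDivisors.ne_zero hI) h_sq),
    orderOf_one] at hc
  omega

theorem isPrincipal_of_sq (hodd : Odd (Nat.card (ClassGroup R))) {I : Ideal R} (hI : I ≠ ⊥)
    (h_sq : (I ^ 2).IsPrincipal) : I.IsPrincipal :=
  isPrincipal_of_sq_of_odd_pow hI hodd h_sq (isPrincipal_pow_card_classGroup I)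

theorem exists_span_mul_eq_of_span_mul_sq_eq (hodd : Odd (Nat.card (ClassGroup R)))
    {I J : Ideal R} (hI : I ≠ ⊥) (hJ : J ≠ ⊥) {a b : R} (ha : a ≠ 0) (hb : b ≠ 0)
    (h : Ideal.span {a} * I ^ 2 = Ideal.span {b} * J ^ 2) :
    ∃ c d : R, c ≠ 0 ∧ d ≠ 0 ∧ Ideal.span {c} * I = Ideal.span {d} * J := by
  have hI' := mem_nonZeroDivisors_of_ne_zero hI
  have hJ' := mem_nonZeroDivisors_of_ne_zero hJ
  have h_sq : ClassGroup.mk0 ⟨I, hI'⟩ ^ 2 = ClassGroup.mk0 ⟨J, hJ'⟩ ^ 2 := by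
    rw [← map_pow, ← map_pow, ClassGroup.mk0_eq_mk0_iff]
    exact ⟨a, b, ha, hb, h⟩
  obtain ⟨c, d, hc, hd, hcd⟩ := ClassGroup.mk0_eq_mk0_iff.mp
    ((powCoprime (Nat.coprime_two_right.mpr hodd)).injective h_sq)
  exact ⟨c, d, hc, hd, hcd⟩

theorem map_algebraMap_ne_bot {A B : Type*} [CommRing A] [CommRing B] [Algebra A B]
    [FaithfulSMul A B] {J : Ideal A} (hJ : J ≠ ⊥) : J.map (algebraMap A B) ≠ ⊥ := by
  rwa [Ne, Ideal.map_eq_bot_iff_of_injective (FaithfulSMul.algebraMap_injective A B)]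

theorem map_map_algebraMap {A B : Type*} [CommRing A] [CommRing B] [Algebra A B] (τ : B ≃ₐ[A] B)
    (I : Ideal A) : (I.map (algebraMap A B)).map τ = I.map (algebraMap A B) :=
  (Ideal.map_map (algebraMap A B) (τ : B →+* B)).trans
    (congrArg (I.map ·) (RingHom.ext τ.commutes))

end PrincipalIdeals

section AmbiguousIdeals

variable {A B : Type*} [CommRing A] [CommRing B] [Algebra A B]

/-- `τ` is an involution of `B` with fixed ring `A`, and `s ≠ 0` has the form `w - τ w`. For rings
of integers of a quadratic extension, `s` bounds the ramification: a `τ`-stable ideal becomes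
extended from `A` after multiplication by a divisor of `(s)`. -/
structure IsQuadraticInvolution (τ : B ≃ₐ[A] B) (s : B) : Prop where
  involutive : Function.Involutive τ
  mem_range_of_fixed : ∀ b, τ b = b → b ∈ Set.range (algebraMap A B)
  ne_zero : s ≠ 0
  exists_sub_eq : ∃ w, w - τ w = s

namespace IsQuadraticInvolution

variable {τ : B ≃ₐ[A] B} {s : B}

theorem apply_self (h : IsQuadraticInvolution τ s) : τ s = -s := by
  obtain ⟨w, rfl⟩ := h.exists_sub_eq
  rw [map_sub, h.involutive w, neg_sub]

theorem norm_mem_range (h : IsQuadraticInvolution τ s) (b : B) :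
    b * τ b ∈ Set.range (algebraMap A B) :=
  h.mem_range_of_fixed _ (by rw [map_mul, h.involutive b, mul_comm])

theorem map_map (h : IsQuadraticInvolution τ s) (I : Ideal B) : (I.map τ).map τ = I := by
  ext x
  simp only [Ideal.mem_map_of_equiv, exists_exists_and_eq_and, h.involutive _, exists_eq_right]

theorem span_mul_le_map_comap (h : IsQuadraticInvolution τ s) {I : Ideal B} (hI : I.map τ = I) :
    Ideal.span {s} * I ≤ (I.comap (algebraMap A B)).map (algebraMap A B) := by
  obtain ⟨w, hw⟩ := h.exists_sub_eq
  have h_fixed : ∀ b ∈ I, τ b = b → b ∈ (I.comap (algebraMap A B)).map (algebraMap A B) := by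
    intro b hb hτb
    obtain ⟨a, rfl⟩ := h.mem_range_of_fixed b hτb
    exact Ideal.mem_map_of_mem _ hb
  rw [Ideal.span_singleton_mul_le_iff]
  intro b hb
  have hτb : τ b ∈ I := hI ▸ Ideal.mem_map_of_mem τ hb
  have h_trace : s * b = w * (b + τ b) - (b * τ w + τ b * w) := by
    rw [← hw]
    ring
  rw [h_trace]
  refine Ideal.sub_mem _ (Ideal.mul_mem_left _ _ (h_fixed _ (I.add_mem hb hτb) ?_))
    (h_fixed _ (I.add_mem (I.mul_mem_right _ hb) (I.mul_mem_right _ hτb)) ?_)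
  · rw [map_add, h.involutive b, add_comm]
  · rw [map_add, map_mul, map_mul, h.involutive, h.involutive, add_comm]

theorem exists_apply_mul_eq_of_norm_eq [IsDomain B] (h : IsQuadraticInvolution τ s) {x y : B}
    (hx : x ≠ 0) (hxy : y * τ y = x * τ x) : ∃ γ : B, γ ≠ 0 ∧ τ γ * y = γ * x := by
  by_cases h_add : x + y = 0
  · refine ⟨s, h.ne_zero, ?_⟩
    rw [h.apply_self, eq_neg_of_add_eq_zero_right h_add]
    ring
  · refine ⟨(x + y) * τ x, mul_ne_zero h_add (by simpa using hx), ?_⟩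
    rw [map_mul, h.involutive, map_add]
    linear_combination x * hxy

theorem map_span_of_mul_unit_eq {γ : B} {e : Bˣ} (hγ : τ γ * e = γ) :
    (Ideal.span {γ}).map τ = Ideal.span {γ} := by
  rw [Ideal.map_span, Set.image_singleton, ← Ideal.span_singleton_mul_right_unit e.isUnit, hγ]

theorem exists_dvd_mul_eq_map [IsDedekindDomain B] (h : IsQuadraticInvolution τ s) {I : Ideal B}
    (hI₀ : I ≠ ⊥) (hI : I.map τ = I) :
    ∃ (D : Ideal B) (J : Ideal A),
      D ∣ Ideal.span {s} ∧ J ≠ ⊥ ∧ D * I = J.map (algebraMap A B) := by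
  have h_le := h.span_mul_le_map_comap hI
  obtain ⟨D, hD⟩ := Ideal.dvd_iff_le.mpr (Ideal.map_comap_le (f := algebraMap A B) (K := I))
  refine ⟨D, I.comap (algebraMap A B), ?_, ?_, by rw [hD, mul_comm]⟩
  · rw [hD, ← Ideal.dvd_iff_le, mul_comm] at h_le
    exact (mul_dvd_mul_iff_right hI₀).mp h_le
  · intro h_bot
    rw [h_bot, Ideal.map_bot, le_bot_iff] at h_le
    exact mul_ne_zero (by simpa using h.ne_zero) hI₀ h_le

end IsQuadraticInvolution

end AmbiguousIdeals

section UnitCohomology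

open Module

variable {A B : Type*} [CommRing A] [CommRing B] [Algebra A B]

/-- The norm `e ↦ e * τ e` on units, for an involution `τ`. -/
def unitsNorm (τ : B ≃ₐ[A] B) : Bˣ →* Bˣ :=
  MonoidHom.id Bˣ * Units.map (τ : B →* B)

/-- The map `e ↦ e / τ e` on units. For an involution `τ`, its image in the kernel of `unitsNorm τ`
has quotient `H¹(⟨τ⟩, Bˣ)`. -/
def unitsDivConj (τ : B ≃ₐ[A] B) : Bˣ →* Bˣ :=
  MonoidHom.id Bˣ / Units.map (τ : B →* B)

theorem val_unitsNorm (τ : B ≃ₐ[A] B) (e : Bˣ) : (unitsNorm τ e : B) = e * τ e := rfl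

theorem unitsDivConj_eq_iff {τ : B ≃ₐ[A] B} {e η : Bˣ} :
    unitsDivConj τ η = e ↔ τ η * e = (η : B) := by
  rw [unitsDivConj, MonoidHom.div_apply, MonoidHom.id_apply, div_eq_iff_eq_mul', eq_comm,
    Units.ext_iff]
  rfl

namespace IsQuadraticInvolution

variable {τ : B ≃ₐ[A] B} {s : B}

theorem units_map_map (h : IsQuadraticInvolution τ s) (e : Bˣ) :
    Units.map (τ : B →* B) (Units.map (τ : B →* B) e) = e :=
  Units.ext (h.involutive e)

theorem ker_unitsDivConj [FaithfulSMul A B] (h : IsQuadraticInvolution τ s) :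
    (unitsDivConj τ).ker = (Units.map (algebraMap A B : A →* B)).range := by
  have h_inj := FaithfulSMul.algebraMap_injective A B
  ext e
  rw [MonoidHom.mem_ker, unitsDivConj_eq_iff, Units.val_one, mul_one, MonoidHom.mem_range]
  constructor
  · intro he
    have he_units : Units.map (τ : B →* B) e = e := Units.ext he
    have he_inv : τ (e⁻¹ : Bˣ) = (e⁻¹ : Bˣ) :=
      congrArg Units.val ((map_inv _ e).trans (congrArg _ he_units))
    obtain ⟨a, ha⟩ := h.mem_range_of_fixed _ he
    obtain ⟨b, hb⟩ := h.mem_range_of_fixed _ he_inv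
    have hab : a * b = 1 := h_inj (by rw [map_mul, ha, hb, map_one, Units.mul_inv])
    exact ⟨⟨a, b, hab, by rw [mul_comm, hab]⟩, Units.ext ha⟩
  · rintro ⟨u, rfl⟩
    exact τ.commutes _

theorem finrank_ker_unitsDivConj [FaithfulSMul A B] (h : IsQuadraticInvolution τ s) :
    finrank ℤ (Additive (unitsDivConj τ).ker) = finrank ℤ (Additive Aˣ) := by
  rw [h.ker_unitsDivConj]
  exact ((MonoidHom.ofInjective (Units.map_injective (FaithfulSMul.algebraMap_injective A B))
    ).toAdditive.toIntLinearEquiv.finrank_eq).symm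

theorem two_mul_relIndex_range_unitsNorm [FaithfulSMul A B] [Module.Finite ℤ (Additive Bˣ)]
    (h : IsQuadraticInvolution τ s)
    (hrank : finrank ℤ (Additive Bˣ) = 2 * finrank ℤ (Additive Aˣ) + 1) :
    2 * (unitsNorm τ).range.relIndex (unitsDivConj τ).ker
        = (unitsDivConj τ).range.relIndex (unitsNorm τ).ker
      ∧ (unitsNorm τ).range.relIndex (unitsDivConj τ).ker ≠ 0 := by
  have := pow_mul_relIndex_range_ker_units (n := 2) (f := unitsNorm τ) (g := unitsDivConj τ)
    two_ne_zero ?_ ?_ ?_ (h.finrank_ker_unitsDivConj.symm ▸ hrank)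
  · rwa [pow_one] at this
  all_goals
    intro e
    simp only [unitsNorm, unitsDivConj, MonoidHom.mul_apply, MonoidHom.div_apply,
      MonoidHom.id_apply, map_mul, map_div, h.units_map_map]
  · rw [mul_mul_div_cancel, sq]
  · rw [div_mul_div_cancel, div_self']
  · rw [mul_comm e, div_self']

theorem exists_divisor_of_mem_ker_unitsNorm [IsDedekindDomain B]
    (h : IsQuadraticInvolution τ s) {e : Bˣ} (he : e ∈ (unitsNorm τ).ker) :
    ∃ (γ : B) (D : Ideal B) (J : Ideal A), γ ≠ 0 ∧ τ γ * e = γ ∧ D ∣ Ideal.span {s} ∧ J ≠ ⊥ ∧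
      D * Ideal.span {γ} = J.map (algebraMap A B) := by
  have he' : e * τ e = 1 := by
    rw [← val_unitsNorm, he, Units.val_one]
  obtain ⟨γ, hγ₀, hγ⟩ := h.exists_apply_mul_eq_of_norm_eq (x := 1) (y := e) one_ne_zero
    (by rw [he', map_one, mul_one])
  rw [mul_one] at hγ
  obtain ⟨D, J, hD, hJ, hDJ⟩ :=
    h.exists_dvd_mul_eq_map (by simpa using hγ₀) (map_span_of_mul_unit_eq hγ)
  exact ⟨γ, D, J, hγ₀, hγ, hD, hJ, hDJ⟩

variable [IsDedekindDomain A] [IsDedekindDomain B] [Module.FaithfullyFlat A B]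

theorem exists_associated_algebraMap_mul (h : IsQuadraticInvolution τ s)
    (hodd : Odd (Nat.card (ClassGroup A))) {ε : Bˣ} {γ : B} (hγ₀ : γ ≠ 0) (hγ : τ γ * ε = γ)
    {I J : Ideal A} (hI : I ≠ ⊥)
    (hIJ : Ideal.span {γ} * I.map (algebraMap A B) = J.map (algebraMap A B)) :
    ∃ a b : A, b ≠ 0 ∧ Associated (γ * algebraMap A B a) (algebraMap A B b) := by
  obtain ⟨g, hg⟩ := h.norm_mem_range γ
  have hg₀ : g ≠ 0 := by
    rintro rfl
    rw [map_zero] at hg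
    exact mul_ne_zero hγ₀ (by simpa using hγ₀) hg.symm
  have hJ : J ≠ ⊥ := by
    rintro rfl
    rw [Ideal.map_bot] at hIJ
    exact mul_ne_zero (by simpa using hγ₀) (map_algebraMap_ne_bot hI) hIJ
  have h_sq : Ideal.span {γ} ^ 2 = (Ideal.span {g}).map (algebraMap A B) := by
    rw [Ideal.map_span, Set.image_singleton, Ideal.span_singleton_pow, hg,
      Ideal.span_singleton_eq_span_singleton]
    refine Associated.symm ⟨ε, ?_⟩
    rw [mul_assoc, hγ, sq]
  have h_ideal : Ideal.span {g} * I ^ 2 = Ideal.span {1} * J ^ 2 := by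
    apply Ideal.map_injective_of_faithfullyFlat (A := A) (B := B)
    rw [Ideal.span_singleton_one, Ideal.top_mul, Ideal.map_mul, Ideal.map_pow, Ideal.map_pow,
      ← h_sq, ← hIJ, mul_pow]
  obtain ⟨a, b, ha, -, hab⟩ :=
    exists_span_mul_eq_of_span_mul_sq_eq hodd hI hJ hg₀ one_ne_zero h_ideal
  refine ⟨b, a, ha, ?_⟩
  have h_map := congrArg (Ideal.map (algebraMap A B)) hab
  simp only [Ideal.map_mul, Ideal.map_span, Set.image_singleton, ← hIJ] at h_map
  rw [← Ideal.span_singleton_eq_span_singleton, ← Ideal.span_singleton_mul_span_singleton,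
    ← (mul_left_injective₀ (map_algebraMap_ne_bot (B := B) hI)).eq_iff, h_map]
  ring

theorem mem_range_unitsDivConj (h : IsQuadraticInvolution τ s)
    (hodd : Odd (Nat.card (ClassGroup A))) {ε : Bˣ} {γ : B} (hγ₀ : γ ≠ 0) (hγ : τ γ * ε = γ)
    {I J : Ideal A} (hI : I ≠ ⊥)
    (hIJ : Ideal.span {γ} * I.map (algebraMap A B) = J.map (algebraMap A B)) :
    ε ∈ (unitsDivConj τ).range := by
  obtain ⟨a, b, hb, η, hη⟩ := h.exists_associated_algebraMap_mul hodd hγ₀ hγ hI hIJ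
  refine ⟨η⁻¹, ?_⟩
  rw [map_inv, inv_eq_iff_eq_inv, unitsDivConj_eq_iff, Units.mul_inv_eq_iff_eq_mul]
  have h_conj := congrArg τ hη
  simp only [map_mul, AlgEquiv.commutes] at h_conj
  have hb' : algebraMap A B b ≠ 0 := by rwa [Ne, FaithfulSMul.algebraMap_eq_zero_iff]
  have h_ne : τ γ * algebraMap A B a ≠ 0 := by
    rw [← h_conj] at hb'
    exact left_ne_zero_of_mul hb'
  apply mul_left_cancel₀ h_ne
  linear_combination h_conj - hη - algebraMap A B a * η * hγ

theorem div_mem_range_unitsDivConj (h : IsQuadraticInvolution τ s)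
    (hodd : Odd (Nat.card (ClassGroup A))) {e e' : Bˣ} {γ γ' : B} (hγ₀ : γ ≠ 0) (hγ₀' : γ' ≠ 0)
    (hγ : τ γ * e = γ) (hγ' : τ γ' * e' = γ') {D : Ideal B} {J J' : Ideal A} (hJ' : J' ≠ ⊥)
    (hDJ : D * Ideal.span {γ} = J.map (algebraMap A B))
    (hDJ' : D * Ideal.span {γ'} = J'.map (algebraMap A B)) :
    e / e' ∈ (unitsDivConj τ).range := by
  obtain ⟨g, hg⟩ := h.norm_mem_range γ'
  refine h.mem_range_unitsDivConj hodd (γ := γ * τ γ') (I := J') (J := Ideal.span {g} * J)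
    (mul_ne_zero hγ₀ (by simpa using hγ₀')) ?_ hJ' ?_
  · rw [map_mul, h.involutive, div_eq_mul_inv, Units.val_mul]
    linear_combination γ' * (e'⁻¹ : Bˣ) * hγ - γ * (e'⁻¹ : Bˣ) * hγ' + γ * τ γ' * e'.mul_inv
  · rw [Ideal.map_mul, Ideal.map_span, Set.image_singleton, hg, ← hDJ, ← hDJ',
      ← Ideal.span_singleton_mul_span_singleton, ← Ideal.span_singleton_mul_span_singleton]
    ring

theorem exists_injective_divisor (h : IsQuadraticInvolution τ s)
    (hodd : Odd (Nat.card (ClassGroup A))) :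
    ∃ D : (unitsNorm τ).ker ⧸ (unitsDivConj τ).range.subgroupOf (unitsNorm τ).ker →
        {D : Ideal B // D ∣ Ideal.span {s}},
      Function.Injective D ∧ ∀ q, ∃ (γ : B) (J : Ideal A), γ ≠ 0 ∧ J ≠ ⊥ ∧
        (D q : Ideal B) * Ideal.span {γ} = J.map (algebraMap A B) := by
  choose γ D J hγ₀ hγ hD hJ hDJ using
    fun e : (unitsNorm τ).ker ↦ h.exists_divisor_of_mem_ker_unitsNorm e.2
  refine ⟨fun q ↦ ⟨D q.out, hD q.out⟩, fun q q' hqq' ↦ ?_,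
    fun q ↦ ⟨γ q.out, J q.out, hγ₀ _, hJ _, hDJ _⟩⟩
  have h_eq : D q'.out = D q.out := (congrArg Subtype.val hqq').symm
  rw [← q.out_eq', ← q'.out_eq', eq_comm, QuotientGroup.eq, Subgroup.mem_subgroupOf,
    Subgroup.coe_mul, Subgroup.coe_inv, mul_comm, ← div_eq_mul_inv]
  exact h.div_mem_range_unitsDivConj hodd (hγ₀ _) (hγ₀ _) (hγ _) (hγ _) (hJ _)
    (hDJ q.out) (h_eq ▸ hDJ q'.out)

end IsQuadraticInvolution

end UnitCohomology

section NormUnits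

open Module

variable {A B : Type*} [CommRing A] [CommRing B] [IsDomain B] [Algebra A B]

/-- The units of `A` that are norms from the fraction field of `B`, for an involution `τ` of `B`
over `A`. -/
def normUnits (τ : B ≃ₐ[A] B) : Subgroup Aˣ where
  carrier := {u | ∃ x y : B, x ≠ 0 ∧ algebraMap A B u * (x * τ x) = y * τ y}
  one_mem' := ⟨1, 1, one_ne_zero, by rw [Units.val_one, map_one, one_mul]⟩
  mul_mem' := by
    rintro u v ⟨x, y, hx, hxy⟩ ⟨x', y', hx', hxy'⟩
    refine ⟨x * x', y * y', mul_ne_zero hx hx', ?_⟩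
    simp only [Units.val_mul, map_mul]
    linear_combination algebraMap A B v * (x' * τ x') * hxy + y * τ y * hxy'
  inv_mem' := by
    rintro u ⟨x, y, hx, hxy⟩
    have h_inv : algebraMap A B (u⁻¹ : Aˣ) * algebraMap A B u = 1 := by
      rw [← map_mul, Units.inv_mul, map_one]
    refine ⟨y, x, ?_, by linear_combination x * τ x * h_inv - algebraMap A B (u⁻¹ : Aˣ) * hxy⟩
    rintro rfl
    rw [zero_mul] at hxy
    exact mul_ne_zero ((Units.map (algebraMap A B : A →* B) u).ne_zero)
      (mul_ne_zero hx (by simpa using hx)) hxy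

theorem mem_normUnits {τ : B ≃ₐ[A] B} {u : Aˣ} :
    u ∈ normUnits τ ↔ ∃ x y : B, x ≠ 0 ∧ algebraMap A B u * (x * τ x) = y * τ y := Iff.rfl

namespace IsQuadraticInvolution

variable {τ : B ≃ₐ[A] B} {s : B}

theorem range_unitsNorm_le [FaithfulSMul A B] (h : IsQuadraticInvolution τ s) :
    (unitsNorm τ).range ≤ (normUnits τ).map (Units.map (algebraMap A B : A →* B)) := by
  rintro _ ⟨e, rfl⟩
  have h_mem : unitsNorm τ e ∈ (unitsDivConj τ).ker := by
    rw [MonoidHom.mem_ker, unitsDivConj_eq_iff, Units.val_one, mul_one, val_unitsNorm, map_mul,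
      h.involutive, mul_comm]
  rw [h.ker_unitsDivConj] at h_mem
  obtain ⟨u, hu⟩ := h_mem
  refine ⟨u, ⟨1, e, one_ne_zero, ?_⟩, hu⟩
  rw [map_one, mul_one, mul_one]
  exact congrArg Units.val hu

theorem relIndex_range_unitsNorm_mul_index [FaithfulSMul A B] (h : IsQuadraticInvolution τ s) :
    (unitsNorm τ).range.relIndex ((normUnits τ).map (Units.map (algebraMap A B : A →* B)))
        * (normUnits τ).index
      = (unitsNorm τ).range.relIndex (unitsDivConj τ).ker := by
  have h_inj : Function.Injective (Units.map (algebraMap A B : A →* B)) :=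
    Units.map_injective (FaithfulSMul.algebraMap_injective A B)
  have h_le : (normUnits τ).map (Units.map (algebraMap A B : A →* B)) ≤ (unitsDivConj τ).ker :=
    h.ker_unitsDivConj ▸ Subgroup.map_le_range _ _
  rw [← Subgroup.relIndex_mul_relIndex _ _ _ h.range_unitsNorm_le h_le, h.ker_unitsDivConj,
    MonoidHom.range_eq_map (Units.map (algebraMap A B : A →* B)),
    Subgroup.relIndex_map_map_of_injective _ _ h_inj, Subgroup.relIndex_top_right]

variable [Module.Finite ℤ (Additive Bˣ)]

theorem index_normUnits_ne_zero [FaithfulSMul A B] (h : IsQuadraticInvolution τ s)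
    (hrank : finrank ℤ (Additive Bˣ) = 2 * finrank ℤ (Additive Aˣ) + 1) :
    (normUnits τ).index ≠ 0 := by
  have h_ne := (h.two_mul_relIndex_range_unitsNorm hrank).2
  rw [← h.relIndex_range_unitsNorm_mul_index] at h_ne
  exact right_ne_zero_of_mul h_ne

end IsQuadraticInvolution

end NormUnits

section OddClassNumber

open Module

variable {A B : Type*} [CommRing A] [CommRing B] [IsDedekindDomain B] [Algebra A B]
  [Module.FaithfullyFlat A B]

namespace IsQuadraticInvolution

variable {τ : B ≃ₐ[A] B} {s : B}

theorem exists_mem_normUnits_of_span_mul_map_eq (h : IsQuadraticInvolution τ s) {I : Ideal B}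
    (hI : I ≠ ⊥) {x y : B} (hx : x ≠ 0) (hxy : Ideal.span {x} * I.map τ = Ideal.span {y} * I) :
    ∃ u ∈ normUnits τ, algebraMap A B u * (x * τ x) = y * τ y := by
  have hτI : I.map τ ≠ ⊥ := by rwa [Ne, Ideal.map_eq_bot_iff_of_injective τ.injective]
  have h_conj : Ideal.span {τ x} * I = Ideal.span {τ y} * I.map τ := by
    have := congrArg (Ideal.map τ) hxy
    rwa [Ideal.map_mul, Ideal.map_mul, Ideal.map_span, Ideal.map_span, Set.image_singleton,
      Set.image_singleton, h.map_map] at this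
  have h_norm : Ideal.span {x * τ x} = Ideal.span {y * τ y} := by
    apply mul_right_cancel₀ (mul_ne_zero hI hτI)
    rw [← Ideal.span_singleton_mul_span_singleton, ← Ideal.span_singleton_mul_span_singleton]
    calc Ideal.span {x} * Ideal.span {τ x} * (I * I.map τ)
        = (Ideal.span {x} * I.map τ) * (Ideal.span {τ x} * I) := by ring
      _ = Ideal.span {y} * Ideal.span {τ y} * (I * I.map τ) := by rw [hxy, h_conj]; ring
  have : IsDomain A := (FaithfulSMul.algebraMap_injective A B).isDomain (algebraMap A B)
  obtain ⟨a, ha⟩ := h.norm_mem_range x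
  obtain ⟨b, hb⟩ := h.norm_mem_range y
  have hab : Ideal.span {a} = Ideal.span {b} := by
    apply Ideal.map_injective_of_faithfullyFlat (A := A) (B := B)
    rw [Ideal.map_span, Ideal.map_span, Set.image_singleton, Set.image_singleton, ha, hb, h_norm]
  obtain ⟨u, rfl⟩ := Ideal.span_singleton_eq_span_singleton.mp hab
  have hu : algebraMap A B u * (x * τ x) = y * τ y := by rw [← ha, ← hb, map_mul, mul_comm]
  exact ⟨u, ⟨x, y, hx, hu⟩, hu⟩

theorem exists_map_span_mul_eq_self (h : IsQuadraticInvolution τ s)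
    (h_norm : ∀ u ∈ normUnits τ, ∃ e : Bˣ, e * τ e = algebraMap A B u) {I : Ideal B}
    (hI : I ≠ ⊥) {x y : B} (hx : x ≠ 0) (hxy : Ideal.span {x} * I.map τ = Ideal.span {y} * I) :
    ∃ γ : B, γ ≠ 0 ∧ (Ideal.span {γ} * I).map τ = Ideal.span {γ} * I := by
  obtain ⟨u, hu, hux⟩ := h.exists_mem_normUnits_of_span_mul_map_eq hI hx hxy
  obtain ⟨e, he⟩ := h_norm u hu
  obtain ⟨γ, hγ₀, hγ⟩ := h.exists_apply_mul_eq_of_norm_eq (x := x * e) (y := y)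
    (mul_ne_zero hx e.ne_zero) (by rw [← hux, ← he, map_mul]; ring)
  refine ⟨γ, hγ₀, ?_⟩
  have h_span : Ideal.span {τ γ} * Ideal.span {y} = Ideal.span {γ} * Ideal.span {x} := by
    rw [Ideal.span_singleton_mul_span_singleton, hγ, ← mul_assoc,
      Ideal.span_singleton_mul_right_unit e.isUnit, Ideal.span_singleton_mul_span_singleton]
  rw [Ideal.map_mul, Ideal.map_span, Set.image_singleton]
  apply mul_left_cancel₀ (show Ideal.span {x} ≠ 0 by simpa using hx)
  calc Ideal.span {x} * (Ideal.span {τ γ} * I.map τ)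
      = Ideal.span {τ γ} * (Ideal.span {x} * I.map τ) := by ring
    _ = Ideal.span {τ γ} * Ideal.span {y} * I := by rw [hxy]; ring
    _ = Ideal.span {x} * (Ideal.span {γ} * I) := by rw [h_span]; ring

variable [IsDedekindDomain A] [Module.Finite ℤ (Additive Bˣ)]

/-- Genus theory: `2 [Aˣ : N Bˣ]` is the order of `H¹` of the units, which embeds into the divisors
of `(s)`. Few divisors force equality throughout. -/
theorem relIndex_range_unitsNorm_eq_one (h : IsQuadraticInvolution τ s)
    (hodd : Odd (Nat.card (ClassGroup A)))
    (hrank : finrank ℤ (Additive Bˣ) = 2 * finrank ℤ (Additive Aˣ) + 1)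
    (hcard : Nat.card {D : Ideal B // D ∣ Ideal.span {s}} ≤ 2 * (normUnits τ).index) :
    (unitsNorm τ).range.relIndex ((normUnits τ).map (Units.map (algebraMap A B : A →* B))) = 1 ∧
      ∀ D : Ideal B, D ∣ Ideal.span {s} → ∃ (γ : B) (J : Ideal A), γ ≠ 0 ∧ J ≠ ⊥ ∧
        D * Ideal.span {γ} = J.map (algebraMap A B) := by
  obtain ⟨h_two, h_ne⟩ := h.two_mul_relIndex_range_unitsNorm hrank
  have h_mul := h.relIndex_range_unitsNorm_mul_index
  obtain ⟨D, hD_inj, hD⟩ := h.exists_injective_divisor hodd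
  have hs : Ideal.span {s} ≠ 0 := by simpa using h.ne_zero
  have : Finite {D : Ideal B // D ∣ Ideal.span {s}} :=
    (UniqueFactorizationMonoid.fintypeSubtypeDvd _ hs).finite
  have h_le : (unitsDivConj τ).range.relIndex (unitsNorm τ).ker
      ≤ Nat.card {D : Ideal B // D ∣ Ideal.span {s}} := Nat.card_le_card_of_injective D hD_inj
  have h_index := h.index_normUnits_ne_zero hrank
  rw [← h_mul] at h_two h_ne
  have h_one : (unitsNorm τ).range.relIndex
      ((normUnits τ).map (Units.map (algebraMap A B : A →* B))) = 1 := by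
    apply le_antisymm _ (Nat.one_le_iff_ne_zero.mpr (left_ne_zero_of_mul h_ne))
    refine Nat.le_of_mul_le_mul_right ?_ (Nat.pos_of_ne_zero h_index)
    omega
  refine ⟨h_one, fun D' hD' ↦ ?_⟩
  rw [h_one, one_mul] at h_two
  have h_bij := hD_inj.bijective_of_nat_card_le (hcard.trans h_two.le)
  obtain ⟨q, hq⟩ := h_bij.surjective ⟨D', hD'⟩
  have h := hD q
  rwa [hq] at h

theorem exists_unit_norm_eq (h : IsQuadraticInvolution τ s)
    (hodd : Odd (Nat.card (ClassGroup A)))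
    (hrank : finrank ℤ (Additive Bˣ) = 2 * finrank ℤ (Additive Aˣ) + 1)
    (hcard : Nat.card {D : Ideal B // D ∣ Ideal.span {s}} ≤ 2 * (normUnits τ).index)
    {u : Aˣ} (hu : u ∈ normUnits τ) : ∃ e : Bˣ, e * τ e = algebraMap A B u := by
  have h_le := Subgroup.relIndex_eq_one.mp
    (h.relIndex_range_unitsNorm_eq_one hodd hrank hcard).1
  obtain ⟨e, he⟩ := h_le (Subgroup.mem_map_of_mem _ hu)
  exact ⟨e, congrArg Units.val he⟩

theorem isPrincipal_pow_of_map_eq (h : IsQuadraticInvolution τ s)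
    (hodd : Odd (Nat.card (ClassGroup A)))
    (hrank : finrank ℤ (Additive Bˣ) = 2 * finrank ℤ (Additive Aˣ) + 1)
    (hcard : Nat.card {D : Ideal B // D ∣ Ideal.span {s}} ≤ 2 * (normUnits τ).index)
    {I : Ideal B} (hI₀ : I ≠ ⊥) (hI : I.map τ = I) :
    (I ^ Nat.card (ClassGroup A)).IsPrincipal := by
  have h_map (J : Ideal A) :
      (J.map (algebraMap A B) ^ Nat.card (ClassGroup A)).IsPrincipal := by
    rw [← Ideal.map_pow]
    exact (isPrincipal_pow_card_classGroup J).map_ringHom _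
  obtain ⟨D, J, hD, -, hDI⟩ := h.exists_dvd_mul_eq_map hI₀ hI
  obtain ⟨γ, J', -, hJ', hDγ⟩ := (h.relIndex_range_unitsNorm_eq_one hodd hrank hcard).2 D hD
  have h_eq : J'.map (algebraMap A B) * I = J.map (algebraMap A B) * Ideal.span {γ} := by
    rw [← hDI, ← hDγ]
    ring
  refine isPrincipal_right_of_isPrincipal_mul (pow_ne_zero _ (map_algebraMap_ne_bot hJ'))
    (h_map J') ?_
  rw [← mul_pow, h_eq, mul_pow, Ideal.span_singleton_pow]
  exact (Ideal.isPrincipalSubmonoid B).mul_mem (h_map J) ⟨_, rfl⟩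

theorem odd_card_classGroup [Finite (ClassGroup B)] (h : IsQuadraticInvolution τ s)
    (hodd : Odd (Nat.card (ClassGroup A)))
    (hrank : finrank ℤ (Additive Bˣ) = 2 * finrank ℤ (Additive Aˣ) + 1)
    (hcard : Nat.card {D : Ideal B // D ∣ Ideal.span {s}} ≤ 2 * (normUnits τ).index) :
    Odd (Nat.card (ClassGroup B)) := by
  refine odd_card_classGroup_of_isPrincipal_of_sq fun I hI h_sq ↦ ?_
  have h_stable {P : Ideal B} (hP₀ : P ≠ ⊥) (hP : P.map τ = P) (hP_sq : (P ^ 2).IsPrincipal) :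
      P.IsPrincipal :=
    isPrincipal_of_sq_of_odd_pow hP₀ hodd hP_sq
      (h.isPrincipal_pow_of_map_eq hodd hrank hcard hP₀ hP)
  have hτI : I.map τ ≠ ⊥ := by rwa [Ne, Ideal.map_eq_bot_iff_of_injective τ.injective]
  have h_mul : (I * I.map τ).IsPrincipal := by
    refine h_stable (mul_ne_zero hI hτI) (by rw [Ideal.map_mul, h.map_map, mul_comm]) ?_
    rw [mul_pow, ← Ideal.map_pow]
    exact (Ideal.isPrincipalSubmonoid B).mul_mem h_sq (h_sq.map_ringHom _)
  have ⟨x, hx⟩ := h_sq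
  obtain ⟨t, ht⟩ := h_mul
  rw [Ideal.submodule_span_eq] at hx ht
  have hx₀ : x ≠ 0 := by
    rintro rfl
    exact pow_ne_zero 2 hI (hx.trans (by simp))
  obtain ⟨γ, hγ₀, hγ⟩ := h.exists_map_span_mul_eq_self
    (fun u hu ↦ h.exists_unit_norm_eq hodd hrank hcard hu) hI (x := x) (y := t) hx₀
    (by rw [← hx, ← ht]; ring)
  have hγ₀' : Ideal.span {γ} ≠ ⊥ := by simpa using hγ₀
  refine isPrincipal_right_of_isPrincipal_mul hγ₀' ⟨γ, rfl⟩
    (h_stable (mul_ne_zero hγ₀' hI) hγ ?_)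
  rw [mul_pow, Ideal.span_singleton_pow]
  exact (Ideal.isPrincipalSubmonoid B).mul_mem ⟨_, rfl⟩ h_sq

end IsQuadraticInvolution

end OddClassNumber

section QuadraticExtension

open Module Polynomial

variable {K L : Type*} [Field K] [Field L] [Algebra K L]

theorem minpoly_eq_X_sq_sub_C {a : K} {x : L} (ha : ¬IsSquare a) (hx : x ^ 2 = algebraMap K L a) :
    minpoly K x = X ^ 2 - C a := by
  have h_irr : Irreducible (X ^ 2 - C a) :=
    X_pow_sub_C_irreducible_of_prime Nat.prime_two fun b hb ↦ ha ⟨b, by rw [← hb, sq]⟩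
  refine (minpoly.eq_of_irreducible_of_monic h_irr ?_ (monic_X_pow_sub_C a two_ne_zero)).symm
  rw [map_sub, map_pow, aeval_X, aeval_C, hx, sub_self]

theorem isQuadraticExtension_of_adjoin_eq_top {a : K} {x : L} (ha : ¬IsSquare a)
    (hx : x ^ 2 = algebraMap K L a) (h_top : IntermediateField.adjoin K {x} = ⊤) :
    Algebra.IsQuadraticExtension K L := by
  have h_int : IsIntegral K x := .of_pow two_pos (hx ▸ isIntegral_algebraMap)
  refine ⟨?_⟩
  rw [← IntermediateField.finrank_top', ← h_top, IntermediateField.adjoin.finrank h_int,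
    minpoly_eq_X_sq_sub_C ha hx, natDegree_X_pow_sub_C]

theorem exists_algEquiv_apply_eq_neg [Normal K L] {a : K} {x : L} (ha : ¬IsSquare a)
    (hx : x ^ 2 = algebraMap K L a) : ∃ σ : L ≃ₐ[K] L, σ x = -x := by
  apply isConjRoot_iff_exists_algEquiv.mp
  rw [IsConjRoot, minpoly_eq_X_sq_sub_C ha hx, minpoly_eq_X_sq_sub_C ha (by rw [neg_sq, hx])]

variable [Algebra.IsQuadraticExtension K L] [IsGalois K L] {σ : L ≃ₐ[K] L}

theorem card_aut_eq_two (K L : Type*) [Field K] [Field L] [Algebra K L]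
    [Algebra.IsQuadraticExtension K L] [IsGalois K L] : Nat.card (L ≃ₐ[K] L) = 2 := by
  rw [IsGalois.card_aut_eq_finrank, Algebra.IsQuadraticExtension.finrank_eq_two]

theorem involutive_of_isQuadraticExtension (σ : L ≃ₐ[K] L) : Function.Involutive σ := by
  intro x
  have h_sq : σ ^ 2 = 1 := card_aut_eq_two K L ▸ pow_card_eq_one'
  rw [sq] at h_sq
  exact DFunLike.congr_fun h_sq x

theorem mem_range_algebraMap_of_apply_eq (hσ : σ ≠ 1) {x : L} (hx : σ x = x) :
    x ∈ Set.range (algebraMap K L) := by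
  have : x ∈ (⊥ : IntermediateField K L) := by
    rw [IsGalois.mem_bot_iff_fixed]
    intro ρ
    obtain ⟨n, rfl⟩ := mem_powers_of_prime_card (g' := ρ) (card_aut_eq_two K L) hσ
    induction n with
    | zero => rfl
    | succ n ih => exact (congrArg (σ ^ n) hx).trans ih
  exact IntermediateField.mem_bot.mp this

end QuadraticExtension

theorem two_dvd_add_of_four_dvd_sq_sub_sq {R : Type*} [CommRing R] [IsDomain R]
    [IsIntegrallyClosed R] [NeZero (2 : R)] {x y : R} (h : 4 ∣ x ^ 2 - y ^ 2) : 2 ∣ x + y := by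
  obtain ⟨k, hk⟩ := h
  let f := algebraMap R (FractionRing R)
  have h_two : (2 : FractionRing R) ≠ 0 := by
    rw [← map_ofNat f, Ne, FaithfulSMul.algebraMap_eq_zero_iff]
    exact NeZero.ne 2
  have h_root : (f (x + y) / 2) ^ 2 - (f y * (f (x + y) / 2) + f k) = 0 := by
    have hk' := congrArg f hk
    simp only [map_mul, map_sub, map_pow, map_ofNat] at hk'
    rw [map_add]
    field_simp
    linear_combination hk'
  obtain ⟨w, hw⟩ := IsIntegrallyClosed.isIntegral_iff.mp (show IsIntegral R (f (x + y) / 2) from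
    ⟨.X ^ 2 - (.C y * .X + .C k), Polynomial.monic_X_pow_sub
      (Polynomial.degree_linear_le.trans_lt (by norm_num)), by simpa using h_root⟩)
  refine ⟨w, IsFractionRing.injective R (FractionRing R) ?_⟩
  rw [map_mul, hw, map_ofNat, mul_div_cancel₀ _ h_two]

theorem isSquare_of_isSquare_algebraMap {R K : Type*} [CommRing R] [IsIntegrallyClosed R]
    [CommRing K] [Algebra R K] [IsFractionRing R K] {d : R} (h : IsSquare (algebraMap R K d)) :
    IsSquare d := by
  obtain ⟨b, hb⟩ := h
  obtain ⟨c, rfl⟩ := IsIntegrallyClosed.exists_algebraMap_eq_of_isIntegral_pow (R := R) (x := b)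
    two_pos (by rw [sq, ← hb]; exact isIntegral_algebraMap)
  exact ⟨c, IsFractionRing.injective R K (by rw [hb, map_mul])⟩

section DivisorCount

open Module UniqueFactorizationMonoid

theorem natCard_dvd_le_two_pow {R : Type*} [CommRing R] [IsDedekindDomain R] {I : Ideal R}
    (hI : I ≠ 0) : Nat.card {D : Ideal R // D ∣ I} ≤ 2 ^ (normalizedFactors I).card := by
  classical
  rw [← Multiset.card_powerset]
  refine le_trans ?_ (Multiset.toFinset_card_le _)
  rw [← Nat.card_eq_finsetCard]
  have h_ne (D : {D : Ideal R // D ∣ I}) : D.1 ≠ 0 := ne_zero_of_dvd_ne_zero hI D.2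
  refine Nat.card_le_card_of_injective (fun D ↦ ⟨normalizedFactors D.1, ?_⟩) fun D D' hDD' ↦ ?_
  · rw [Multiset.mem_toFinset, Multiset.mem_powerset,
      ← dvd_iff_normalizedFactors_le_normalizedFactors (h_ne D) hI]
    exact D.2
  · rw [Subtype.ext_iff, ← associated_iff_eq,
      associated_iff_normalizedFactors_eq_normalizedFactors (h_ne D) (h_ne D')]
    exact congrArg Subtype.val hDD'

variable {R S : Type*} [CommRing R] [IsDedekindDomain R] [CommRing S] [IsDedekindDomain S]
  [Algebra R S] [Module.Finite R S] [Module.IsTorsionFree R S]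

variable (R) in
theorem card_normalizedFactors_le_relNorm (I : Ideal S) :
    (normalizedFactors I).card ≤ (normalizedFactors (Ideal.relNorm R I)).card := by
  induction I using induction_on_prime with
  | h₁ => rw [normalizedFactors_zero]; exact Nat.zero_le _
  | h₂ I hI => rw [normalizedFactors_of_isUnit hI]; exact Nat.zero_le _
  | h₃ I P hI hP ih =>
    have h_ne (J : Ideal S) (hJ : J ≠ 0) : Ideal.relNorm R J ≠ 0 := by
      exact fun h ↦ hJ (Ideal.relNorm_eq_bot_iff.mp h)
    have h_pos : normalizedFactors (Ideal.relNorm R P) ≠ 0 := by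
      rw [Ne, normalizedFactors_eq_zero_iff (h_ne P hP.ne_zero)]
      intro h_unit
      have h_le := Ideal.relNorm_le_comap R P
      rw [Ideal.isUnit_iff.mp h_unit, top_le_iff, Ideal.comap_eq_top_iff] at h_le
      exact hP.not_isUnit (Ideal.isUnit_iff.mpr h_le)
    rw [map_mul, normalizedFactors_mul hP.ne_zero hI,
      normalizedFactors_mul (h_ne P hP.ne_zero) (h_ne I hI),
      normalizedFactors_irreducible hP.irreducible, Multiset.card_add, Multiset.card_add,
      Multiset.card_singleton]
    exact add_le_add (Multiset.card_pos.mpr h_pos) ih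

theorem natCard_dvd_span_le_two_pow (hrank : finrank R S = 2) {d : R} {s : S} (hs₀ : s ≠ 0)
    (hs : s ^ 2 = algebraMap R S d) :
    Nat.card {D : Ideal S // D ∣ Ideal.span {s}} ≤
      2 ^ (normalizedFactors (Ideal.span {d})).card := by
  have h_norm : Ideal.relNorm R (Ideal.span {s}) = Ideal.span {d} := by
    apply pow_left_injective two_ne_zero
    beta_reduce
    rw [← map_pow, Ideal.span_singleton_pow, hs, ← hrank, ← Ideal.relNorm_algebraMap S,
      Ideal.map_span, Set.image_singleton]
  rw [← h_norm]
  exact (natCard_dvd_le_two_pow (by simpa using hs₀)).trans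
    (Nat.pow_le_pow_right two_pos (card_normalizedFactors_le_relNorm R _))

theorem card_normalizedFactors_span_of_prime {p : R} (hp : Prime p) :
    (normalizedFactors (Ideal.span {p})).card = 1 := by
  have h_prime : Prime (Ideal.span {p}) := Ideal.prime_of_isPrime (by simpa using hp.ne_zero)
    ((Ideal.span_singleton_prime hp.ne_zero).mpr hp)
  rw [normalizedFactors_irreducible h_prime.irreducible, Multiset.card_singleton]

theorem card_normalizedFactors_span_mul_of_prime {p q : R} (hp : Prime p) (hq : Prime q) :
    (normalizedFactors (Ideal.span {p * q})).card = 2 := by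
  rw [← Ideal.span_singleton_mul_span_singleton,
    normalizedFactors_mul (by simpa using hp.ne_zero) (by simpa using hq.ne_zero),
    Multiset.card_add, card_normalizedFactors_span_of_prime hp,
    card_normalizedFactors_span_of_prime hq]

end DivisorCount

section QuadraticNumberField

open Module UniqueFactorizationMonoid

variable {K L : Type*} [Field K] [Field L]

theorem mem_range_algebraMap_ringOfIntegers [Algebra K L] {x : 𝓞 L}
    (hx : (x : L) ∈ Set.range (algebraMap K L)) : x ∈ Set.range (algebraMap (𝓞 K) (𝓞 L)) := by
  obtain ⟨a, ha⟩ := hx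
  have ha_int : IsIntegral ℤ a :=
    (isIntegral_algebraMap_iff (algebraMap K L).injective).mp (ha ▸ x.isIntegral_coe)
  exact ⟨⟨a, ha_int⟩, RingOfIntegers.ext ha⟩

theorem finrank_ringOfIntegers_of_isQuadraticExtension (K L : Type*) [Field K] [Field L]
    [NumberField K] [NumberField L] [Algebra K L] [Algebra.IsQuadraticExtension K L] :
    finrank (𝓞 K) (𝓞 L) = 2 := by
  rw [← IsFractionRing.finrank_eq (𝓞 K) K (𝓞 L) L, Algebra.IsQuadraticExtension.finrank_eq_two]

variable [NumberField K] [NumberField L]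

theorem finrank_units_of_card_infinitePlace
    (h : Fintype.card (InfinitePlace L) = 2 * Fintype.card (InfinitePlace K)) :
    finrank ℤ (Additive (𝓞 L)ˣ) = 2 * finrank ℤ (Additive (𝓞 K)ˣ) + 1 := by
  rw [Units.finrank_eq, Units.finrank_eq, Units.rank, Units.rank]
  have : 0 < Fintype.card (InfinitePlace K) := Fintype.card_pos
  omega

variable [Algebra K L] [Algebra.IsQuadraticExtension K L] {σ : L ≃ₐ[K] L} {d Y : 𝓞 K} {s : 𝓞 L}

theorem isQuadraticInvolution_mapAlgEquiv (hs₀ : s ≠ 0) (hs : s ^ 2 = algebraMap (𝓞 K) (𝓞 L) d)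
    (hσ : σ s = -(s : L)) (hY : 4 ∣ d - Y ^ 2) :
    IsQuadraticInvolution (RingOfIntegers.mapAlgEquiv σ) s where
  involutive b := RingOfIntegers.ext (involutive_of_isQuadraticExtension σ b)
  mem_range_of_fixed b hb := by
    refine mem_range_algebraMap_ringOfIntegers (K := K)
      (mem_range_algebraMap_of_apply_eq (σ := σ) ?_ (congrArg (algebraMap (𝓞 L) L) hb))
    rintro rfl
    exact hs₀ (RingOfIntegers.ext (self_eq_neg.mp hσ))
  ne_zero := hs₀
  exists_sub_eq := by
    have h_four : 4 ∣ s ^ 2 - algebraMap (𝓞 K) (𝓞 L) Y ^ 2 := by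
      rw [hs, ← map_pow, ← map_sub]
      simpa only [map_ofNat] using map_dvd (algebraMap (𝓞 K) (𝓞 L)) hY
    obtain ⟨w, hw⟩ := two_dvd_add_of_four_dvd_sq_sub_sq h_four
    have hσ' : RingOfIntegers.mapAlgEquiv σ s = -s := RingOfIntegers.ext hσ
    have hσw := congrArg (RingOfIntegers.mapAlgEquiv σ) hw
    rw [map_add, hσ', AlgEquiv.commutes, map_mul, map_ofNat] at hσw
    exact ⟨w, mul_left_cancel₀ two_ne_zero (by linear_combination hσw - hw)⟩

theorem odd_classNumber_of_card_normalizedFactors_le (hs₀ : s ≠ 0)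
    (hs : s ^ 2 = algebraMap (𝓞 K) (𝓞 L) d) (hσ : σ s = -(s : L)) (hY : 4 ∣ d - Y ^ 2)
    (hplaces : Fintype.card (InfinitePlace L) = 2 * Fintype.card (InfinitePlace K))
    (hodd : Odd (classNumber K))
    (hd : 2 ^ (normalizedFactors (Ideal.span {d})).card
      ≤ 2 * (normUnits (RingOfIntegers.mapAlgEquiv σ : 𝓞 L ≃ₐ[𝓞 K] 𝓞 L)).index) :
    Odd (classNumber L) := by
  rw [classNumber, ← Nat.card_eq_fintype_card] at hodd ⊢
  exact (isQuadraticInvolution_mapAlgEquiv hs₀ hs hσ hY).odd_card_classGroup hodd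
    (finrank_units_of_card_infinitePlace hplaces)
    ((natCard_dvd_span_le_two_pow (finrank_ringOfIntegers_of_isQuadraticExtension K L) hs₀ hs).trans
      hd)

theorem odd_classNumber_of_prime (hs₀ : s ≠ 0)
    (hs : s ^ 2 = algebraMap (𝓞 K) (𝓞 L) d) (hσ : σ s = -(s : L)) (hY : 4 ∣ d - Y ^ 2)
    (hplaces : Fintype.card (InfinitePlace L) = 2 * Fintype.card (InfinitePlace K))
    (hodd : Odd (classNumber K)) (hd : Prime d) : Odd (classNumber L) := by
  apply odd_classNumber_of_card_normalizedFactors_le hs₀ hs hσ hY hplaces hodd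
  have h_index := (isQuadraticInvolution_mapAlgEquiv hs₀ hs hσ hY).index_normUnits_ne_zero
    (finrank_units_of_card_infinitePlace hplaces)
  rw [card_normalizedFactors_span_of_prime hd]
  omega

theorem odd_classNumber_of_mul_prime {p q : 𝓞 K} (hs₀ : s ≠ 0)
    (hs : s ^ 2 = algebraMap (𝓞 K) (𝓞 L) (p * q)) (hσ : σ s = -(s : L)) (hY : 4 ∣ p * q - Y ^ 2)
    (hplaces : Fintype.card (InfinitePlace L) = 2 * Fintype.card (InfinitePlace K))
    (hodd : Odd (classNumber K)) (hp : Prime p) (hq : Prime q) {u : (𝓞 K)ˣ}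
    (hu : u ∉ normUnits (RingOfIntegers.mapAlgEquiv σ : 𝓞 L ≃ₐ[𝓞 K] 𝓞 L)) :
    Odd (classNumber L) := by
  apply odd_classNumber_of_card_normalizedFactors_le hs₀ hs hσ hY hplaces hodd
  have h_index := (isQuadraticInvolution_mapAlgEquiv hs₀ hs hσ hY).index_normUnits_ne_zero
    (finrank_units_of_card_infinitePlace hplaces)
  have h_index' : (normUnits (RingOfIntegers.mapAlgEquiv σ : 𝓞 L ≃ₐ[𝓞 K] 𝓞 L)).index ≠ 1 := by
    rw [Ne, Subgroup.index_eq_one]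
    rintro h_top
    exact hu (h_top ▸ Subgroup.mem_top u)
  rw [card_normalizedFactors_span_mul_of_prime hp hq]
  omega

end QuadraticNumberField

section PrimeDiscriminant

open Module

theorem dvd_of_algebraMap_dvd_algebraMap {A B : Type*} [CommRing A] [CommRing B] [Algebra A B]
    [Module.FaithfullyFlat A B] {a b : A} (h : algebraMap A B a ∣ algebraMap A B b) : a ∣ b := by
  rw [← Ideal.mem_span_singleton,
    ← Ideal.comap_map_eq_self_of_faithfullyFlat (B := B) (Ideal.span {a}), Ideal.mem_comap,
    Ideal.map_span, Set.image_singleton, Ideal.mem_span_singleton]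
  exact h

theorem sq_mul_ne_sq_of_prime {M : Type*} [CommMonoidWithZero M] [UniqueFactorizationMonoid M]
    {p x y : M} (hp : Prime p) (hx : x ≠ 0) : x ^ 2 * p ≠ y ^ 2 := by
  intro h
  have hy : y ≠ 0 := by
    rintro rfl
    rw [zero_pow two_ne_zero] at h
    exact mul_ne_zero (pow_ne_zero 2 hx) hp.ne_zero h
  have h_mult := congrArg (emultiplicity p) h
  rw [emultiplicity_mul hp, emultiplicity_pow hp, emultiplicity_pow hp,
    (FiniteMultiplicity.of_prime_left hp hx).emultiplicity_eq_multiplicity,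
    (FiniteMultiplicity.of_prime_left hp hy).emultiplicity_eq_multiplicity,
    (FiniteMultiplicity.of_prime_left hp hp.ne_zero).emultiplicity_eq_multiplicity,
    multiplicity_self] at h_mult
  norm_cast at h_mult
  omega

theorem exists_dvd_sub_sq_of_dvd_mul_sq_sub_sq {A : Type*} [CommRing A]
    {π u a t : A} (hπ : (Ideal.span {π}).IsMaximal) (ha : ¬π ∣ a) (h : π ∣ t ^ 2 - u * a ^ 2) :
    ∃ x, π ∣ u - x ^ 2 := by
  obtain ⟨c, i, hi, hci⟩ := hπ.exists_inv (show a ∉ Ideal.span {π} by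
    rwa [Ideal.mem_span_singleton])
  obtain ⟨j, rfl⟩ := Ideal.mem_span_singleton.mp hi
  obtain ⟨e, he⟩ := h
  exact ⟨t * c, u * j * (1 + a * c) - e * c ^ 2,
    by linear_combination -c ^ 2 * he - u * (1 + a * c) * hci⟩

theorem exists_dvd_sub_sq_of_mul_sq_sub_sq_eq {A : Type*} [CommRing A] [IsDomain A]
    {π l u a t b : A} (hπ : Prime π) (hπ_max : (Ideal.span {π}).IsMaximal) (hl : ¬π ∣ l)
    (ha : ¬π ∣ a) {n : ℕ} (h : l * (t ^ 2 - u * (π ^ n * a) ^ 2) = π * b ^ 2) :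
    ∃ x, π ∣ u - x ^ 2 := by
  induction n generalizing t b with
  | zero =>
    rw [pow_zero, one_mul] at h
    exact exists_dvd_sub_sq_of_dvd_mul_sq_sub_sq hπ_max ha
      ((hπ.dvd_or_dvd ⟨b ^ 2, h⟩).resolve_left hl)
  | succ n ih =>
    have ht : π ∣ l * t ^ 2 :=
      ⟨b ^ 2 + l * u * π ^ (2 * n + 1) * a ^ 2, by linear_combination h⟩
    obtain ⟨t, rfl⟩ := hπ.dvd_of_dvd_pow ((hπ.dvd_or_dvd ht).resolve_left hl)
    have hb : π ∣ b ^ 2 := by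
      refine ⟨l * (t ^ 2 - u * (π ^ n * a) ^ 2), mul_left_cancel₀ hπ.ne_zero ?_⟩
      linear_combination -h
    obtain ⟨b, rfl⟩ := hπ.dvd_of_dvd_pow hb
    refine ih (t := t) (b := b) (mul_left_cancel₀ (pow_ne_zero 2 hπ.ne_zero) ?_)
    linear_combination h

namespace IsQuadraticInvolution

variable {A B : Type*} [CommRing A] [CommRing B] [Algebra A B]
  {τ : B ≃ₐ[A] B} {s : B}

theorem exists_trace_sq_sub_four_mul_norm_eq [IsDomain B] [FaithfulSMul A B]
    (h : IsQuadraticInvolution τ s)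
    {l π N : A} (hπ : Prime π) (hs : s ^ 2 = algebraMap A B (l * π)) {w : B}
    (hN : algebraMap A B N = w * τ w) : ∃ t b : A, l * (t ^ 2 - 4 * N) = π * b ^ 2 := by
  have h_inj := FaithfulSMul.algebraMap_injective A B
  have := h_inj.isDomain (algebraMap A B)
  obtain ⟨t, ht⟩ := h.mem_range_of_fixed (w + τ w) (by rw [map_add, h.involutive, add_comm])
  obtain ⟨b, hb⟩ := h.mem_range_of_fixed ((w - τ w) * s) (by
    rw [map_mul, h.apply_self, map_sub, h.involutive]; ring)
  have hb_sq : b ^ 2 = l * π * (t ^ 2 - 4 * N) := by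
    apply h_inj
    rw [map_pow, map_mul, ← hs, map_sub, map_mul, map_pow, hb, ht, hN, map_ofNat]
    ring
  obtain ⟨b, rfl⟩ : π ∣ b :=
    hπ.dvd_of_dvd_pow (n := 2) ⟨l * (t ^ 2 - 4 * N), by rw [hb_sq]; ring⟩
  exact ⟨t, b, mul_left_cancel₀ hπ.ne_zero (by linear_combination -hb_sq)⟩

theorem exists_dvd_sub_sq_of_mem_normUnits [IsDomain B] [FaithfulSMul A B]
    [IsDedekindDomain A] [NeZero (2 : A)] (h : IsQuadraticInvolution τ s) {l π : A}
    (hπ : Prime π) (hl : ¬π ∣ l) (hs : s ^ 2 = algebraMap A B (l * π)) {u : Aˣ}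
    (hu : u ∈ normUnits τ) :
    ∃ x : A, π ∣ u - x ^ 2 := by
  obtain ⟨x, y, hx, hxy⟩ := mem_normUnits.mp hu
  obtain ⟨N, hN⟩ := h.norm_mem_range x
  -- `y * τ x` has norm `u * N ^ 2`, so a single square is compared with `u`.
  obtain ⟨t, b, htb⟩ := h.exists_trace_sq_sub_four_mul_norm_eq hπ hs (N := u * N ^ 2)
    (w := y * τ x) (by
      rw [map_mul, map_pow, map_mul, h.involutive x, hN]; linear_combination (x * τ x) * hxy)
  have hN₀ : N ≠ 0 := by
    rintro rfl
    rw [map_zero, eq_comm, mul_eq_zero, map_eq_zero_iff τ τ.injective, or_self] at hN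
    exact hx hN
  obtain ⟨a, h_two_mul, ha⟩ := (FiniteMultiplicity.of_prime_left hπ
    (mul_ne_zero two_ne_zero hN₀)).exists_eq_pow_mul_and_not_dvd
  have hπ_max : (Ideal.span {π}).IsMaximal :=
    ((Ideal.span_singleton_prime hπ.ne_zero).mpr hπ).isMaximal (by simpa using hπ.ne_zero)
  refine exists_dvd_sub_sq_of_mul_sq_sub_sq_eq (t := t) (b := b)
    (n := multiplicity π (2 * N)) hπ hπ_max hl ha ?_
  rw [← h_two_mul]
  linear_combination htb

theorem isPrincipal_of_map_eq_span [IsDedekindDomain A] [Module.FaithfullyFlat A B]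
    (h : IsQuadraticInvolution τ s) {π : A} (hπ : Prime π) (hs : s ^ 2 = algebraMap A B π)
    {I : Ideal A} {β : B} (hβ : τ β = β ∨ τ β = -β)
    (hI : I.map (algebraMap A B) = Ideal.span {β}) : I.IsPrincipal := by
  have h_inj := Ideal.map_injective_of_faithfullyFlat (A := A) (B := B)
  rcases eq_or_ne I ⊥ with rfl | hI₀
  · exact bot_isPrincipal
  rcases hβ with hβ | hβ
  · obtain ⟨a, rfl⟩ := h.mem_range_of_fixed β hβ
    refine ⟨a, h_inj ?_⟩
    rw [hI, Ideal.submodule_span_eq, Ideal.map_span, Set.image_singleton]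
  · obtain ⟨b, hb⟩ := h.mem_range_of_fixed (β * s) (by rw [map_mul, hβ, h.apply_self, neg_mul_neg])
    have hπ' : Prime (Ideal.span {π}) := by
      rwa [Ideal.prime_span_singleton_iff]
    refine absurd (h_inj ?_) (sq_mul_ne_sq_of_prime (x := I) (y := Ideal.span {b}) hπ' hI₀)
    rw [Ideal.map_mul, Ideal.map_pow, hI, Ideal.map_span, Set.image_singleton, ← hs, Ideal.map_pow,
      Ideal.map_span, Set.image_singleton, hb, Ideal.span_singleton_pow, Ideal.span_singleton_pow,
      Ideal.span_singleton_mul_span_singleton, mul_pow]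

end IsQuadraticInvolution

end PrimeDiscriminant

section Generators

theorem subfield_eq_top_of_adjoin_eq_top {K : Type*} [Field K] [CharZero K] {x : K}
    (h : IntermediateField.adjoin ℚ {x} = ⊤) {S : Subfield K} (hx : x ∈ S) : S = ⊤ := by
  have h_le : IntermediateField.adjoin ℚ {x} ≤ S.toIntermediateField fun q ↦ by
      rw [eq_ratCast]; exact SubfieldClass.ratCast_mem S q := by
    rwa [IntermediateField.adjoin_simple_le_iff]
  rw [h] at h_le
  exact top_le_iff.mp fun y _ ↦ h_le (IntermediateField.mem_top (x := y))

theorem adjoin_eq_top_of_mem_adjoin (K : Type*) {L : Type*} [Field K] [Field L] [CharZero L]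
    [Algebra K L] {x y : L} (h : IntermediateField.adjoin ℚ {x} = ⊤)
    (hx : x ∈ IntermediateField.adjoin K {y}) : IntermediateField.adjoin K {y} = ⊤ :=
  IntermediateField.toSubfield_injective (subfield_eq_top_of_adjoin_eq_top h hx)

theorem ringHom_ext_of_adjoin_eq_top {K L : Type*} [Field K] [CharZero K] [Field L] {x : K}
    (h : IntermediateField.adjoin ℚ {x} = ⊤) {f g : K →+* L} (hfg : f x = g x) : f = g := by
  ext y
  have h_top : f.eqLocusField g = ⊤ := subfield_eq_top_of_adjoin_eq_top h hfg
  exact h_top.ge (Subfield.mem_top y)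

theorem isTotallyReal_of_adjoin_eq_top {K : Type*} [Field K] [NumberField K] {x : K}
    (h : IntermediateField.adjoin ℚ {x} = ⊤) (hx : ∀ φ : K →+* ℂ, star (φ x) = φ x) :
    IsTotallyReal K :=
  maximalRealSubfield_eq_top_iff_isTotallyReal.mp
    (subfield_eq_top_of_adjoin_eq_top h ((mem_maximalRealSubfield_iff x).mpr hx))

theorem adjoin_eq_top_of_fieldRange_eq {K L : Type*} [Field K] [CharZero K] [Field L] [CharZero L]
    [Algebra K L] {x : K} (h : (algebraMap K L).fieldRange =
      (IntermediateField.adjoin ℚ {algebraMap K L x}).toSubfield) :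
    IntermediateField.adjoin ℚ {x} = ⊤ := by
  apply IntermediateField.map_injective (IsScalarTower.toAlgHom ℚ K L)
  apply IntermediateField.toSubfield_injective
  rw [IntermediateField.adjoin_map, Set.image_singleton, IsScalarTower.coe_toAlgHom',
    ← AlgHom.fieldRange_eq_map, AlgHom.fieldRange_toSubfield]
  exact h.symm

theorem exists_comp_algebraMap_eq {K L M : Type*} [Field K] [CharZero K] [Field L] [Field M]
    [Algebra K M] [Algebra L M] {x : K} (h : IntermediateField.adjoin ℚ {x} = ⊤)
    (hx : algebraMap K M x ∈ (algebraMap L M).fieldRange) :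
    ∃ f : K →+* L, (algebraMap L M).comp f = algebraMap K M := by
  have h_range (y : K) : algebraMap K M y ∈ (algebraMap L M).fieldRange := by
    have h_top := subfield_eq_top_of_adjoin_eq_top h
      (S := (algebraMap L M).fieldRange.comap (algebraMap K M)) hx
    exact h_top.ge (Subfield.mem_top y)
  let e := RingEquiv.ofBijective _ (algebraMap L M).rangeRestrictField_bijective
  refine ⟨e.symm.toRingHom.comp ((algebraMap K M).codRestrict _ h_range), RingHom.ext fun y ↦ ?_⟩
  exact congrArg Subtype.val (e.apply_symm_apply ⟨algebraMap K M y, h_range y⟩)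

theorem not_dvd_absNorm_span_of_isCoprime {K : Type*} [Field K] [NumberField K] {p : ℕ}
    (hp : p.Prime) {a : 𝓞 K} (h : IsCoprime a (p : 𝓞 K)) :
    ¬p ∣ Ideal.absNorm (Ideal.span {a}) := by
  intro hdvd
  obtain ⟨P, hP, h_under, hPa⟩ := Ideal.exists_isMaximal_dvd_of_dvd_absNorm' hp _ hdvd
  have ha_mem : a ∈ P := Ideal.le_of_dvd hPa (Ideal.mem_span_singleton_self a)
  have hp_mem : (p : 𝓞 K) ∈ P := by
    have : (p : ℤ) ∈ P.under ℤ := h_under ▸ Ideal.mem_span_singleton_self _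
    simpa [Ideal.under_def] using this
  obtain ⟨b, c, hbc⟩ := h
  exact hP.ne_top ((Ideal.eq_top_iff_one P).mpr
    (hbc ▸ add_mem (P.mul_mem_left b ha_mem) (P.mul_mem_left c hp_mem)))

theorem adjoin_eq_top_of_dvd_absNorm {K : Type*} [Field K] [NumberField K] {p : ℕ} (hp : p.Prime)
    {d : 𝓞 K} (h_dvd : p ∣ Ideal.absNorm (Ideal.span {d}))
    (h_sq : ¬p ^ 2 ∣ Ideal.absNorm (Ideal.span {d})) :
    IntermediateField.adjoin ℚ {(d : K)} = ⊤ := by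
  rw [← IntermediateField.finrank_eq_one_iff_eq_top]
  set k := Module.finrank (IntermediateField.adjoin ℚ {(d : K)}) K
  have hk : 0 < k := Module.finrank_pos
  obtain ⟨q, hq⟩ : ∃ q : ℚ, algebraMap ℤ ℚ (Algebra.norm ℤ d) = q ^ k :=
    ⟨_, (Algebra.coe_norm_int d).trans (Algebra.norm_eq_norm_adjoin ℚ (d : K))⟩
  obtain ⟨n, rfl⟩ := IsIntegrallyClosed.exists_algebraMap_eq_of_isIntegral_pow (R := ℤ) hk
    (hq ▸ isIntegral_algebraMap)
  have h_norm : Algebra.norm ℤ d = n ^ k := by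
    apply IsFractionRing.injective ℤ ℚ
    rw [hq, map_pow]
  rw [Ideal.absNorm_span_singleton, h_norm, Int.natAbs_pow] at h_dvd h_sq
  by_contra hk_ne
  have hk_two : 2 ≤ k := by omega
  exact h_sq ((pow_dvd_pow_of_dvd (hp.dvd_of_dvd_pow h_dvd) 2).trans (pow_dvd_pow _ hk_two))

end Generators

section QuadraticClassNumber

variable {K L : Type*} [Field K] [Field L] [Algebra K L]

theorem exists_ringOfIntegers_sq_eq {d : 𝓞 K} {x : L} (hx : x ^ 2 = algebraMap K L d) :
    ∃ s : 𝓞 L, (s : L) = x ∧ s ^ 2 = algebraMap (𝓞 K) (𝓞 L) d := by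
  have hx_int : IsIntegral ℤ x := .of_pow two_pos (hx ▸ d.isIntegral_coe.algebraMap)
  exact ⟨⟨x, hx_int⟩, rfl, RingOfIntegers.ext hx⟩

theorem star_eq_self_of_sq_eq_ofReal {c : ℂ} {t : ℝ} (ht : 0 ≤ t) (hc : c ^ 2 = t) :
    star c = c := by
  rw [← Real.sq_sqrt ht, Complex.ofReal_pow, sq_eq_sq_iff_eq_or_eq_neg] at hc
  rcases hc with rfl | rfl
  · exact Complex.conj_ofReal _
  · rw [star_neg]
    exact congrArg _ (Complex.conj_ofReal _)

theorem isTotallyReal_of_sq_eq_algebraMap [NumberField L] [IsTotallyReal K] {d : K}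
    (hd : ∀ r : K →+* ℝ, 0 ≤ r d) {x : L} (hx : x ^ 2 = algebraMap K L d)
    (h_top : IntermediateField.adjoin ℚ {x} = ⊤) : IsTotallyReal L := by
  refine isTotallyReal_of_adjoin_eq_top h_top fun φ ↦ ?_
  have h_real := IsTotallyReal.complexEmbedding_isReal (φ.comp (algebraMap K L))
  refine star_eq_self_of_sq_eq_ofReal (hd h_real.embedding) ?_
  rw [ComplexEmbedding.IsReal.coe_embedding_apply, ← map_pow, hx]
  rfl

theorem exists_algebra_sq_eq_of_fieldRange_eq {K L M : Type*} [Field K] [CharZero K] [Field L]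
    [CharZero L] [Field M] [CharZero M] [Algebra K M] [Algebra L M] {d : 𝓞 K} {x : M}
    (hd : IntermediateField.adjoin ℚ {(d : K)} = ⊤) (hx : x ^ 2 = algebraMap K M d)
    (hL : (algebraMap L M).fieldRange = (IntermediateField.adjoin ℚ {x}).toSubfield) :
    ∃ (_ : Algebra K L) (s : 𝓞 L), s ^ 2 = algebraMap (𝓞 K) (𝓞 L) d ∧
      IntermediateField.adjoin ℚ {(s : L)} = ⊤ := by
  obtain ⟨y, rfl⟩ : x ∈ (algebraMap L M).fieldRange :=
    hL.ge (IntermediateField.mem_adjoin_simple_self ℚ x)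
  obtain ⟨f, hf⟩ := exists_comp_algebraMap_eq (L := L) (M := M) hd ⟨y ^ 2, (map_pow _ _ _).trans hx⟩
  let := f.toAlgebra
  have hy : y ^ 2 = algebraMap K L d := by
    apply (algebraMap L M).injective
    rw [map_pow, hx, ← hf]
    rfl
  obtain ⟨s, rfl, hs⟩ := exists_ringOfIntegers_sq_eq hy
  exact ⟨_, s, hs, adjoin_eq_top_of_fieldRange_eq hL⟩

variable [NumberField K] [NumberField L]

variable (K L) in
theorem card_infinitePlace_of_isTotallyReal [IsTotallyReal K] [IsTotallyReal L]
    [Algebra.IsQuadraticExtension K L] :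
    Fintype.card (InfinitePlace L) = 2 * Fintype.card (InfinitePlace K) := by
  rw [InfinitePlace.card_eq_nrRealPlaces_add_nrComplexPlaces,
    InfinitePlace.card_eq_nrRealPlaces_add_nrComplexPlaces,
    IsTotallyReal.nrComplexPlaces_eq_zero, IsTotallyReal.nrComplexPlaces_eq_zero,
    add_zero, add_zero, ← IsTotallyReal.finrank, ← IsTotallyReal.finrank,
    ← Module.finrank_mul_finrank ℚ K L, Algebra.IsQuadraticExtension.finrank_eq_two K L, mul_comm]

variable (K L) in
theorem card_infinitePlace_of_isTotallyComplex [IsTotallyComplex K] [IsTotallyComplex L]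
    [Algebra.IsQuadraticExtension K L] :
    Fintype.card (InfinitePlace L) = 2 * Fintype.card (InfinitePlace K) := by
  have h_finrank := Module.finrank_mul_finrank ℚ K L
  rw [Algebra.IsQuadraticExtension.finrank_eq_two K L, IsTotallyComplex.finrank,
    IsTotallyComplex.finrank] at h_finrank
  rw [InfinitePlace.card_eq_nrRealPlaces_add_nrComplexPlaces,
    InfinitePlace.card_eq_nrRealPlaces_add_nrComplexPlaces,
    IsTotallyComplex.nrRealPlaces_eq_zero, IsTotallyComplex.nrRealPlaces_eq_zero]
  omega

theorem odd_classNumber_of_isTotallyComplex_of_prime [IsTotallyComplex K] {d Y : 𝓞 K} {s : 𝓞 L}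
    (hs : s ^ 2 = algebraMap (𝓞 K) (𝓞 L) d) (h_top : IntermediateField.adjoin K {(s : L)} = ⊤)
    (hY : 4 ∣ d - Y ^ 2) (hodd : Odd (classNumber K)) (hd : Prime d) : Odd (classNumber L) := by
  have h_not_sq : ¬IsSquare (d : K) := fun h ↦
    hd.irreducible.not_isSquare (isSquare_of_isSquare_algebraMap h)
  have hs_coe : (s : L) ^ 2 = algebraMap K L d := congrArg (algebraMap (𝓞 L) L) hs
  have := isQuadraticExtension_of_adjoin_eq_top h_not_sq hs_coe h_top
  have := isTotallyComplex_of_algebra K L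
  obtain ⟨σ, hσ⟩ := exists_algEquiv_apply_eq_neg h_not_sq hs_coe
  have hs₀ : s ≠ 0 := ne_zero_pow two_ne_zero (hs ▸ (map_ne_zero_iff _
    (FaithfulSMul.algebraMap_injective _ _)).mpr hd.ne_zero)
  exact odd_classNumber_of_prime hs₀ hs hσ hY (card_infinitePlace_of_isTotallyComplex K L) hodd hd

theorem odd_classNumber_of_isTotallyReal_of_mul_prime [IsTotallyReal K] [IsTotallyReal L]
    {p q Y : 𝓞 K} {s : 𝓞 L} (hs : s ^ 2 = algebraMap (𝓞 K) (𝓞 L) (p * q))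
    (h_top : IntermediateField.adjoin K {(s : L)} = ⊤) (hY : 4 ∣ p * q - Y ^ 2)
    (hodd : Odd (classNumber K)) (hp : Prime p) (hq : Prime q) (hqp : ¬q ∣ p) {u : (𝓞 K)ˣ}
    (hu : ∀ x : 𝓞 K, ¬q ∣ u - x ^ 2) : Odd (classNumber L) := by
  have h_not_sq : ¬IsSquare ((p * q : 𝓞 K) : K) := by
    intro h
    obtain ⟨y, hy⟩ := isSquare_of_isSquare_algebraMap h
    obtain ⟨w, rfl⟩ : q ∣ y := (hq.dvd_or_dvd (Dvd.intro_left p hy)).elim id id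
    exact hqp ⟨w * w, mul_right_cancel₀ hq.ne_zero (by linear_combination hy)⟩
  have hs_coe : (s : L) ^ 2 = algebraMap K L (p * q : 𝓞 K) := congrArg (algebraMap (𝓞 L) L) hs
  have := isQuadraticExtension_of_adjoin_eq_top h_not_sq hs_coe h_top
  obtain ⟨σ, hσ⟩ := exists_algEquiv_apply_eq_neg h_not_sq hs_coe
  have hs₀ : s ≠ 0 := ne_zero_pow two_ne_zero (hs ▸ (map_ne_zero_iff _
    (FaithfulSMul.algebraMap_injective _ _)).mpr (mul_ne_zero hp.ne_zero hq.ne_zero))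
  refine odd_classNumber_of_mul_prime hs₀ hs hσ hY (card_infinitePlace_of_isTotallyReal K L) hodd
    hp hq (u := u) fun h_mem ↦ ?_
  obtain ⟨x, hx⟩ := (isQuadraticInvolution_mapAlgEquiv hs₀ hs hσ hY
    ).exists_dvd_sub_sq_of_mem_normUnits hq hqp hs h_mem
  exact hu x hx

end QuadraticClassNumber

theorem sub_inv_dvd_sub_natCast {A : Type*} [CommRing A] [IsDomain A] {z : Aˣ}
    (hz : (z : A) - ↑z⁻¹ ≠ 0) {n : ℕ} (hn : Odd n) {e : A}
    (he : ((z : A) - ↑z⁻¹) * e = (z : A) ^ n - (↑z⁻¹ : A) ^ n) : (z : A) - ↑z⁻¹ ∣ e - n := by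
  have he_sum : e = ∑ i ∈ Finset.range n, (z : A) ^ i * (↑z⁻¹ : A) ^ (n - 1 - i) := by
    apply mul_left_cancel₀ hz
    rw [he, mul_comm, geom_sum₂_mul]
  obtain ⟨b, rfl⟩ := hn
  rw [← Ideal.mem_span_singleton, ← Ideal.Quotient.mk_eq_mk_iff_sub_mem]
  set q := Ideal.Quotient.mk (Ideal.span {(z : A) - ↑z⁻¹})
  have hq : q (↑z⁻¹ : A) = q z :=
    ((Ideal.Quotient.mk_eq_mk_iff_sub_mem _ _).mpr (Ideal.mem_span_singleton_self _)).symm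
  have hq_sq : q z ^ 2 = 1 := by
    rw [sq]
    nth_rw 2 [← hq]
    rw [← map_mul, z.mul_inv, map_one]
  rw [he_sum, RingHom.map_geom_sum₂, hq, geom_sum₂_self, Nat.add_sub_cancel, pow_mul, hq_sq,
    one_pow, mul_one, map_natCast]

theorem exists_odd_natCast_not_dvd_sub_sq {K : Type*} [Field K] [NumberField K] {p : ℕ}
    [Fact p.Prime] (hp : p ≠ 2) {π : 𝓞 K} (hπ : Ideal.absNorm (Ideal.span {π}) = p) :
    ∃ n : ℕ, Odd n ∧ n.Coprime p ∧ ∀ x : 𝓞 K, ¬π ∣ n - x ^ 2 := by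
  obtain ⟨a, ha⟩ := FiniteField.exists_nonsquare (F := ZMod p) (by rwa [ZMod.ringChar_zmod_n])
  obtain ⟨n, hn, rfl⟩ : ∃ n : ℕ, Odd n ∧ (n : ZMod p) = a := by
    obtain h | h := Nat.even_or_odd a.val
    · refine ⟨a.val + p, h.add_odd ((Fact.out : p.Prime).odd_of_ne_two hp), ?_⟩
      rw [Nat.cast_add, ZMod.natCast_self, add_zero, ZMod.natCast_zmod_val]
    · exact ⟨a.val, h, ZMod.natCast_zmod_val a⟩
  refine ⟨n, hn, ?_, fun x hx ↦ ha ?_⟩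
  · rw [← ZMod.isUnit_iff_coprime, isUnit_iff_ne_zero]
    exact fun h_zero ↦ ha (h_zero ▸ IsSquare.zero)
  have h_card : Nat.card (𝓞 K ⧸ Ideal.span {π}) = p := by
    rw [← hπ, Ideal.absNorm_apply, Submodule.cardQuot_apply]
  have : Finite (𝓞 K ⧸ Ideal.span {π}) :=
    Nat.finite_of_card_ne_zero (h_card ▸ (Fact.out : p.Prime).ne_zero)
  have := Fintype.ofFinite (𝓞 K ⧸ Ideal.span {π})
  let f := ZMod.ringEquivOfPrime (𝓞 K ⧸ Ideal.span {π}) Fact.out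
    (Nat.card_eq_fintype_card.symm.trans h_card)
  have h_mk : Ideal.Quotient.mk (Ideal.span {π}) (n : 𝓞 K) = Ideal.Quotient.mk _ x ^ 2 := by
    rwa [← map_pow, Ideal.Quotient.mk_eq_mk_iff_sub_mem, Ideal.mem_span_singleton]
  have h_sq := congrArg f.symm h_mk
  rw [map_natCast, map_natCast, map_pow, sq] at h_sq
  exact ⟨_, h_sq⟩

theorem two_lt_prime_pow_succ {p : ℕ} (hp : p.Prime) (hp_ne : p ≠ 2) (k : ℕ) : 2 < p ^ (k + 1) :=
  (hp.two_le.lt_of_ne hp_ne.symm).trans_le (Nat.le_self_pow k.succ_ne_zero p)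

section RealCyclotomic

variable {F₀ F : Type*} [Field F₀] [NumberField F₀] [Field F] [NumberField F] [Algebra F₀ F]

/-- `F = ℚ(z)` for a primitive `m`-th root of unity `z`, and `F₀ = ℚ(θ)` with `θ = z + z⁻¹`: the
`m`-th cyclotomic field over its maximal real subfield, with the generators recorded as integers. -/
structure IsRealCyclotomicPair (m : ℕ) (z : (𝓞 F)ˣ) (θ : 𝓞 F₀) : Prop where
  isPrimitiveRoot : IsPrimitiveRoot (z : 𝓞 F) m
  adjoin_eq_top : IntermediateField.adjoin ℚ {((z : 𝓞 F) : F)} = ⊤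
  adjoin_trace_eq_top : IntermediateField.adjoin ℚ {(θ : F₀)} = ⊤
  algebraMap_trace : algebraMap (𝓞 F₀) (𝓞 F) θ = z + ↑z⁻¹

theorem exists_isRealCyclotomicPair {m : ℕ} [NeZero m] {ζ : F} (hζ : IsPrimitiveRoot ζ m)
    (hF : IntermediateField.adjoin ℚ {ζ} = ⊤)
    (hF₀ : (algebraMap F₀ F).fieldRange =
      (IntermediateField.adjoin ℚ {ζ + ζ⁻¹}).toSubfield) :
    ∃ (z : (𝓞 F)ˣ) (θ : 𝓞 F₀), ((z : 𝓞 F) : F) = ζ ∧ IsRealCyclotomicPair m z θ := by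
  obtain ⟨z, rfl⟩ : ∃ z : (𝓞 F)ˣ, ((z : 𝓞 F) : F) = ζ :=
    ⟨(hζ.toInteger_isPrimitiveRoot.isUnit (NeZero.ne m)).unit, rfl⟩
  rw [← map_units_inv (algebraMap (𝓞 F) F)] at hF₀
  obtain ⟨t, ht⟩ : ((z : 𝓞 F) : F) + ((↑z⁻¹ : 𝓞 F) : F) ∈ (algebraMap F₀ F).fieldRange :=
    hF₀.ge (IntermediateField.mem_adjoin_simple_self ℚ _)
  have ht_int : IsIntegral ℤ t := by
    rw [← isIntegral_algebraMap_iff (FaithfulSMul.algebraMap_injective F₀ F), ht, ← map_add]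
    exact RingOfIntegers.isIntegral_coe _
  rw [← ht] at hF₀
  exact ⟨z, ⟨t, ht_int⟩, rfl, hζ.of_map_of_injective RingOfIntegers.coe_injective, hF,
    adjoin_eq_top_of_fieldRange_eq hF₀, RingOfIntegers.ext ht⟩

namespace IsRealCyclotomicPair

variable {m : ℕ} {z : (𝓞 F)ˣ} {θ : 𝓞 F₀}

theorem isPrimitiveRoot_coe (h : IsRealCyclotomicPair m z θ) :
    IsPrimitiveRoot ((z : 𝓞 F) : F) m :=
  h.isPrimitiveRoot.map_of_injective RingOfIntegers.coe_injective

theorem isCyclotomicExtension [NeZero m] (h : IsRealCyclotomicPair m z θ) :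
    IsCyclotomicExtension {m} ℚ F := by
  have := h.isPrimitiveRoot_coe.intermediateField_adjoin_isCyclotomicExtension ℚ
  exact IsCyclotomicExtension.equiv {m} ℚ _
    ((IntermediateField.equivOfEq h.adjoin_eq_top).trans IntermediateField.topEquiv)

theorem star_apply [NeZero m] (h : IsRealCyclotomicPair m z θ) (φ : F →+* ℂ) :
    star (φ (z : 𝓞 F)) = φ (↑z⁻¹ : 𝓞 F) := by
  have h_norm := (h.isPrimitiveRoot_coe.map_of_injective φ.injective).norm'_eq_one (NeZero.ne m)
  have h_mul : φ (z : 𝓞 F) * φ (↑z⁻¹ : 𝓞 F) = 1 := by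
    rw [← map_mul, ← map_mul, z.mul_inv, map_one, map_one]
  rw [eq_inv_of_mul_eq_one_right h_mul, Complex.inv_eq_conj h_norm]
  rfl

theorem isTotallyReal [NeZero m] (h : IsRealCyclotomicPair m z θ) : IsTotallyReal F₀ := by
  refine isTotallyReal_of_adjoin_eq_top h.adjoin_trace_eq_top fun φ ↦ ?_
  rw [← ComplexEmbedding.lift_algebraMap_apply F φ]
  have h_trace : algebraMap F₀ F θ = (z : 𝓞 F) + (↑z⁻¹ : 𝓞 F) :=
    congrArg (algebraMap (𝓞 F) F) h.algebraMap_trace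
  rw [h_trace, map_add, star_add, ← h.star_apply, star_star, add_comm]

theorem sub_inv_sq (h : IsRealCyclotomicPair m z θ) :
    ((z : 𝓞 F) - ↑z⁻¹) ^ 2 = algebraMap (𝓞 F₀) (𝓞 F) (θ ^ 2 - 4) := by
  rw [map_sub, map_pow, h.algebraMap_trace, map_ofNat]
  linear_combination -4 * z.mul_inv

theorem sub_inv_ne_zero (h : IsRealCyclotomicPair m z θ) (hm : 2 < m) :
    (z : 𝓞 F) - ↑z⁻¹ ≠ 0 := by
  intro h_zero
  refine h.isPrimitiveRoot.pow_ne_one_of_pos_of_lt two_ne_zero hm ?_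
  linear_combination (z : 𝓞 F) * h_zero + z.mul_inv

theorem apply_lt_zero (h : IsRealCyclotomicPair m z θ) (hm : 2 < m) (r : F₀ →+* ℝ) :
    r (θ ^ 2 - 4 : 𝓞 F₀) < 0 := by
  have : NeZero m := ⟨by omega⟩
  let φ := ComplexEmbedding.lift F (Complex.ofRealHom.comp r)
  set c := φ (algebraMap (𝓞 F) F (z - ↑z⁻¹)) with hc
  have h_sq : c ^ 2 = r (θ ^ 2 - 4 : 𝓞 F₀) := by
    rw [← map_pow, ← map_pow, h.sub_inv_sq]
    exact ComplexEmbedding.lift_algebraMap_apply F _ _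
  have h_star : star c = -c := by
    rw [hc, map_sub, map_sub, star_sub, ← h.star_apply, star_star, neg_sub]
  have hc₀ : c ≠ 0 := by
    rw [hc, map_ne_zero, RingOfIntegers.coe_ne_zero_iff]
    exact h.sub_inv_ne_zero hm
  have h_normSq : ((-Complex.normSq c : ℝ) : ℂ) = r (θ ^ 2 - 4 : 𝓞 F₀) := by
    rw [← h_sq, Complex.ofReal_neg, Complex.normSq_eq_conj_mul_self, starRingEnd_apply, h_star]
    ring
  rw [← Complex.ofReal_injective h_normSq, neg_lt_zero]
  exact Complex.normSq_pos.mpr hc₀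

theorem not_isSquare (h : IsRealCyclotomicPair m z θ) (hm : 2 < m) :
    ¬IsSquare ((θ ^ 2 - 4 : 𝓞 F₀) : F₀) := by
  have : NeZero m := ⟨by omega⟩
  have := h.isTotallyReal
  obtain ⟨φ⟩ : Nonempty (F₀ →+* ℂ) := inferInstance
  let r := (IsTotallyReal.complexEmbedding_isReal φ).embedding
  rintro ⟨b, hb⟩
  have h_neg := h.apply_lt_zero hm r
  rw [hb, map_mul] at h_neg
  exact h_neg.not_ge (mul_self_nonneg _)

theorem isQuadraticExtension (h : IsRealCyclotomicPair m z θ) (hm : 2 < m) :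
    Algebra.IsQuadraticExtension F₀ F := by
  set s : F := algebraMap (𝓞 F) F (z - ↑z⁻¹) with hs
  refine isQuadraticExtension_of_adjoin_eq_top (x := s) (h.not_isSquare hm)
    (congrArg (algebraMap (𝓞 F) F) h.sub_inv_sq)
    (adjoin_eq_top_of_mem_adjoin F₀ h.adjoin_eq_top ?_)
  have h_trace : algebraMap F₀ F θ = (z : 𝓞 F) + (↑z⁻¹ : 𝓞 F) :=
    congrArg (algebraMap (𝓞 F) F) h.algebraMap_trace
  have hz : ((z : 𝓞 F) : F) = (algebraMap F₀ F θ + s) / 2 := by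
    rw [h_trace, hs, map_sub]
    ring
  rw [hz]
  exact div_mem (add_mem (IntermediateField.algebraMap_mem _ _)
    (IntermediateField.mem_adjoin_simple_self F₀ s)) (ofNat_mem _ 2)

theorem exists_isQuadraticInvolution (h : IsRealCyclotomicPair m z θ) (hm : 2 < m) :
    ∃ σ : F ≃ₐ[F₀] F, IsQuadraticInvolution
      (RingOfIntegers.mapAlgEquiv σ : 𝓞 F ≃ₐ[𝓞 F₀] 𝓞 F) ((z : 𝓞 F) - ↑z⁻¹) := by
  have := h.isQuadraticExtension hm
  obtain ⟨σ, hσ⟩ := exists_algEquiv_apply_eq_neg (h.not_isSquare hm)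
    (congrArg (algebraMap (𝓞 F) F) h.sub_inv_sq)
  exact ⟨σ, isQuadraticInvolution_mapAlgEquiv (h.sub_inv_ne_zero hm) h.sub_inv_sq hσ
    (Y := θ) ⟨-1, by ring⟩⟩

theorem apply_eq_inv (h : IsRealCyclotomicPair m z θ) {τ : 𝓞 F ≃ₐ[𝓞 F₀] 𝓞 F}
    (hτ : IsQuadraticInvolution τ ((z : 𝓞 F) - ↑z⁻¹)) : τ z = ↑z⁻¹ := by
  have h_sub := hτ.apply_self
  have h_add := τ.commutes θ
  rw [h.algebraMap_trace, map_add] at h_add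
  rw [map_sub] at h_sub
  exact mul_left_cancel₀ two_ne_zero (by linear_combination h_sub + h_add)

theorem embedding_comp_eq_star [NeZero m] (h : IsRealCyclotomicPair m z θ) {σ : F ≃ₐ[F₀] F}
    (hσ : RingOfIntegers.mapAlgEquiv σ (z : 𝓞 F) = ↑z⁻¹) (φ : F →+* ℂ) (x : F) :
    φ (σ x) = star (φ x) := by
  have h_eq : φ.comp (σ : F →+* F) = (starRingEnd ℂ).comp φ := by
    refine ringHom_ext_of_adjoin_eq_top h.adjoin_eq_top ?_
    exact (congrArg (fun y : 𝓞 F ↦ φ y) hσ).trans (h.star_apply φ).symm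
  exact DFunLike.congr_fun h_eq x

theorem exists_eq_sq_or_eq_neg_sq (h : IsRealCyclotomicPair m z θ) (hm : Odd m) {e : (𝓞 F)ˣ}
    (he : ∀ φ : F →+* ℂ, ‖φ (e : 𝓞 F)‖ = 1) : ∃ j : ℕ, e = (z ^ j) ^ 2 ∨ e = -(z ^ j) ^ 2 := by
  have : NeZero m := ⟨hm.pos.ne'⟩
  have := h.isCyclotomicExtension
  obtain ⟨n, hn, he_pow⟩ :=
    Embeddings.pow_eq_one_of_norm_eq_one F ℂ (e : 𝓞 F).isIntegral_coe he
  obtain ⟨k, -, hk⟩ := h.isPrimitiveRoot_coe.exists_pow_or_neg_mul_pow_of_isOfFinOrder hm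
    (isOfFinOrder_iff_pow_eq_one.mpr ⟨n, hn, he_pow⟩)
  obtain ⟨t, rfl⟩ := hm
  have h_pow : (z ^ (k * (t + 1))) ^ 2 = z ^ k := by
    have hz : z ^ (2 * t + 1) = 1 := Units.ext (by simpa using h.isPrimitiveRoot.pow_eq_one)
    calc
      (z ^ (k * (t + 1))) ^ 2 = z ^ k * (z ^ (2 * t + 1)) ^ k := by
        rw [← pow_mul, ← pow_mul, ← pow_add]
        congr 1
        ring
      _ = z ^ k := by rw [hz, one_pow, mul_one]
  exact ⟨k * (t + 1), h_pow ▸ hk.imp (fun hk ↦ Units.ext (RingOfIntegers.ext (by simpa using hk)))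
    fun hk ↦ Units.ext (RingOfIntegers.ext (by simpa using hk))⟩

theorem exists_associated_apply_eq (h : IsRealCyclotomicPair m z θ) (hm : Odd m)
    {σ : F ≃ₐ[F₀] F} (hσ : RingOfIntegers.mapAlgEquiv σ (z : 𝓞 F) = ↑z⁻¹) {α : 𝓞 F}
    (h_assoc : Associated (RingOfIntegers.mapAlgEquiv σ α) α) :
    ∃ β, Associated β α ∧
      (RingOfIntegers.mapAlgEquiv σ β = β ∨ RingOfIntegers.mapAlgEquiv σ β = -β) := by
  have : NeZero m := ⟨hm.pos.ne'⟩
  obtain rfl | hα := eq_or_ne α 0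
  · exact ⟨0, Associated.refl 0, .inl (map_zero _)⟩
  obtain ⟨e, he⟩ := h_assoc
  have he_norm (φ : F →+* ℂ) : ‖φ (e : 𝓞 F)‖ = 1 := by
    have h_norm : ‖φ (σ α)‖ * ‖φ (e : 𝓞 F)‖ = ‖φ α‖ := by
      rw [← norm_mul, ← map_mul]
      exact congrArg (fun y : 𝓞 F ↦ ‖φ y‖) he
    rw [h.embedding_comp_eq_star hσ, norm_star] at h_norm
    exact mul_left_cancel₀ (by simpa using hα) (h_norm.trans (mul_one _).symm)
  obtain ⟨j, hj⟩ := h.exists_eq_sq_or_eq_neg_sq hm he_norm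
  have h_inv : (z : 𝓞 F) ^ j * (↑z⁻¹ : 𝓞 F) ^ j = 1 := by
    rw [← mul_pow, z.mul_inv, one_pow]
  have h_apply_inv : RingOfIntegers.mapAlgEquiv σ (↑z⁻¹ : 𝓞 F) = z := by
    have hz : Units.map (RingOfIntegers.mapAlgEquiv σ : 𝓞 F →* 𝓞 F) z = z⁻¹ := Units.ext hσ
    have hz_inv := congrArg Inv.inv hz
    rw [← map_inv, inv_inv] at hz_inv
    exact congrArg Units.val hz_inv
  refine ⟨α * (↑z⁻¹) ^ j, associated_mul_unit_left _ _ (z⁻¹.isUnit.pow j), ?_⟩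
  rw [map_mul, map_pow, h_apply_inv]
  refine hj.imp ?_ ?_ <;> rintro rfl
  · push_cast at he
    linear_combination (↑z⁻¹ : 𝓞 F) ^ j * he -
      RingOfIntegers.mapAlgEquiv σ α * (z : 𝓞 F) ^ j * h_inv
  · push_cast at he
    linear_combination -(↑z⁻¹ : 𝓞 F) ^ j * he -
      RingOfIntegers.mapAlgEquiv σ α * (z : 𝓞 F) ^ j * h_inv

theorem associated_sub_inv_pow_sub_pow (h : IsRealCyclotomicPair m z θ) (hm : Odd m) {n : ℕ}
    (hn : n.Coprime m) :
    Associated ((z : 𝓞 F) - ↑z⁻¹) ((z : 𝓞 F) ^ n - (↑z⁻¹ : 𝓞 F) ^ n) := by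
  have h_mul (j : ℕ) : ((z : 𝓞 F) ^ j - (↑z⁻¹ : 𝓞 F) ^ j) * (z : 𝓞 F) ^ j =
      ((z : 𝓞 F) ^ 2) ^ j - 1 := by
    have h_inv : (↑z⁻¹ : 𝓞 F) ^ j * (z : 𝓞 F) ^ j = 1 := by
      rw [← mul_pow, z.inv_mul, one_pow]
    rw [sub_mul, h_inv]
    ring
  have h_assoc (j : ℕ) :
      Associated ((z : 𝓞 F) ^ j - (↑z⁻¹ : 𝓞 F) ^ j) (((z : 𝓞 F) ^ 2) ^ j - 1) :=
    h_mul j ▸ associated_mul_unit_right _ _ (z.isUnit.pow j)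
  have h_one := h_assoc 1
  rw [pow_one, pow_one, pow_one] at h_one
  exact h_one.trans (((h.isPrimitiveRoot.pow_of_coprime 2
    hm.coprime_two_left).associated_sub_one_pow_sub_one_of_coprime hn).trans (h_assoc n).symm)

theorem mem_range_of_sub_inv_mul_eq (h : IsRealCyclotomicPair m z θ) {τ : 𝓞 F ≃ₐ[𝓞 F₀] 𝓞 F}
    (hτ : IsQuadraticInvolution τ ((z : 𝓞 F) - ↑z⁻¹)) {η : (𝓞 F)ˣ} {n : ℕ}
    (hη : ((z : 𝓞 F) - ↑z⁻¹) * η = (z : 𝓞 F) ^ n - (↑z⁻¹ : 𝓞 F) ^ n) :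
    η ∈ (Units.map (algebraMap (𝓞 F₀) (𝓞 F) : 𝓞 F₀ →* 𝓞 F)).range := by
  rw [← hτ.ker_unitsDivConj, MonoidHom.mem_ker, unitsDivConj_eq_iff, Units.val_one, mul_one]
  have h_inv : τ (↑z⁻¹ : 𝓞 F) = z := by rw [← h.apply_eq_inv hτ, hτ.involutive]
  have h_apply := congrArg τ hη
  rw [map_mul, map_sub, map_sub, map_pow, map_pow, h_inv, h.apply_eq_inv hτ] at h_apply
  exact mul_left_cancel₀ hτ.ne_zero (by linear_combination -h_apply - hη)

theorem sub_inv_mul_sq {M : Type*} [Field M] [Algebra F₀ M] [Algebra F M]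
    [IsScalarTower F₀ F M] (h : IsRealCyclotomicPair m z θ) {lam : 𝓞 F₀} {x : M}
    (hx : x ^ 2 = algebraMap F₀ M lam) :
    ((algebraMap F M (z : 𝓞 F) - algebraMap F M (z : 𝓞 F)⁻¹) * x) ^ 2 =
      algebraMap F₀ M (lam * (θ ^ 2 - 4) : 𝓞 F₀) := by
  have h_sq : (((z : 𝓞 F) : F) - ((z : 𝓞 F) : F)⁻¹) ^ 2 = algebraMap F₀ F (θ ^ 2 - 4 : 𝓞 F₀) := by
    rw [← map_units_inv (algebraMap (𝓞 F) F)]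
    exact congrArg (algebraMap (𝓞 F) F) h.sub_inv_sq
  calc ((algebraMap F M (z : 𝓞 F) - algebraMap F M (z : 𝓞 F)⁻¹) * x) ^ 2
      = algebraMap F₀ M lam * algebraMap F₀ M (θ ^ 2 - 4 : 𝓞 F₀) := by
        rw [mul_pow, ← map_sub, ← map_pow, h_sq, hx, ← IsScalarTower.algebraMap_apply, mul_comm]
    _ = algebraMap F₀ M (lam * (θ ^ 2 - 4) : 𝓞 F₀) :=
        (map_mul ((algebraMap F₀ M).comp (algebraMap (𝓞 F₀) F₀)) _ _).symm

theorem odd_classNumber_of_sq_eq {M : Type*} [Field M] [NumberField M] [Algebra F M]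
    (h : IsRealCyclotomicPair m z θ) (hm : 2 < m) (hodd : Odd (classNumber F))
    {lam : 𝓞 F₀} (hinert : Prime (algebraMap (𝓞 F₀) (𝓞 F) lam)) {X : 𝓞 F₀} (hX : 4 ∣ lam - X ^ 2)
    {x : M} (hx : x ^ 2 = algebraMap F M (algebraMap F₀ F lam))
    (h_top : IntermediateField.adjoin F {x} = ⊤) : Odd (classNumber M) := by
  have : NeZero m := ⟨by omega⟩
  have := h.isCyclotomicExtension
  have := IsCyclotomicExtension.Rat.isTotallyComplex F hm
  obtain ⟨s, rfl, hs⟩ :=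
    exists_ringOfIntegers_sq_eq (d := algebraMap (𝓞 F₀) (𝓞 F) lam) hx
  have h_square : 4 ∣ algebraMap (𝓞 F₀) (𝓞 F) lam - algebraMap (𝓞 F₀) (𝓞 F) X ^ 2 := by
    simpa only [map_sub, map_pow, map_ofNat] using map_dvd (algebraMap (𝓞 F₀) (𝓞 F)) hX
  exact odd_classNumber_of_isTotallyComplex_of_prime hs h_top h_square hodd hinert

section PrimePower

variable {p k : ℕ} [Fact p.Prime]

theorem absNorm_span_eq (h : IsRealCyclotomicPair (p ^ (k + 1)) z θ)
    (hp : p ≠ 2) : Ideal.absNorm (Ideal.span {θ ^ 2 - 4}) = p := by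
  have := h.isCyclotomicExtension
  have := h.isQuadraticExtension (two_lt_prime_pow_succ Fact.out hp k)
  have h_coprime : Nat.Coprime 2 (p ^ (k + 1)) :=
    ((Nat.coprime_primes Nat.prime_two Fact.out).mpr hp.symm).pow_right _
  have h_norm : Ideal.absNorm (Ideal.span {(z : 𝓞 F) - ↑z⁻¹}) = p := by
    have hz_sq := h.isPrimitiveRoot_coe.pow_of_coprime 2 h_coprime
    have h_assoc : Associated ((z : 𝓞 F) - ↑z⁻¹) (hz_sq.toInteger - 1) := by
      refine ⟨z, ?_⟩
      have : hz_sq.toInteger = (z : 𝓞 F) ^ 2 := RingOfIntegers.ext rfl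
      rw [this]
      linear_combination -z.mul_inv
    rw [Ideal.span_singleton_eq_span_singleton.mpr h_assoc, Ideal.absNorm_span_singleton,
      hz_sq.norm_toInteger_sub_one_of_prime_ne_two hp, Int.natAbs_natCast]
  apply Nat.pow_left_injective two_ne_zero
  calc Ideal.absNorm (Ideal.span {θ ^ 2 - 4}) ^ 2
      = Ideal.absNorm ((Ideal.span {θ ^ 2 - 4}).map (algebraMap (𝓞 F₀) (𝓞 F))) := by
        rw [Ideal.absNorm_algebraMap, finrank_ringOfIntegers_of_isQuadraticExtension]
    _ = p ^ 2 := by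
        rw [Ideal.map_span, Set.image_singleton, ← h.sub_inv_sq, ← Ideal.span_singleton_pow,
          map_pow, h_norm]

theorem prime_trace_sq_sub_four (h : IsRealCyclotomicPair (p ^ (k + 1)) z θ) (hp : p ≠ 2) :
    Prime (θ ^ 2 - 4) := by
  have h_norm := h.absNorm_span_eq hp
  have h_ne : θ ^ 2 - 4 ≠ 0 := by
    intro h_zero
    rw [h_zero, Ideal.span_singleton_zero, Ideal.absNorm_bot] at h_norm
    exact (Fact.out : p.Prime).ne_zero h_norm.symm
  rw [← Ideal.span_singleton_prime h_ne]
  exact Ideal.isPrime_of_irreducible_absNorm (h_norm ▸ (Fact.out : p.Prime))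

theorem isPrincipal_of_isPrincipal_map (h : IsRealCyclotomicPair (p ^ (k + 1)) z θ) (hp : p ≠ 2)
    {I : Ideal (𝓞 F₀)} (hI : (I.map (algebraMap (𝓞 F₀) (𝓞 F))).IsPrincipal) : I.IsPrincipal := by
  obtain ⟨σ, hσ⟩ := h.exists_isQuadraticInvolution (two_lt_prime_pow_succ Fact.out hp k)
  obtain ⟨α, hα⟩ := hI
  rw [Ideal.submodule_span_eq] at hα
  have h_assoc : Associated (RingOfIntegers.mapAlgEquiv σ α) α := by
    rw [← Ideal.span_singleton_eq_span_singleton, ← hα, ← Set.image_singleton, ← Ideal.map_span,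
      ← hα, map_map_algebraMap]
  obtain ⟨β, hβ, h_eigen⟩ := h.exists_associated_apply_eq
    ((Fact.out : p.Prime).odd_of_ne_two hp).pow (h.apply_eq_inv hσ) h_assoc
  refine hσ.isPrincipal_of_map_eq_span (h.prime_trace_sq_sub_four hp) h.sub_inv_sq h_eigen ?_
  rw [hα, Ideal.span_singleton_eq_span_singleton.mpr hβ]

theorem odd_classNumber (h : IsRealCyclotomicPair (p ^ (k + 1)) z θ) (hp : p ≠ 2)
    (hodd : Odd (classNumber F)) : Odd (classNumber F₀) := by
  rw [classNumber, ← Nat.card_eq_fintype_card] at hodd ⊢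
  refine odd_card_classGroup_of_isPrincipal_of_sq fun I hI h_sq ↦
    h.isPrincipal_of_isPrincipal_map hp (isPrincipal_of_sq hodd (map_algebraMap_ne_bot hI) ?_)
  rw [← Ideal.map_pow]
  exact h_sq.map_ringHom _

theorem exists_unit_dvd_sub_natCast (h : IsRealCyclotomicPair (p ^ (k + 1)) z θ) (hp : p ≠ 2)
    {n : ℕ} (hn : Odd n) (hnp : n.Coprime p) : ∃ u : (𝓞 F₀)ˣ, θ ^ 2 - 4 ∣ (u : 𝓞 F₀) - n := by
  have hm := two_lt_prime_pow_succ (Fact.out : p.Prime) hp k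
  obtain ⟨σ, hσ⟩ := h.exists_isQuadraticInvolution hm
  obtain ⟨η, hη⟩ := h.associated_sub_inv_pow_sub_pow
    ((Fact.out : p.Prime).odd_of_ne_two hp).pow (hnp.pow_right (k + 1))
  obtain ⟨u, rfl⟩ := h.mem_range_of_sub_inv_mul_eq hσ hη
  refine ⟨u, (h.prime_trace_sq_sub_four hp).dvd_of_dvd_pow (n := 2)
    (dvd_of_algebraMap_dvd_algebraMap (B := 𝓞 F) ?_)⟩
  rw [← h.sub_inv_sq, map_pow, map_sub, map_natCast]
  exact pow_dvd_pow_of_dvd (sub_inv_dvd_sub_natCast (h.sub_inv_ne_zero hm) hn hη) 2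

theorem exists_unit_not_dvd_sub_sq (h : IsRealCyclotomicPair (p ^ (k + 1)) z θ) (hp : p ≠ 2) :
    ∃ u : (𝓞 F₀)ˣ, ∀ x : 𝓞 F₀, ¬θ ^ 2 - 4 ∣ u - x ^ 2 := by
  obtain ⟨n, hn_odd, hn_coprime, hn⟩ := exists_odd_natCast_not_dvd_sub_sq hp (h.absNorm_span_eq hp)
  obtain ⟨u, hu⟩ := h.exists_unit_dvd_sub_natCast hp hn_odd hn_coprime
  refine ⟨u, fun x hx ↦ hn x ?_⟩
  have h_dvd := dvd_sub hx hu
  rwa [sub_sub_sub_cancel_left] at h_dvd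

variable {lam : 𝓞 F₀}

theorem not_trace_sq_sub_four_dvd (h : IsRealCyclotomicPair (p ^ (k + 1)) z θ) (hp : p ≠ 2)
    (hlam : IsCoprime lam (p : 𝓞 F₀)) : ¬θ ^ 2 - 4 ∣ lam := by
  intro h_dvd
  refine not_dvd_absNorm_span_of_isCoprime Fact.out hlam ?_
  rw [← h.absNorm_span_eq hp]
  exact Ideal.absNorm_dvd_absNorm_of_le (Ideal.span_singleton_le_span_singleton.mpr h_dvd)

theorem adjoin_mul_eq_top (h : IsRealCyclotomicPair (p ^ (k + 1)) z θ) (hp : p ≠ 2)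
    (hlam : IsCoprime lam (p : 𝓞 F₀)) :
    IntermediateField.adjoin ℚ {((lam * (θ ^ 2 - 4) : 𝓞 F₀) : F₀)} = ⊤ := by
  have h_norm : Ideal.absNorm (Ideal.span {lam * (θ ^ 2 - 4)}) =
      Ideal.absNorm (Ideal.span {lam}) * p := by
    rw [← Ideal.span_singleton_mul_span_singleton, map_mul, h.absNorm_span_eq hp]
  refine adjoin_eq_top_of_dvd_absNorm Fact.out (h_norm ▸ dvd_mul_left p _) ?_
  rw [h_norm, sq, Nat.mul_dvd_mul_iff_right (Fact.out : p.Prime).pos]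
  exact not_dvd_absNorm_span_of_isCoprime Fact.out hlam

theorem odd_classNumber_of_sq_eq_mul {L : Type*} [Field L] [NumberField L] [Algebra F₀ L]
    (h : IsRealCyclotomicPair (p ^ (k + 1)) z θ) (hp : p ≠ 2) (hodd : Odd (classNumber F))
    (hneg : ∀ r : F₀ →+* ℝ, r lam < 0) (hcop : IsCoprime lam (p : 𝓞 F₀)) (hprime : Prime lam)
    {X : 𝓞 F₀} (hX : 4 ∣ lam - X ^ 2) {s : 𝓞 L}
    (hs : s ^ 2 = algebraMap (𝓞 F₀) (𝓞 L) (lam * (θ ^ 2 - 4)))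
    (h_top : IntermediateField.adjoin ℚ {(s : L)} = ⊤) : Odd (classNumber L) := by
  have := h.isTotallyReal
  have hs_coe : (s : L) ^ 2 = algebraMap F₀ L (lam * (θ ^ 2 - 4) : 𝓞 F₀) :=
    congrArg (algebraMap (𝓞 L) L) hs
  have h_pos (r : F₀ →+* ℝ) : 0 ≤ r (lam * (θ ^ 2 - 4) : 𝓞 F₀) :=
    calc 0 ≤ r lam * r (θ ^ 2 - 4 : 𝓞 F₀) := (mul_pos_of_neg_of_neg (hneg r)
          (h.apply_lt_zero (two_lt_prime_pow_succ Fact.out hp k) r)).le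
      _ = r (lam * (θ ^ 2 - 4) : 𝓞 F₀) := (map_mul (r.comp (algebraMap (𝓞 F₀) F₀)) _ _).symm
  have := isTotallyReal_of_sq_eq_algebraMap h_pos hs_coe h_top
  obtain ⟨u, hu⟩ := h.exists_unit_not_dvd_sub_sq hp
  have h_square : 4 ∣ lam * (θ ^ 2 - 4) - (X * θ) ^ 2 := by
    obtain ⟨c, hc⟩ := hX
    exact ⟨c * θ ^ 2 - lam, by linear_combination θ ^ 2 * hc⟩
  exact odd_classNumber_of_isTotallyReal_of_mul_prime hs
    (adjoin_eq_top_of_mem_adjoin F₀ h_top (IntermediateField.mem_adjoin_simple_self F₀ _)) h_square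
    (h.odd_classNumber hp hodd) hprime (h.prime_trace_sq_sub_four hp)
    (h.not_trace_sq_sub_four_dvd hp hcop) hu

end PrimePower

end IsRealCyclotomicPair

end RealCyclotomic

theorem odd_class_number_of_CM_extension_general
    (m : ℕ) (hm : IsPrimePow m) (hm_odd : Odd m)
    (F₀ F E E₀ : Type*) [Field F₀] [Field F] [Field E] [Field E₀]
    [NumberField F₀] [NumberField F] [NumberField E] [NumberField E₀]
    [Algebra F₀ F] [Algebra F E] [Algebra F₀ E] [IsScalarTower F₀ F E]
    [Algebra E₀ E]
    (ζ : F) (hζ : IsPrimitiveRoot ζ m)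
    (hFgen : IntermediateField.adjoin ℚ {ζ} = ⊤)
    (hF₀ : (algebraMap F₀ F).fieldRange
      = (IntermediateField.adjoin ℚ {ζ + ζ⁻¹}).toSubfield)
    (lam : 𝓞 F₀)
    (hpos : ∀ φ : F₀ →+* ℝ, 0 < φ (algebraMap (𝓞 F₀) F₀ lam))
    (hcop : IsCoprime lam (m : 𝓞 F₀))
    (hprime : Prime lam)
    (hsq4 : ∃ X : 𝓞 F₀, (4 : 𝓞 F₀) ∣ (-lam - X ^ 2))
    (hinert : Prime (algebraMap (𝓞 F₀) (𝓞 F) lam))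
    (s : E) (hs : s ^ 2 = algebraMap F₀ E (-(algebraMap (𝓞 F₀) F₀ lam)))
    (hEgen : IntermediateField.adjoin F {s} = ⊤)
    (hE₀ : (algebraMap E₀ E).fieldRange
      = (IntermediateField.adjoin ℚ
          {(algebraMap F E ζ - algebraMap F E ζ⁻¹) * s}).toSubfield)
    (hclF : Odd (NumberField.classNumber F)) :
    Odd (NumberField.classNumber E) ∧ Odd (NumberField.classNumber E₀) := by
  obtain ⟨p, k, hp, hk, rfl⟩ := (isPrimePow_nat_iff m).mp hm
  obtain ⟨k, rfl⟩ := Nat.exists_eq_add_one_of_ne_zero hk.ne'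
  have : Fact p.Prime := ⟨hp⟩
  have hp_ne : p ≠ 2 := hm_odd.ne_two_of_dvd_nat (dvd_pow_self p k.succ_ne_zero)
  have hcop_p : IsCoprime (-lam) (p : 𝓞 F₀) := by
    rw [Nat.cast_pow, IsCoprime.pow_right_iff k.succ_pos] at hcop
    exact hcop.neg_left
  obtain ⟨X, hX⟩ := hsq4
  obtain ⟨z, θ, rfl, h⟩ := exists_isRealCyclotomicPair hζ hFgen hF₀
  constructor
  · refine h.odd_classNumber_of_sq_eq (two_lt_prime_pow_succ hp hp_ne k) hclF (lam := -lam) ?_ hX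
      (hs.trans (IsScalarTower.algebraMap_apply F₀ F E _)) hEgen
    rw [map_neg]
    exact hinert.neg
  · obtain ⟨_, s₀, hs₀, h_top⟩ := exists_algebra_sq_eq_of_fieldRange_eq
      (h.adjoin_mul_eq_top hp_ne hcop_p) (h.sub_inv_mul_sq (lam := -lam) hs) hE₀
    exact h.odd_classNumber_of_sq_eq_mul hp_ne hclF
      (fun r ↦ (map_neg r _).trans_lt (neg_lt_zero.mpr (hpos r))) hcop_p hprime.neg hX hs₀ h_top

/-- With `F = ℚ(ζ_m)`, `F₀` its maximal totally real subfield, and `λ ∈ 𝓞 F₀`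
totally positive, coprime to `m`, prime, of odd norm, with `−λ` a square mod
`4·𝓞 F₀`, and inert in `F/F₀`: if the class number of `F` is odd, then the
class numbers of `E = F(√(−λ))` and of its maximal totally real subfield
`E₀ = F₀((ζ_m − ζ_m⁻¹)√(−λ))` are both odd. -/
theorem odd_class_number_of_CM_extension
    (m : ℕ) (hm : m.Prime) (hm3 : 3 < m)
    (F₀ F E E₀ : Type*) [Field F₀] [Field F] [Field E] [Field E₀]
    [NumberField F₀] [NumberField F] [NumberField E] [NumberField E₀]
    [Algebra F₀ F] [Algebra F E] [Algebra F₀ E] [IsScalarTower F₀ F E]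
    [Algebra E₀ E]
    (ζ : F) (hζ : IsPrimitiveRoot ζ m)
    (hFgen : IntermediateField.adjoin ℚ {ζ} = ⊤)
    (hF₀ : (algebraMap F₀ F).fieldRange
      = (IntermediateField.adjoin ℚ {ζ + ζ⁻¹}).toSubfield)
    (lam : 𝓞 F₀)
    (hpos : ∀ φ : F₀ →+* ℝ, 0 < φ (algebraMap (𝓞 F₀) F₀ lam))
    (hcop : IsCoprime lam (m : 𝓞 F₀))
    (hprime : Prime lam)
    (hodd : Odd (Algebra.norm ℤ lam))
    (hsq4 : ∃ X : 𝓞 F₀, (4 : 𝓞 F₀) ∣ (-lam - X ^ 2))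
    -- `λ` is inert in `F/F₀`
    (hinert : Prime (algebraMap (𝓞 F₀) (𝓞 F) lam))
    (s : E) (hs : s ^ 2 = algebraMap F₀ E (-(algebraMap (𝓞 F₀) F₀ lam)))
    (hEgen : IntermediateField.adjoin F {s} = ⊤)
    (hE₀ : (algebraMap E₀ E).fieldRange
      = (IntermediateField.adjoin ℚ
          {(algebraMap F E ζ - algebraMap F E ζ⁻¹) * s}).toSubfield)
    (hclF : Odd (NumberField.classNumber F)) :
    Odd (NumberField.classNumber E) ∧ Odd (NumberField.classNumber E₀) :=
  odd_class_number_of_CM_extension_general m hm.isPrimePow (hm.odd_of_ne_two (by omega)) F₀ F E E₀ ζ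
    hζ hFgen hF₀ lam hpos hcop hprime hsq4 hinert s hs hEgen hE₀ hclF
end

section
/- Let E be a CM field with maximal totally real subfield E₀. If N_{E/E₀}(U_E) = Q·U_{E₀}² where Q = [N_{E/E₀}(U_E) : U_{E₀}²] = 2, and E₀ has units of almost independent signs, then every totally positive unit of E₀ is a norm from E, i.e. [U_{E₀}⁺ : N_{E/E₀}(U_E)] = 1. -/
open NumberField

/-!
Write `U` for the unit group of `E₀`, `U⁺` for its subgroup of totally positive units and `N` for
the group of norms of units of `E`. The norm of `u ∈ U` is `u²`, and complex conjugation pairs off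
the embeddings of `E` above a real embedding of `E₀`, so that `U² ≤ N ≤ U⁺`. Since `U` is generated
by `n` elements, `[U : U²]` divides `2 ^ n`, the number of sign patterns; as `[U : U⁺]` is the
number of patterns achieved by units, `[U⁺ : U²] = [U⁺ : N] [N : U²]` divides the order of the
cokernel of the sign map. When that order is `2` and `N ≠ U²`, no room is left for `[U⁺ : N] > 1`.
-/

section Groups

theorem index_range_powMonoidHom_dvd_pow_rank (G : Type*) [CommGroup G] [Group.FG G] (n : ℕ) :
    (powMonoidHom n : G →* G).range.index ∣ n ^ Group.rank G := by
  have pow_eq_one (q : G ⧸ (powMonoidHom n : G →* G).range) : q ^ n = 1 := by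
    obtain ⟨g, rfl⟩ := QuotientGroup.mk_surjective q
    exact (QuotientGroup.eq_one_iff (g ^ n)).mpr ⟨g, rfl⟩
  exact (card_dvd_exponent_pow_rank' _ pow_eq_one).trans
    (pow_dvd_pow n (Group.rank_le_of_surjective _ (QuotientGroup.mk'_surjective _)))

theorem relIndex_ker_dvd_index_range {G A : Type*} [Group G] [Group A] [Finite A] {f : G →* A}
    {H : Subgroup G} (hle : H ≤ f.ker) (hdvd : H.index ∣ Nat.card A) :
    H.relIndex f.ker ∣ f.range.index := by
  refine Nat.dvd_of_mul_dvd_mul_right (Nat.card_pos (α := f.range)) ?_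
  calc H.relIndex f.ker * Nat.card f.range = H.index := by
        rw [← Subgroup.index_ker, Subgroup.relIndex_mul_index hle]
    _ ∣ Nat.card A := hdvd
    _ = f.range.index * Nat.card f.range := (Subgroup.index_mul_card _).symm

theorem le_of_relIndex_dvd_prime {G : Type*} [Group G] {H N P : Subgroup G} {p : ℕ}
    (hp : p.Prime) (hHN : H ≤ N) (hNP : N ≤ P) (hne : ¬ N ≤ H) (hdvd : H.relIndex P ∣ p) :
    P ≤ N := by
  rw [← Subgroup.relIndex_mul_relIndex H N P hHN hNP] at hdvd
  have hHN_eq : H.relIndex N = p :=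
    (hp.eq_one_or_self_of_dvd _ (dvd_of_mul_right_dvd hdvd)).resolve_left
      (mt Subgroup.relIndex_eq_one.mp hne)
  rw [hHN_eq] at hdvd
  exact Subgroup.relIndex_eq_one.mp
    (Nat.dvd_one.mp (Nat.dvd_of_mul_dvd_mul_left hp.pos (by rwa [mul_one])))

end Groups

section RealEmbeddings

open ComplexEmbedding InfinitePlace

theorem isTotallyReal_of_forall_im_eq_zero {K : Type*} [Field K]
    (h : ∀ φ : K →+* ℂ, ∀ x : K, (φ x).im = 0) : IsTotallyReal K where
  isReal w := InfinitePlace.isReal_iff.mpr <| isReal_iff.mpr <| RingHom.ext fun x ↦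
    Complex.conj_eq_iff_im.mpr (h w.embedding x)

theorem card_ringHom_real_eq_nrRealPlaces (K : Type*) [Field K] [NumberField K] :
    Nat.card (K →+* ℝ) = nrRealPlaces K := by
  classical
  rw [← card_real_embeddings, ← Nat.card_eq_fintype_card]
  refine Nat.card_congr
    { toFun := fun φ ↦ ⟨Complex.ofRealHom.comp φ, by ext; simp⟩
      invFun := fun σ ↦ σ.2.embedding
      left_inv := fun φ ↦ by ext; simp [IsReal.embedding]
      right_inv := fun σ ↦ by ext; simp }

theorem card_ringHom_real_eq_rank_add_one (K : Type*) [Field K] [NumberField K]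
    [IsTotallyReal K] : Nat.card (K →+* ℝ) = Units.rank K + 1 := by
  rw [card_ringHom_real_eq_nrRealPlaces, Units.rank, Nat.sub_add_cancel Fintype.card_pos,
    card_eq_nrRealPlaces_add_nrComplexPlaces, IsTotallyReal.nrComplexPlaces_eq_zero, add_zero]

theorem norm_pos_of_forall_comp_algebraMap_ne {K L : Type*} [Field K] [Field L] [Algebra K L]
    [FiniteDimensional K L] [Algebra.IsSeparable K L] {φ : K →+* ℝ}
    (hφ : ∀ ψ : L →+* ℝ, ψ.comp (algebraMap K L) ≠ φ) {x : L} (hx : x ≠ 0) :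
    0 < φ (Algebra.norm K x) := by
  let : Algebra K ℝ := φ.toAlgebra
  let : Algebra K ℂ := (Complex.ofRealHom.comp φ).toAlgebra
  have : IsScalarTower K ℝ ℂ := .of_algebraMap_eq' rfl
  let conj (σ : L →ₐ[K] ℂ) : L →ₐ[K] ℂ := (Complex.conjAe.toAlgHom.restrictScalars K).comp σ
  have conj_ne (σ : L →ₐ[K] ℂ) : conj σ ≠ σ := fun h ↦ by
    have hreal : IsReal σ.toRingHom := isReal_iff.mpr (congrArg AlgHom.toRingHom h)
    refine hφ hreal.embedding (RingHom.ext fun y ↦ ?_)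
    exact Complex.ofReal_injective ((hreal.coe_embedding_apply _).trans (σ.commutes y))
  have norm_ne (σ : L →ₐ[K] ℂ) : (‖σ x‖ : ℂ) ≠ 0 := by simpa using hx
  -- Once scaled to absolute value `1`, complex conjugate values of `x` cancel in pairs.
  have prod_unit_eq_one : ∏ σ : L →ₐ[K] ℂ, σ x / ‖σ x‖ = 1 := by
    refine Finset.prod_ninvolution conj (fun σ ↦ ?_) (fun σ _ ↦ conj_ne σ)
      (fun σ ↦ Finset.mem_univ _) (fun σ ↦ AlgHom.ext fun y ↦ Complex.conj_conj _)
    have hconj : conj σ x = starRingEnd ℂ (σ x) := rfl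
    rw [hconj, Complex.norm_conj, div_mul_div_comm, Complex.mul_conj', ← sq,
      div_self (pow_ne_zero 2 (norm_ne σ))]
  have norm_eq : φ (Algebra.norm K x) = ∏ σ : L →ₐ[K] ℂ, ‖σ x‖ := by
    apply Complex.ofReal_injective
    calc ((φ (Algebra.norm K x) : ℝ) : ℂ) = ∏ σ : L →ₐ[K] ℂ, σ x :=
          Algebra.norm_eq_prod_embeddings (K := K) ℂ x
      _ = ∏ σ : L →ₐ[K] ℂ, (‖σ x‖ : ℂ) := by
          rwa [Finset.prod_div_distrib,
            div_eq_one_iff_eq (Finset.prod_ne_zero_iff.mpr fun σ _ ↦ norm_ne σ)] at prod_unit_eq_one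
      _ = ((∏ σ : L →ₐ[K] ℂ, ‖σ x‖ : ℝ) : ℂ) := (Complex.ofReal_prod _ _).symm
  rw [norm_eq]
  exact Finset.prod_pos fun σ _ ↦ by simpa using hx

end RealEmbeddings

section Units

instance units_group_fg (K : Type*) [Field K] [NumberField K] : Group.FG (𝓞 K)ˣ :=
  Group.fg_iff_monoid_fg.mpr inferInstance

theorem rank_units_le (K : Type*) [Field K] [NumberField K] :
    Group.rank (𝓞 K)ˣ ≤ Units.rank K + 1 := by
  classical
  obtain ⟨ζ, hζ⟩ := (Units.torsion K).isCyclic_iff_exists_zpowers_eq_top.mp inferInstance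
  have hgen : Subgroup.closure
      ((insert ζ (Finset.univ.image (Units.fundSystem K)) : Finset (𝓞 K)ˣ) : Set (𝓞 K)ˣ) = ⊤ := by
    rw [← Units.closure_fundSystem_sup_torsion_eq_top, ← hζ, Subgroup.zpowers_eq_closure,
      ← Subgroup.closure_union, Set.union_singleton]
    simp
  calc Group.rank (𝓞 K)ˣ
      ≤ (insert ζ (Finset.univ.image (Units.fundSystem K))).card := Group.rank_le hgen
    _ ≤ (Finset.univ.image (Units.fundSystem K)).card + 1 := Finset.card_insert_le _ _
    _ ≤ Units.rank K + 1 := by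
        simpa using Finset.card_image_le (s := Finset.univ) (f := Units.fundSystem K)

section Signature

variable (K : Type*) [Field K]

/-- The sign map `ρ`, recording the sign of a unit at each real embedding. -/
noncomputable def unitSignature : (𝓞 K)ˣ →* ((K →+* ℝ) → SignTypeˣ) :=
  MonoidHom.pi fun φ ↦
    Units.map ((signHom (α := ℝ) : ℝ →* SignType).comp (φ.comp (algebraMap (𝓞 K) K) : 𝓞 K →* ℝ))

/-- The group `U⁺` of totally positive units. -/
noncomputable def totallyPositiveUnits : Subgroup (𝓞 K)ˣ :=
  (unitSignature K).ker

variable {K}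

theorem unitSignature_apply_eq_one_iff {u : (𝓞 K)ˣ} {φ : K →+* ℝ} :
    unitSignature K u φ = 1 ↔ 0 < φ (algebraMap (𝓞 K) K u) :=
  Units.ext_iff.trans sign_eq_one_iff

theorem mem_totallyPositiveUnits {u : (𝓞 K)ˣ} :
    u ∈ totallyPositiveUnits K ↔ ∀ φ : K →+* ℝ, 0 < φ (algebraMap (𝓞 K) K u) :=
  funext_iff.trans (forall_congr' fun _ ↦ unitSignature_apply_eq_one_iff)

theorem signType_units_eq_iff (a b : SignTypeˣ) : a = b ↔ (a = 1 ↔ b = 1) := by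
  decide +revert

theorem signType_units_mul_eq_one_iff (a b : SignTypeˣ) : a * b = 1 ↔ (a = 1 ↔ b = 1) := by
  decide +revert

theorem mem_range_unitSignature {s : (K →+* ℝ) → SignTypeˣ} :
    s ∈ (unitSignature K).range ↔
      ∃ u : (𝓞 K)ˣ, ∀ φ : K →+* ℝ, 0 < φ (algebraMap (𝓞 K) K u) ↔ s φ = 1 := by
  refine exists_congr fun u ↦ funext_iff.trans (forall_congr' fun φ ↦ ?_)
  rw [signType_units_eq_iff, unitSignature_apply_eq_one_iff]

theorem index_range_unitSignature_eq_two
    (hne : ∃ ε : (K →+* ℝ) → Prop, ∀ u : (𝓞 K)ˣ,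
      ¬ ∀ φ : K →+* ℝ, 0 < φ (algebraMap (𝓞 K) K u) ↔ ε φ)
    (hmul : ∀ ε₁ ε₂ : (K →+* ℝ) → Prop,
      (∀ u : (𝓞 K)ˣ, ¬ ∀ φ : K →+* ℝ, 0 < φ (algebraMap (𝓞 K) K u) ↔ ε₁ φ) →
      (∀ u : (𝓞 K)ˣ, ¬ ∀ φ : K →+* ℝ, 0 < φ (algebraMap (𝓞 K) K u) ↔ ε₂ φ) →
      ∃ u : (𝓞 K)ˣ, ∀ φ : K →+* ℝ, 0 < φ (algebraMap (𝓞 K) K u) ↔ (ε₁ φ ↔ ε₂ φ)) :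
    (unitSignature K).range.index = 2 := by
  classical
  obtain ⟨ε, hε⟩ := hne
  let s (φ : K →+* ℝ) : SignTypeˣ := if ε φ then 1 else -1
  have hs (φ : K →+* ℝ) : s φ = 1 ↔ ε φ := by
    have neg_one_ne_one : (-1 : SignTypeˣ) ≠ 1 := by decide
    by_cases h : ε φ <;> simp [s, h, neg_one_ne_one]
  rw [Subgroup.index_eq_two_iff_exists_notMem_and]
  refine ⟨s, ?_, fun t ↦ or_iff_not_imp_right.mpr fun ht ↦ ?_⟩
  · simpa only [mem_range_unitSignature, hs, not_exists] using hε
  · rw [mem_range_unitSignature, not_exists] at ht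
    obtain ⟨u, hu⟩ := hmul (t · = 1) ε ht hε
    refine mem_range_unitSignature.mpr ⟨u, fun φ ↦ (hu φ).trans ?_⟩
    rw [Pi.mul_apply, signType_units_mul_eq_one_iff, hs]

theorem range_sq_le_totallyPositiveUnits :
    (powMonoidHom 2 : (𝓞 K)ˣ →* (𝓞 K)ˣ).range ≤ totallyPositiveUnits K := by
  rintro _ ⟨u, rfl⟩
  rw [mem_totallyPositiveUnits]
  intro φ
  have hne : φ (algebraMap (𝓞 K) K u) ≠ 0 := by simp
  simpa using sq_pos_of_ne_zero hne

theorem relIndex_sq_totallyPositiveUnits_dvd [NumberField K] [IsTotallyReal K] :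
    (powMonoidHom 2 : (𝓞 K)ˣ →* (𝓞 K)ˣ).range.relIndex (totallyPositiveUnits K) ∣
      (unitSignature K).range.index := by
  refine relIndex_ker_dvd_index_range range_sq_le_totallyPositiveUnits ?_
  have hcard : Nat.card SignTypeˣ = 2 := by rw [Nat.card_eq_fintype_card]; decide
  calc (powMonoidHom 2 : (𝓞 K)ˣ →* (𝓞 K)ˣ).range.index
      ∣ 2 ^ Group.rank (𝓞 K)ˣ := index_range_powMonoidHom_dvd_pow_rank _ 2
    _ ∣ 2 ^ Nat.card (K →+* ℝ) :=
        pow_dvd_pow 2 ((rank_units_le K).trans_eq (card_ringHom_real_eq_rank_add_one K).symm)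
    _ = Nat.card ((K →+* ℝ) → SignTypeˣ) := by rw [Nat.card_fun, hcard]

end Signature

section Norms

variable (K L : Type*) [Field K] [Field L] [Algebra K L]

/-- The group `N_{L/K}(U_L)` of norms of units. -/
noncomputable def unitNorms : Subgroup (𝓞 K)ˣ :=
  (Units.map (RingOfIntegers.norm K : 𝓞 L →* 𝓞 K)).range

variable {K L}

theorem mem_unitNorms {u : (𝓞 K)ˣ} :
    u ∈ unitNorms K L ↔
      ∃ v : (𝓞 L)ˣ, Algebra.norm K (algebraMap (𝓞 L) L v) = algebraMap (𝓞 K) K u :=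
  exists_congr fun _ ↦ Units.ext_iff.trans RingOfIntegers.ext_iff

theorem range_pow_finrank_le_unitNorms :
    (powMonoidHom (Module.finrank K L) : (𝓞 K)ˣ →* (𝓞 K)ˣ).range ≤ unitNorms K L := by
  rintro _ ⟨u, rfl⟩
  refine ⟨Units.map (algebraMap (𝓞 K) (𝓞 L)) u, Units.ext ?_⟩
  simpa using RingOfIntegers.norm_algebraMap (L := L) K (u : 𝓞 K)

theorem unitNorms_le_range_pow_iff {d : ℕ} :
    unitNorms K L ≤ (powMonoidHom d : (𝓞 K)ˣ →* (𝓞 K)ˣ).range ↔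
      ∀ v : (𝓞 L)ˣ, ∃ e : (𝓞 K)ˣ,
        Algebra.norm K (algebraMap (𝓞 L) L v) = algebraMap (𝓞 K) K e ^ d := by
  refine Set.range_subset_iff.trans <| forall_congr' fun v ↦ exists_congr fun e ↦ ?_
  rw [Units.ext_iff, RingOfIntegers.ext_iff, eq_comm]
  simp

theorem unitNorms_le_totallyPositiveUnits [FiniteDimensional K L] [Algebra.IsSeparable K L]
    [IsEmpty (L →+* ℝ)] : unitNorms K L ≤ totallyPositiveUnits K := by
  intro u hu
  obtain ⟨v, hv⟩ := mem_unitNorms.mp hu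
  rw [mem_totallyPositiveUnits]
  intro φ
  rw [← hv]
  exact norm_pos_of_forall_comp_algebraMap_ne (fun ψ ↦ isEmptyElim ψ) (by simp)

end Norms

end Units

/-- Let `E` be a CM field with maximal totally real subfield `E₀`.  If the Hasse
unit index `Q(E) = [N_{E/E₀}(U_E) : U_{E₀}²]` equals `2` and `E₀` has units of
almost independent signs (the sign map `ρ : U_{E₀} → {±1}ⁿ` has cokernel of
order `2`), then every totally positive unit of `E₀` is a norm of a unit of
`E`, i.e. `[U_{E₀}⁺ : N_{E/E₀}(U_E)] = 1`. -/
theorem totally_positive_units_are_norms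
    (E₀ E : Type*) [Field E₀] [Field E] [NumberField E₀] [NumberField E]
    [Algebra E₀ E]
    (hdeg : Module.finrank E₀ E = 2)
    -- `E₀` is totally real
    (htotreal : ∀ φ : E₀ →+* ℂ, ∀ x : E₀, (φ x).im = 0)
    -- `E` is totally complex (so that `E` is a CM field over `E₀`)
    (hcm : ∀ φ : E →+* ℂ, ∃ x : E, (φ x).im ≠ 0)
    -- `Q(E) = [N_{E/E₀}(U_E) : U_{E₀}²] = 2`:
    -- some unit norm is not the square of a unit of `E₀` ...
    (hQ1 : ∃ v : (𝓞 E)ˣ, ∀ e : (𝓞 E₀)ˣ,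
        Algebra.norm E₀ (algebraMap (𝓞 E) E ↑v) ≠ (algebraMap (𝓞 E₀) E₀ ↑e) ^ 2)
    -- ... and any two such unit norms differ by the square of a unit of `E₀`
    (hQ2 : ∀ v₁ v₂ : (𝓞 E)ˣ,
        (∀ e : (𝓞 E₀)ˣ,
          Algebra.norm E₀ (algebraMap (𝓞 E) E ↑v₁) ≠ (algebraMap (𝓞 E₀) E₀ ↑e) ^ 2) →
        (∀ e : (𝓞 E₀)ˣ,
          Algebra.norm E₀ (algebraMap (𝓞 E) E ↑v₂) ≠ (algebraMap (𝓞 E₀) E₀ ↑e) ^ 2) →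
        ∃ e : (𝓞 E₀)ˣ,
          Algebra.norm E₀ (algebraMap (𝓞 E) E ↑v₁) *
            Algebra.norm E₀ (algebraMap (𝓞 E) E ↑v₂)
            = (algebraMap (𝓞 E₀) E₀ ↑e) ^ 2)
    -- `E₀` has units of almost independent signs: the cokernel of the sign map
    -- has order 2, i.e. some sign pattern is not achieved by a unit ...
    (hsigns1 : ∃ ε : (E₀ →+* ℝ) → Prop, ∀ e : (𝓞 E₀)ˣ,
        ¬ (∀ φ : E₀ →+* ℝ, (0 < φ (algebraMap (𝓞 E₀) E₀ ↑e) ↔ ε φ)))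
    -- ... and the product of any two unachieved sign patterns is achieved
    (hsigns2 : ∀ ε₁ ε₂ : (E₀ →+* ℝ) → Prop,
        (∀ e : (𝓞 E₀)ˣ, ¬ (∀ φ : E₀ →+* ℝ, (0 < φ (algebraMap (𝓞 E₀) E₀ ↑e) ↔ ε₁ φ))) →
        (∀ e : (𝓞 E₀)ˣ, ¬ (∀ φ : E₀ →+* ℝ, (0 < φ (algebraMap (𝓞 E₀) E₀ ↑e) ↔ ε₂ φ))) →
        ∃ e : (𝓞 E₀)ˣ, ∀ φ : E₀ →+* ℝ,
          (0 < φ (algebraMap (𝓞 E₀) E₀ ↑e) ↔ (ε₁ φ ↔ ε₂ φ))) :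
    ∀ u : (𝓞 E₀)ˣ, (∀ φ : E₀ →+* ℝ, 0 < φ (algebraMap (𝓞 E₀) E₀ ↑u)) →
      ∃ v : (𝓞 E)ˣ,
        Algebra.norm E₀ (algebraMap (𝓞 E) E ↑v) = algebraMap (𝓞 E₀) E₀ ↑u := by
  intro u hu
  have : FiniteDimensional E₀ E := Module.finite_of_finrank_pos (by omega)
  have : IsTotallyReal E₀ := isTotallyReal_of_forall_im_eq_zero htotreal
  have : IsEmpty (E →+* ℝ) := ⟨fun ψ ↦ by
    obtain ⟨x, hx⟩ := hcm (Complex.ofRealHom.comp ψ)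
    exact hx (Complex.ofReal_im _)⟩
  have sq_le_norms : (powMonoidHom 2 : (𝓞 E₀)ˣ →* (𝓞 E₀)ˣ).range ≤ unitNorms E₀ E := by
    simpa only [hdeg] using range_pow_finrank_le_unitNorms (K := E₀) (L := E)
  have norms_not_le_sq : ¬ unitNorms E₀ E ≤ (powMonoidHom 2 : (𝓞 E₀)ˣ →* (𝓞 E₀)ˣ).range := by
    simpa only [unitNorms_le_range_pow_iff, not_forall, not_exists] using hQ1
  have relIndex_dvd_two :
      (powMonoidHom 2 : (𝓞 E₀)ˣ →* (𝓞 E₀)ˣ).range.relIndex (totallyPositiveUnits E₀) ∣ 2 :=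
    relIndex_sq_totallyPositiveUnits_dvd.trans
      (index_range_unitSignature_eq_two hsigns1 hsigns2).dvd
  exact mem_unitNorms.mp (le_of_relIndex_dvd_prime Nat.prime_two sq_le_norms
    unitNorms_le_totallyPositiveUnits norms_not_le_sq relIndex_dvd_two
    (mem_totallyPositiveUnits.mpr hu))
end

section
/- Let F₀ = ℚ(√5) with ring of integers O_{F₀}, and let α, β ∈ O_{F₀} be relatively prime of odd norm. Suppose λ ∈ O_{F₀} has odd norm, −λ is a square modulo 4·O_{F₀}, β is totally positive, and λ, β are relatively prime. Then the product of quadratic residue symbols (−λ/β)(β/λ) equals 1. -/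
open NumberField

/-!
The ring of integers of `ℚ(√5)` is `ℤ[ω]` with `ω² = 1 + ω`, and in it every quadratic symbol is an
explicit product of rational Jacobi symbols. If a prime `x` divides a split or ramified rational
prime, then `z ≡ (star z * x).im / x.im` modulo `x`. If `p` is inert, then the Frobenius is the
conjugation, so the symbol of `z` modulo `p` is `J(N z | p)`. Units act on the moduli, and squares
of units on the arguments, without changing the symbols. Hence one may assume `-λ ≡ 1` modulo `4`
and that `β` has odd `ω`-coordinate. Both symbols then have the numerator `(star y * x).im` in
common up to sign, where `x` and `y` are the primitive parts of `β` and `-λ`. Since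
`N (star y * x) = N x * N y` is a square modulo `(star y * x).im`, rational reciprocity finishes the
proof; the signs it produces cancel because `β` is totally positive.
-/

open scoped NumberTheorySymbols

/-- The Hilbert symbol `(x, y)_∞` over `ℝ` of two integers (meaningful for nonzero arguments), which
measures the failure of quadratic reciprocity between signed integers. -/
def realHilbertSym (x y : ℤ) : ℤ := if x < 0 ∧ y < 0 then -1 else 1

theorem realHilbertSym_of_nonneg_right (x : ℤ) {y : ℤ} (hy : 0 ≤ y) : realHilbertSym x y = 1 :=
  if_neg fun h => hy.not_gt h.2

theorem realHilbertSym_of_pos_left {x : ℤ} (y : ℤ) (hx : 0 < x) : realHilbertSym x y = 1 :=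
  if_neg fun h => hx.not_gt h.1

theorem jacobiSym_neg_of_mod_four_eq_one (a : ℤ) {b : ℕ} (hb : b % 4 = 1) :
    J(-a | b) = J(a | b) := by
  rw [jacobiSym.neg a (Nat.odd_iff.mpr (by lia)), ZMod.χ₄_nat_one_mod_four hb, one_mul]

theorem jacobiSym_neg_of_mod_four_eq_three (a : ℤ) {b : ℕ} (hb : b % 4 = 3) :
    J(-a | b) = -J(a | b) := by
  rw [jacobiSym.neg a (Nat.odd_iff.mpr (by lia)), ZMod.χ₄_nat_three_mod_four hb, neg_one_mul]

theorem jacobiSym_neg_natCast {m n : ℕ} (hm : m % 4 = 3) (hn : Odd n) :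
    J(-(m : ℤ) | n) = J(n | m) := by
  obtain hn | hn := Nat.odd_mod_four_iff.mp (Nat.odd_iff.mp hn)
  · rw [jacobiSym_neg_of_mod_four_eq_one _ hn,
      jacobiSym.quadratic_reciprocity_one_mod_four' (Nat.odd_iff.mpr (by lia)) hn]
  · rw [jacobiSym_neg_of_mod_four_eq_three _ hn,
      jacobiSym.quadratic_reciprocity_three_mod_four hm hn, neg_neg]

theorem jacobiSym_natAbs_reciprocity {k n : ℤ} (hk : Odd k) (hn : n % 4 = 1) :
    J(k | n.natAbs) = J(n | k.natAbs) * realHilbertSym k n := by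
  rw [← Int.natAbs_odd] at hk
  obtain ⟨m, rfl | rfl⟩ := n.eq_nat_or_neg <;> obtain ⟨l, rfl | rfl⟩ := k.eq_nat_or_neg <;>
    simp only [Int.natAbs_neg, Int.natAbs_natCast, realHilbertSym] at hk ⊢
  · rw [if_neg (by lia), mul_one, jacobiSym.quadratic_reciprocity_one_mod_four' hk (by lia)]
  · rw [if_neg (by lia), mul_one, jacobiSym_neg_of_mod_four_eq_one _ (by lia),
      jacobiSym.quadratic_reciprocity_one_mod_four' hk (by lia)]
  · rw [if_neg (by lia), mul_one, jacobiSym_neg_natCast (by lia) hk]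
  · have hl := hk.pos
    rw [if_pos (by lia), mul_neg_one, jacobiSym_neg_of_mod_four_eq_three _ (by lia),
      jacobiSym_neg_natCast (by lia) hk]

theorem jacobiSym_sq_eq_one_of_ne_zero {a : ℤ} {b : ℕ} (h : J(a | b) ≠ 0) : J(a | b) ^ 2 = 1 := by
  obtain h' | h' | h' := jacobiSym.trichotomy a b <;> simp_all

theorem jacobiSym_sq_eq_one_of_isCoprime {a n : ℤ} (h : IsCoprime a n) :
    J(a | n.natAbs) ^ 2 = 1 :=
  jacobiSym.sq_one <| by rwa [Int.gcd_eq_natAbs, Int.natAbs_natCast, ← Int.gcd_eq_natAbs,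
    ← Int.isCoprime_iff_gcd_eq_one]

theorem isCoprime_of_jacobiSym_ne_zero {a n : ℤ} (hn : n ≠ 0) (h : J(a | n.natAbs) ≠ 0) :
    IsCoprime a n := by
  rw [Ne, jacobiSym.eq_zero_iff, not_and_not_right] at h
  exact Int.isCoprime_iff_gcd_eq_one.mpr (h (Int.natAbs_ne_zero.mpr hn))

theorem jacobiSym_natAbs_eq_one_of_modEq_sq {n u q : ℤ} (h : q ≡ u ^ 2 [ZMOD n])
    (hc : IsCoprime q n) : J(q | n.natAbs) = 1 := by
  rw [jacobiSym.mod_left' (a₂ := u ^ 2) (by simpa [Int.ModEq] using h), jacobiSym.pow_left,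
    jacobiSym_sq_eq_one_of_isCoprime]
  obtain ⟨t, ht⟩ := h.dvd
  rw [← IsCoprime.pow_left_iff two_pos, eq_add_of_sub_eq' ht]
  exact hc.add_mul_left_left t

theorem jacobiSym_eq_one_of_modEq_sq {e c : ℤ} {n : ℕ} (hn : Odd n)
    (h : n ≡ c ^ 2 [ZMOD 4 * e]) (hc : IsCoprime e n) : J(e | n) = 1 := by
  obtain ⟨t, ht⟩ := h.dvd
  have hmod : n ≡ c.natAbs ^ 2 [MOD 4 * e.natAbs] := by
    rw [Nat.modEq_iff_dvd, Nat.cast_pow, Int.natAbs_sq, ← Int.natAbs_dvd_natAbs]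
    simpa [Int.natAbs_mul, Int.natAbs_abs] using Int.natAbs_dvd_natAbs.mpr h.dvd
  have hodd : Odd (c.natAbs ^ 2) := by
    rw [← Int.natAbs_pow, Int.natAbs_odd, eq_add_of_sub_eq' ht, mul_assoc, Int.odd_add]
    simp [hn, show Even (4 : ℤ) by decide]
  have hcop : IsCoprime e c := by
    rw [← IsCoprime.pow_right_iff two_pos, eq_add_of_sub_eq' ht, mul_comm 4 e, mul_assoc]
    exact hc.add_mul_left_right _
  rw [jacobiSym.mod_right e hn, hmod, ← jacobiSym.mod_right e hodd, jacobiSym.pow_right,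
    jacobiSym_sq_eq_one_of_isCoprime hcop]

theorem jacobiSym_four_mul_sub_one {m : ℕ} (hm : m ≠ 0) : J(m | 4 * m - 1) = 1 := by
  have hodd : Odd (4 * m - 1) := Nat.odd_iff.mpr (by lia)
  have hmod : (2 ^ 2 * m : ℤ) % (4 * m - 1 : ℕ) = 1 % (4 * m - 1 : ℕ) :=
    (Int.modEq_iff_dvd.mpr ⟨1, by lia⟩).symm
  have h4m : J((2 : ℤ) ^ 2 * m | 4 * m - 1) = 1 := by
    rw [jacobiSym.mod_left' hmod, jacobiSym.one_left]
  have h2 : Int.gcd 2 (4 * m - 1 : ℕ) = 1 := by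
    simpa [Int.gcd] using Nat.coprime_two_left.mpr hodd
  rwa [jacobiSym.mul_left, jacobiSym.sq_one' h2, one_mul] at h4m

theorem jacobiSym_four_mul_natAbs_sub_one {e : ℤ} (he : e ≠ 0) :
    J(e | 4 * e.natAbs - 1) = if e < 0 then -1 else 1 := by
  obtain ⟨m, rfl | rfl⟩ := e.eq_nat_or_neg
  · rw [if_neg (by lia), Int.natAbs_natCast, jacobiSym_four_mul_sub_one (by simpa using he)]
  · have hm : m ≠ 0 := by simpa using he
    rw [Int.natAbs_neg, Int.natAbs_natCast, jacobiSym_neg_of_mod_four_eq_three _ (by lia),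
      jacobiSym_four_mul_sub_one hm, if_pos (by lia)]

theorem jacobiSym_natAbs_eq_realHilbertSym {e c q : ℤ} (hq : Odd q)
    (h : q ≡ c ^ 2 [ZMOD 4 * e]) (hc : IsCoprime e q) : J(e | q.natAbs) = realHilbertSym e q := by
  obtain hq0 | hq0 := le_or_gt 0 q
  · lift q to ℕ using hq0
    rw [realHilbertSym_of_nonneg_right _ (Int.natCast_nonneg q), Int.natAbs_natCast]
    exact jacobiSym_eq_one_of_modEq_sq (by exact_mod_cast hq) h hc
  -- for `q < 0`, the positive number `|q| * (4 * |e| - 1)` is still `c ^ 2` modulo `4 * e`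
  · have he : e ≠ 0 := by
      rintro rfl
      rw [mul_zero, Int.modEq_zero_iff] at h
      exact (h ▸ hq0).not_ge (sq_nonneg c)
    have hM : ((4 * e.natAbs - 1 : ℕ) : ℤ) = 4 * |e| - 1 := by
      have := Int.natAbs_pos.mpr he
      push_cast [show 1 ≤ 4 * e.natAbs by lia]
      rfl
    obtain ⟨t, ht⟩ : e ∣ |e| := (dvd_abs e e).mpr dvd_rfl
    have hcast : ((q.natAbs * (4 * e.natAbs - 1) : ℕ) : ℤ) = q + -q * t * (4 * e) := by
      rw [Nat.cast_mul, hM, Int.natCast_natAbs, abs_of_neg hq0, ht]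
      ring
    have hprod : J(e | q.natAbs * (4 * e.natAbs - 1)) = 1 := by
      refine jacobiSym_eq_one_of_modEq_sq (c := c) ?_ ?_ ?_
      · exact (Int.natAbs_odd.mpr hq).mul (Nat.odd_iff.mpr (by lia))
      · rw [hcast]
        exact Int.add_mul_modulus_modEq_iff.mpr h
      · rw [hcast, ← mul_assoc]
        exact hc.add_mul_right_right _
    rw [jacobiSym.mul_right' e (by lia) (by lia), jacobiSym_four_mul_natAbs_sub_one he] at hprod
    unfold realHilbertSym
    split_ifs at hprod ⊢ <;> lia

theorem jacobiSym_natAbs_eq_realHilbertSym_of_four_dvd {d c q : ℤ} (hd : 4 ∣ d) (hq : Odd q)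
    (h : q ≡ c ^ 2 [ZMOD d]) (hc : IsCoprime d q) : J(d | q.natAbs) = realHilbertSym d q := by
  obtain ⟨e, rfl⟩ := hd
  have h2 : IsCoprime 2 q := Int.isCoprime_two_left.mpr hq
  have hsign : realHilbertSym (2 ^ 2 * e) q = realHilbertSym e q := by
    simp [realHilbertSym, mul_neg_iff]
  rw [show (4 : ℤ) = 2 ^ 2 by rfl, jacobiSym.mul_left, jacobiSym.pow_left,
    jacobiSym_sq_eq_one_of_isCoprime h2, one_mul, hsign,
    jacobiSym_natAbs_eq_realHilbertSym hq h hc.of_mul_left_right]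

/-- The ring `ℤ[ω]` with `ω² = 1 + ω`, a concrete model of the ring of integers of `ℚ(√5)`. -/
abbrev GoldenInt := QuadraticAlgebra ℤ 1 1

namespace GoldenInt

/-- The embedding of `ℤ[ω]` in `ℝ` sending `ω` to the golden ratio. -/
noncomputable def toReal : GoldenInt →ₐ[ℤ] ℝ :=
  QuadraticAlgebra.lift ⟨Real.goldenRatio, by simp [← sq, add_comm]⟩

/-- Positivity under all embeddings in `ℝ`. -/
def TotallyPositive (x : GoldenInt) : Prop := ∀ φ : GoldenInt →+* ℝ, 0 < φ x

theorem toReal_apply (x : GoldenInt) : toReal x = x.re + x.im * Real.goldenRatio := by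
  simp [toReal]

theorem toReal_mul_toReal_star (x : GoldenInt) : toReal x * toReal (star x) = x.norm := by
  rw [← map_mul, ← QuadraticAlgebra.algebraMap_norm_eq_mul_star, AlgHom.commutes, eq_intCast]

theorem toReal_sub_toReal_star (x : GoldenInt) : toReal x - toReal (star x) = x.im * √5 := by
  simp only [toReal_apply, QuadraticAlgebra.re_star, QuadraticAlgebra.im_star,
    ← Real.goldenRatio_sub_goldenConj, ← Real.one_sub_goldenRatio]
  push_cast
  ring

theorem im_neg_iff_toReal_neg {x : GoldenInt} (hx : x.norm < 0) : x.im < 0 ↔ toReal x < 0 := by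
  have hmul : toReal x * toReal (star x) < 0 := by
    rw [toReal_mul_toReal_star]
    exact_mod_cast hx
  have him : x.im < 0 ↔ toReal x < toReal (star x) := by
    rw [← sub_neg (a := toReal x), toReal_sub_toReal_star, mul_comm, ← smul_eq_mul,
      smul_neg_iff_of_pos_left (by positivity), Int.cast_lt_zero]
  rw [him]
  obtain ⟨h, h'⟩ | ⟨h, h'⟩ := mul_neg_iff.mp hmul
  · exact iff_of_false (by linarith) (by linarith)
  · exact iff_of_true (by linarith) h

namespace TotallyPositive

variable {x y : GoldenInt}

theorem toReal_star_pos (hx : TotallyPositive x) : 0 < toReal (star x) :=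
  hx ((toReal : GoldenInt →+* ℝ).comp (starRingEnd GoldenInt))

theorem norm_pos (hx : TotallyPositive x) : 0 < x.norm := by
  have hpos : 0 < toReal x * toReal (star x) := mul_pos (hx toReal) hx.toReal_star_pos
  rw [toReal_mul_toReal_star] at hpos
  exact_mod_cast hpos

theorem im_star_mul_neg_iff (hx : TotallyPositive x) (hy : y.norm < 0) :
    (star x * y).im < 0 ↔ y.im < 0 := by
  have hxy : (star x * y).norm < 0 := by
    rw [map_mul, QuadraticAlgebra.norm_star]
    exact mul_neg_of_pos_of_neg hx.norm_pos hy
  rw [im_neg_iff_toReal_neg hxy, im_neg_iff_toReal_neg hy, map_mul,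
    ← smul_eq_mul, smul_neg_iff_of_pos_left hx.toReal_star_pos]

end TotallyPositive

theorem im_star_mul (y x : GoldenInt) : (star y * x).im = y.re * x.im - y.im * x.re := by
  rw [QuadraticAlgebra.im_mul, QuadraticAlgebra.re_star, QuadraticAlgebra.im_star]
  ring

theorem norm_modEq_re_sq (z : GoldenInt) : z.norm ≡ z.re ^ 2 [ZMOD z.im] :=
  Int.modEq_iff_dvd.mpr ⟨z.im - z.re, by rw [QuadraticAlgebra.norm_def]; ring⟩

/-- For odd `k • x` with `x` primitive of odd `im`, this is the quadratic Jacobi symbol of `z`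
modulo `k • x` in `ℤ[ω]`: the residue of `z` modulo a prime divisor `x` of a rational prime is
`(star z * x).im / x.im`. -/
def explicitSym (z : GoldenInt) (k : ℤ) (x : GoldenInt) : ℤ :=
  J(z.norm | k.natAbs) * J(x.im * (star z * x).im | x.norm.natAbs)

variable {k l : ℤ} {x y : GoldenInt}

theorem odd_norm_iff : Odd x.norm ↔ Odd x.re ∨ Odd x.im := by
  rw [QuadraticAlgebra.norm_def]
  simp only [one_mul, Int.odd_sub, Int.odd_add, Int.odd_mul, ← Int.not_odd_iff_even]
  tauto

theorem norm_emod_four_eq_one (hre : y.re % 4 = 1) (him : 4 ∣ y.im) : y.norm % 4 = 1 := by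
  obtain ⟨s, hs⟩ : ∃ s, y.re = 4 * s + 1 := ⟨y.re / 4, by lia⟩
  obtain ⟨t, ht⟩ := him
  rw [QuadraticAlgebra.norm_def, hs, ht]
  ring_nf
  lia

theorem im_mul_im_star_mul_emod_four_eq_one (hx : Odd x.im) (hre : y.re % 4 = 1)
    (him : 4 ∣ y.im) : x.im * (star y * x).im % 4 = 1 := by
  obtain ⟨s, hs⟩ : ∃ s, y.re = 4 * s + 1 := ⟨y.re / 4, by lia⟩
  obtain ⟨t, ht⟩ := him
  have hmul : x.im * (star y * x).im = x.im ^ 2 + x.im * (s * x.im - t * x.re) * 4 := by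
    rw [im_star_mul, hs, ht]
    ring
  rw [hmul, Int.add_mul_emod_self_right, Int.sq_mod_four_eq_one_of_odd hx]

theorem jacobiSym_im_mul_norm_natAbs_of_norm_pos (hx : 0 < x.norm) (hodd : Odd x.im)
    (hcop : IsCoprime x.norm x.im) (hre : y.re % 4 = 1) (him : 4 ∣ y.im) :
    J(x.im * (star y * x).im | x.norm.natAbs) = J(x.norm | (star y * x).im.natAbs) := by
  have hbm := im_mul_im_star_mul_emod_four_eq_one hodd hre him
  have hrec := jacobiSym_natAbs_reciprocity (odd_norm_iff.mpr (.inr hodd)) hbm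
  rw [realHilbertSym_of_pos_left _ hx, mul_one, Int.natAbs_mul] at hrec
  obtain ⟨hb, hm⟩ : x.im ≠ 0 ∧ (star y * x).im ≠ 0 := by
    rw [← mul_ne_zero_iff]
    exact fun h => by rw [h] at hbm; contradiction
  rw [← hrec, jacobiSym.mul_right' _ (Int.natAbs_ne_zero.mpr hb) (Int.natAbs_ne_zero.mpr hm),
    jacobiSym_natAbs_eq_one_of_modEq_sq (norm_modEq_re_sq x) hcop, one_mul]

theorem TotallyPositive.jacobiSym_im_mul_norm_natAbs (hx : x.TotallyPositive)
    (hodd : Odd (star x * y).im) (hcop : IsCoprime y.im y.norm)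
    (hre : y.re % 4 = 1) (him : 4 ∣ y.im) :
    J(y.im * (star x * y).im | y.norm.natAbs) = J(y.norm | (star x * y).im.natAbs) := by
  have hQ := norm_emod_four_eq_one hre him
  have hd : J(y.im | y.norm.natAbs) = realHilbertSym y.im y.norm :=
    jacobiSym_natAbs_eq_realHilbertSym_of_four_dvd him (Int.odd_iff.mpr (by lia))
      (norm_modEq_re_sq y) hcop
  have hsign : realHilbertSym y.im y.norm * realHilbertSym (star x * y).im y.norm = 1 := by
    unfold realHilbertSym
    by_cases hy : y.norm < 0
    · have := hx.im_star_mul_neg_iff hy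
      split_ifs <;> lia
    · simp [hy]
  rw [jacobiSym.mul_left, hd, jacobiSym_natAbs_reciprocity hodd hQ, mul_left_comm, hsign, mul_one]

theorem jacobiSym_norm_mul_jacobiSym_norm (hx : IsCoprime x.norm (star y * x).im)
    (hy : IsCoprime y.norm (star y * x).im) :
    J(x.norm | (star y * x).im.natAbs) * J(y.norm | (star y * x).im.natAbs) = 1 := by
  have hnorm : x.norm * y.norm = (star y * x).norm := by
    rw [map_mul, QuadraticAlgebra.norm_star, mul_comm]
  rw [← jacobiSym.mul_left]
  exact jacobiSym_natAbs_eq_one_of_modEq_sq (hnorm ▸ norm_modEq_re_sq _) (hx.mul_left hy)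

theorem TotallyPositive.jacobiSym_im_mul_mul_jacobiSym_im_mul (hx : x.TotallyPositive)
    (hx' : Odd x.im) (hre : y.re % 4 = 1) (him : 4 ∣ y.im)
    (hxy : J(x.im * (star y * x).im | x.norm.natAbs) ≠ 0)
    (hyx : J(y.im * (star x * y).im | y.norm.natAbs) ≠ 0) :
    J(x.im * (star y * x).im | x.norm.natAbs) * J(y.im * (star x * y).im | y.norm.natAbs) = 1 := by
  have hy4 := norm_emod_four_eq_one hre him
  have hbm := im_mul_im_star_mul_emod_four_eq_one hx' hre him
  have hneg : (star x * y).im = -(star y * x).im := by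
    rw [im_star_mul, im_star_mul]
    ring
  have hodd : Odd (-(star y * x).im) :=
    (Int.Odd.of_mul_right (m := x.im) (Int.odd_iff.mpr (by lia))).neg
  have hxcop : IsCoprime x.norm x.im ∧ IsCoprime x.norm (star y * x).im := by
    rw [← IsCoprime.mul_right_iff]
    exact (isCoprime_of_jacobiSym_ne_zero hx.norm_pos.ne' hxy).symm
  have hycop : IsCoprime y.im y.norm ∧ IsCoprime (star x * y).im y.norm := by
    rw [← IsCoprime.mul_left_iff]
    exact isCoprime_of_jacobiSym_ne_zero (by lia) hyx
  rw [jacobiSym_im_mul_norm_natAbs_of_norm_pos hx.norm_pos hx' hxcop.1 hre him,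
    hx.jacobiSym_im_mul_norm_natAbs (hneg ▸ hodd) hycop.1 hre him, hneg, Int.natAbs_neg]
  rw [hneg, IsCoprime.neg_left_iff] at hycop
  exact jacobiSym_norm_mul_jacobiSym_norm hxcop.2 hycop.2.symm

theorem explicitSym_smul_left (l : ℤ) (z : GoldenInt) (k : ℤ) (x : GoldenInt) :
    explicitSym (l • z) k x =
      J(l | k.natAbs) ^ 2 * J(l | x.norm.natAbs) * explicitSym z k x := by
  have hnorm : (l • z).norm = l ^ 2 * z.norm := by
    rw [zsmul_eq_mul, map_mul, QuadraticAlgebra.norm_intCast, Int.cast_id]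
  have him : (star (l • z) * x).im = l * (star z * x).im := by
    rw [im_star_mul, im_star_mul, QuadraticAlgebra.re_smul, QuadraticAlgebra.im_smul, smul_eq_mul,
      smul_eq_mul]
    ring
  simp only [explicitSym, hnorm, him, jacobiSym.mul_left, jacobiSym.pow_left]
  ring

theorem TotallyPositive.explicitSym_mul_explicitSym (hx : x.TotallyPositive) (hk : 0 < k)
    (hk' : Odd k) (hl : l % 4 = 1) (hx' : Odd x.im) (hre : y.re % 4 = 1) (him : 4 ∣ y.im)
    (hxy : explicitSym (l • y) k x ≠ 0) (hyx : explicitSym (k • x) l y ≠ 0) :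
    explicitSym (l • y) k x * explicitSym (k • x) l y = 1 := by
  have hk_rec : J(k | y.norm.natAbs) = J(y.norm | k.natAbs) := by
    rw [jacobiSym_natAbs_reciprocity hk' (norm_emod_four_eq_one hre him),
      realHilbertSym_of_pos_left _ hk, mul_one]
  have hl_rec : J(x.norm | l.natAbs) = J(l | x.norm.natAbs) := by
    rw [jacobiSym_natAbs_reciprocity (odd_norm_iff.mpr (.inr hx')) hl,
      realHilbertSym_of_pos_left _ hx.norm_pos, mul_one]
  rw [explicitSym_smul_left, explicitSym] at hxy
  rw [explicitSym_smul_left, explicitSym, hk_rec, hl_rec] at hyx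
  rw [explicitSym_smul_left l, explicitSym_smul_left k, explicitSym, explicitSym, hk_rec, hl_rec]
  obtain ⟨⟨hlk, hlP⟩, hQk, hP⟩ := by
    simpa only [mul_ne_zero_iff, pow_ne_zero_iff two_ne_zero] using hxy
  obtain ⟨⟨hkl, -⟩, -, hQ⟩ := by
    simpa only [mul_ne_zero_iff, pow_ne_zero_iff two_ne_zero] using hyx
  calc
    _ = J(l | k.natAbs) ^ 2 * J(k | l.natAbs) ^ 2 * J(l | x.norm.natAbs) ^ 2 *
        J(y.norm | k.natAbs) ^ 2 * (J(x.im * (star y * x).im | x.norm.natAbs) *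
          J(y.im * (star x * y).im | y.norm.natAbs)) := by ring
    _ = 1 := by
      rw [jacobiSym_sq_eq_one_of_ne_zero hlk, jacobiSym_sq_eq_one_of_ne_zero hkl,
        jacobiSym_sq_eq_one_of_ne_zero hlP, jacobiSym_sq_eq_one_of_ne_zero hQk,
        hx.jacobiSym_im_mul_mul_jacobiSym_im_mul hx' hre him hP hQ]
      norm_num

end GoldenInt

/-- `f` is the reduction map from `R` to the residue field of the prime ideal generated by `β`, and
this field has `|N β|` elements. -/
structure IsResidueMap {R K : Type*} [CommRing R] [Field K] [Fintype K] (f : R →+* K) (β : R) :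
    Prop where
  surjective : Function.Surjective f
  eq_zero_iff (x : R) : f x = 0 ↔ β ∣ x
  card_eq : Fintype.card K = (Algebra.norm ℤ β).natAbs

namespace IsResidueMap

variable {R K : Type*} [CommRing R] [Field K] [Fintype K] {f : R →+* K} {β : R}

theorem unit_mul (hf : IsResidueMap f β) (u : Rˣ) : IsResidueMap f (u * β) where
  surjective := hf.surjective
  eq_zero_iff x := by rw [hf.eq_zero_iff, u.isUnit.mul_left_dvd]
  card_eq := by
    rw [map_mul, Int.natAbs_mul, Int.isUnit_iff_natAbs_eq.mp (u.isUnit.map _), one_mul, hf.card_eq]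

theorem comp_ringEquiv {S : Type*} [CommRing S] (hf : IsResidueMap f β) (e : S ≃+* R) :
    IsResidueMap (f.comp (e : S →+* R)) (e.symm β) where
  surjective := hf.surjective.comp e.surjective
  eq_zero_iff x := (hf.eq_zero_iff _).trans ((map_dvd_iff_dvd_symm e.symm).symm)
  card_eq := by rw [hf.card_eq, ← Algebra.norm_eq_of_algEquiv e.symm.toIntAlgEquiv]; rfl

theorem ringChar_ne_two (hf : IsResidueMap f β) (hβ : Odd (Algebra.norm ℤ β)) :
    ringChar K ≠ 2 := by
  rw [Ne, FiniteField.even_card_iff_char_two, hf.card_eq, ← Nat.even_iff, Nat.not_even_iff_odd]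
  exact hβ.natAbs

theorem quadraticChar_eq_of_dvd [DecidableEq K] (hf : IsResidueMap f β)
    (hβ : Odd (Algebra.norm ℤ β)) {α : R} {s : ℤ} (hs : s = 1 ∨ s = -1)
    (h : β ∣ α ^ (((Algebra.norm ℤ β).natAbs - 1) / 2) - (s : R)) :
    quadraticChar K (f α) = s := by
  have hchar := hf.ringChar_ne_two hβ
  have hexp : ((Algebra.norm ℤ β).natAbs - 1) / 2 = Fintype.card K / 2 := by
    have := Nat.odd_iff.mp hβ.natAbs
    rw [hf.card_eq]
    lia
  have hpow : (quadraticChar K (f α) : K) = s := by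
    rw [quadraticChar_eq_pow_of_char_ne_two' hchar, ← sub_eq_zero, ← hexp]
    simpa using (hf.eq_zero_iff _).mpr h
  exact Int.cast_injOn_of_ringChar_ne_two hchar (quadraticChar_isQuadratic K _) (.inr hs) hpow

end IsResidueMap

theorem exists_isResidueMap_of_prime.{u} {R : Type u} [CommRing R] [IsDedekindDomain R]
    [Module.Free ℤ R] [Module.Finite ℤ R] {β : R} (hβ : Prime β) :
    ∃ (K : Type u) (_ : Field K) (_ : Fintype K) (f : R →+* K), IsResidueMap f β := by
  have hne : Ideal.span {β} ≠ ⊥ := by simpa using hβ.ne_zero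
  have hprime : (Ideal.span {β}).IsPrime := (Ideal.span_singleton_prime hβ.ne_zero).mpr hβ
  have : (Ideal.span {β}).IsMaximal := hprime.isMaximal hne
  have : Finite (R ⧸ Ideal.span {β}) := Ideal.finiteQuotientOfFreeOfNeBot _ hne
  let := Ideal.Quotient.field (Ideal.span {β})
  let := Fintype.ofFinite (R ⧸ Ideal.span {β})
  refine ⟨R ⧸ Ideal.span {β}, _, _, Ideal.Quotient.mk _, Ideal.Quotient.mk_surjective,
    fun x => ?_, ?_⟩
  · rw [Ideal.Quotient.eq_zero_iff_mem, Ideal.mem_span_singleton]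
  · rw [← Ideal.absNorm_span_singleton, ← Nat.card_eq_fintype_card, Ideal.absNorm_apply,
      Submodule.cardQuot_apply]

theorem intCast_pow_ringChar_div_two (K : Type*) [Field K] [Finite K] (n : ℤ) :
    (n : K) ^ (ringChar K / 2) = (J(n | ringChar K) : K) := by
  have : Fact (ringChar K).Prime := ⟨CharP.char_is_prime K _⟩
  have h := congrArg (ZMod.castHom dvd_rfl K) (legendreSym.eq_pow (ringChar K) n)
  rw [jacobiSym.legendreSym.to_jacobiSym] at h
  simpa using h.symm

theorem quadraticChar_eq_jacobiSym_of_pow_eq {K : Type*} [Field K] [Fintype K] [DecidableEq K]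
    (hK : ringChar K ≠ 2) {a : K} {n : ℤ} {p : ℕ}
    (h : a ^ (Fintype.card K / 2) = (J(n | p) : K)) : quadraticChar K a = J(n | p) := by
  rw [← quadraticChar_eq_pow_of_char_ne_two' hK] at h
  exact Int.cast_injOn_of_ringChar_ne_two hK (quadraticChar_isQuadratic K a)
    (jacobiSym.trichotomy n p) h

theorem card_le_of_forall_pow_eq {K : Type*} [Field K] [Fintype K] {n : ℕ} (hn : 1 < n)
    (h : ∀ a : K, a ^ n = a) : Fintype.card K ≤ n := by
  have hdvd : Fintype.card K - 1 ∣ n - 1 := by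
    refine (FiniteField.forall_pow_eq_one_iff K _).mp fun a => ?_
    rw [Units.ext_iff, Units.val_pow_eq_pow_val, Units.val_one, ← mul_left_inj' a.ne_zero,
      ← pow_succ, Nat.sub_add_cancel hn.le, h, one_mul]
  have := Nat.le_of_dvd (by lia) hdvd
  lia

namespace GoldenInt

open QuadraticAlgebra (omega)

section RingHom

variable {S : Type*} [Ring S] (f : GoldenInt →+* S)

theorem map_eq_re_add_im_mul (y : GoldenInt) : f y = y.re + y.im * f omega := by
  conv_lhs => rw [← QuadraticAlgebra.mk_eta y, QuadraticAlgebra.mk_eq_add_smul_omega]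
  simp [zsmul_eq_mul]

theorem map_star_eq (y : GoldenInt) : f (star y) = y.re + y.im * (1 - f omega) := by
  rw [map_eq_re_add_im_mul, QuadraticAlgebra.re_star, QuadraticAlgebra.im_star]
  push_cast
  noncomm_ring

end RingHom

theorem algebraNorm_eq (x : GoldenInt) : Algebra.norm ℤ x = x.norm := by
  rw [Algebra.norm_apply]
  exact QuadraticAlgebra.det_toLinearMap_eq_norm x

variable {K : Type*} [Field K] {f : GoldenInt →+* K} {β : GoldenInt}

section Split

theorem map_im_sq_mul (hβ : f β = 0) (y : GoldenInt) :
    (β.im : K) ^ 2 * f y = ((β.im * (star y * β).im : ℤ) : K) := by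
  have h : (β.im : K) * f y = ((star y * β).im : K) + y.im * f β := by
    rw [map_eq_re_add_im_mul f y, map_eq_re_add_im_mul f β, im_star_mul]
    push_cast
    ring
  rw [sq, mul_assoc, h, hβ]
  push_cast
  ring

theorem card_eq_ringChar_of_im_ne_zero [Fintype K] (hf : Function.Surjective f) (hβ : f β = 0)
    (him : (β.im : K) ≠ 0) : Fintype.card K = ringChar K := by
  have : Fact (ringChar K).Prime := ⟨CharP.char_is_prime K _⟩
  let φ := ZMod.castHom (dvd_refl (ringChar K)) K
  have hφ : Function.Surjective φ := fun a => by
    obtain ⟨y, rfl⟩ := hf a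
    refine ⟨(β.im * (star y * β).im : ℤ) / (β.im : ZMod (ringChar K)) ^ 2, ?_⟩
    rw [map_div₀, map_pow, map_intCast, map_intCast, ← map_im_sq_mul hβ y]
    exact mul_div_cancel_left₀ _ (pow_ne_zero 2 him)
  rw [← Fintype.card_of_bijective ⟨φ.injective, hφ⟩, ZMod.card]

theorem quadraticChar_eq_explicitSym_of_im_ne_zero [Fintype K] [DecidableEq K]
    (hf : IsResidueMap f β) (hβ : Odd β.norm) (him : (β.im : K) ≠ 0) (y : GoldenInt) :
    quadraticChar K (f y) = explicitSym y 1 β := by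
  have hβ0 : f β = 0 := (hf.eq_zero_iff β).mpr dvd_rfl
  have hchar := hf.ringChar_ne_two (by rwa [algebraNorm_eq])
  have hcard := card_eq_ringChar_of_im_ne_zero hf.surjective hβ0 him
  have hnorm : β.norm.natAbs = ringChar K := by rw [← hcard, hf.card_eq, algebraNorm_eq]
  rw [explicitSym, Int.natAbs_one, jacobiSym.one_right, one_mul, hnorm]
  have hsq := congrArg (quadraticChar K) (map_im_sq_mul hβ0 y)
  rw [map_mul, quadraticChar_sq_one' him, one_mul] at hsq
  rw [hsq]
  refine quadraticChar_eq_jacobiSym_of_pow_eq hchar ?_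
  rw [hcard, intCast_pow_ringChar_div_two]

end Split

section Inert

variable [Fintype K]

theorem pow_ringChar_eq_map_star (hf : Function.Surjective f) (hcard : ringChar K < Fintype.card K)
    (y : GoldenInt) : f y ^ ringChar K = f (star y) := by
  have : Fact (ringChar K).Prime := ⟨CharP.char_is_prime K _⟩
  have hfrob (z : GoldenInt) :
      f z ^ ringChar K = z.re + z.im * f omega ^ ringChar K := by
    rw [map_eq_re_add_im_mul f z]
    simp only [← frobenius_def, map_add, map_mul, map_intCast]
  have hroot : f omega * f omega = 1 + f omega := by
    rw [← map_mul, ← map_one f, ← map_add]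
    rfl
  have hroot' := congrArg (frobenius K (ringChar K)) hroot
  simp only [map_mul, map_add, map_one, frobenius_def] at hroot'
  have hne : f omega ^ ringChar K ≠ f omega := fun h => by
    refine hcard.not_ge (card_le_of_forall_pow_eq this.out.one_lt fun a => ?_)
    obtain ⟨z, rfl⟩ := hf a
    rw [hfrob, h, ← map_eq_re_add_im_mul]
  have hconj : f omega ^ ringChar K = 1 - f omega := by
    refine sub_eq_zero.mp ((mul_eq_zero.mp ?_).resolve_left (sub_ne_zero.mpr hne))
    linear_combination hroot' - hroot
  rw [hfrob, map_star_eq, hconj]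

theorem quadraticChar_eq_jacobiSym_norm [DecidableEq K] (hf : Function.Surjective f)
    (hK : ringChar K ≠ 2) (hcard : Fintype.card K = ringChar K ^ 2) (y : GoldenInt) :
    quadraticChar K (f y) = J(y.norm | ringChar K) := by
  have hp := CharP.char_is_prime K (ringChar K)
  have hexp : Fintype.card K / 2 = (ringChar K + 1) * (ringChar K / 2) := by
    obtain ⟨m, hm⟩ := hp.odd_of_ne_two hK
    have hm' : Fintype.card K = 2 * ((ringChar K + 1) * m) + 1 := by rw [hcard, hm]; ring
    rw [hm', show ringChar K / 2 = m by lia]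
    lia
  refine quadraticChar_eq_jacobiSym_of_pow_eq hK ?_
  have hlt : ringChar K < Fintype.card K := hcard ▸ lt_self_pow₀ hp.one_lt one_lt_two
  rw [hexp, pow_mul, pow_succ, pow_ringChar_eq_map_star hf hlt, ← map_mul, mul_comm,
    ← QuadraticAlgebra.algebraMap_norm_eq_mul_star, ← intCast_pow_ringChar_div_two]
  simp

theorem exists_smul_of_im_eq_zero (hf : IsResidueMap f β) (him : (β.im : K) = 0) :
    ∃ x : GoldenInt, IsUnit x ∧ β = (ringChar K : ℤ) • x := by
  have hre : (β.re : K) = 0 := by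
    have h := (hf.eq_zero_iff β).mpr dvd_rfl
    rwa [map_eq_re_add_im_mul, him, zero_mul, add_zero] at h
  obtain ⟨r, hr⟩ := (CharP.intCast_eq_zero_iff K (ringChar K) β.re).mp hre
  obtain ⟨s, hs⟩ := (CharP.intCast_eq_zero_iff K (ringChar K) β.im).mp him
  have hβ : β = (ringChar K : ℤ) • (⟨r, s⟩ : GoldenInt) := by ext <;> simpa
  refine ⟨⟨r, s⟩, ?_, hβ⟩
  obtain ⟨z, hz⟩ : β ∣ ((ringChar K : ℤ) : GoldenInt) := (hf.eq_zero_iff _).mp (by simp)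
  have hp : (ringChar K : ℤ) ≠ 0 := mod_cast (CharP.char_is_prime K _).ne_zero
  refine IsUnit.of_mul_eq_one z (smul_right_injective GoldenInt hp ?_)
  dsimp only
  rw [← smul_mul_assoc, ← hβ, ← hz, ← zsmul_one]

end Inert

theorem exists_forall_quadraticChar_eq_explicitSym [Fintype K] [DecidableEq K]
    (hf : IsResidueMap f β) (hβ : Odd β.norm) :
    ∃ (k : ℤ) (x : GoldenInt), 0 < k ∧ β = k • x ∧
      ∀ y, quadraticChar K (f y) = explicitSym y k x := by
  by_cases him : (β.im : K) = 0
  · obtain ⟨x, hx, hβx⟩ := exists_smul_of_im_eq_zero hf him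
    have hp := CharP.char_is_prime K (ringChar K)
    have hnorm : x.norm.natAbs = 1 := Int.isUnit_iff_natAbs_eq.mp (hx.map _)
    refine ⟨ringChar K, x, mod_cast hp.pos, hβx, fun y => ?_⟩
    have hcard : Fintype.card K = ringChar K ^ 2 := by
      rw [hf.card_eq, algebraNorm_eq, hβx, zsmul_eq_mul, map_mul, Int.natAbs_mul, hnorm]
      simp
    rw [quadraticChar_eq_jacobiSym_norm hf.surjective
      (hf.ringChar_ne_two (by rwa [algebraNorm_eq])) hcard, explicitSym, hnorm,
      jacobiSym.one_right, mul_one, Int.natAbs_natCast]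
  · exact ⟨1, β, one_pos, (one_zsmul β).symm,
      quadraticChar_eq_explicitSym_of_im_ne_zero hf hβ him⟩

end GoldenInt

theorem emod_four_of_mul_emod_four_eq_one {m n : ℤ} (h : m * n % 4 = 1) :
    m % 4 = 1 ∧ n % 4 = 1 ∨ -m % 4 = 1 ∧ -n % 4 = 1 := by
  have hm : m % 4 = 0 ∨ m % 4 = 1 ∨ m % 4 = 2 ∨ m % 4 = 3 := by lia
  rw [Int.mul_emod] at h
  rcases hm with hm | hm | hm | hm <;> rw [hm] at h <;> lia

namespace GoldenInt

open QuadraticAlgebra (omega)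

theorem odd_norm_iff_not_two_dvd {x : GoldenInt} : Odd x.norm ↔ ¬ 2 ∣ x := by
  rw [← map_ofNat (algebraMap ℤ GoldenInt), QuadraticAlgebra.algebraMap_dvd_iff,
    odd_norm_iff, ← even_iff_two_dvd, ← even_iff_two_dvd, not_and_or,
    Int.not_even_iff_odd, Int.not_even_iff_odd]

theorem four_dvd_sub_one_iff {x : GoldenInt} : 4 ∣ x - 1 ↔ x.re % 4 = 1 ∧ 4 ∣ x.im := by
  have h4 : (4 : GoldenInt) = algebraMap ℤ GoldenInt 4 := rfl
  rw [h4, QuadraticAlgebra.algebraMap_dvd_iff, QuadraticAlgebra.re_sub, QuadraticAlgebra.im_sub,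
    QuadraticAlgebra.re_one, QuadraticAlgebra.im_one, sub_zero]
  exact and_congr_left' (by lia)

/-- The golden ratio as a unit of `ℤ[ω]`. -/
def unitOmega : GoldenIntˣ where
  val := omega
  inv := omega - 1
  val_inv := by decide
  inv_val := by decide

theorem re_unitOmega_mul (x : GoldenInt) : (unitOmega * x).re = x.im := by
  simp [unitOmega]

theorem im_unitOmega_mul (x : GoldenInt) : (unitOmega * x).im = x.re + x.im := by
  simp [unitOmega]

variable {x α : GoldenInt}

theorem exists_unit_odd_im_sq_mul (hx : Odd x.norm) :
    ∃ u : GoldenIntˣ, Odd ((u ^ 2 : GoldenIntˣ) * x).im := by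
  by_cases him : Odd x.im
  · exact ⟨1, by simpa⟩
  · have hre := (odd_norm_iff.mp hx).resolve_right him
    refine ⟨unitOmega, ?_⟩
    rw [sq, Units.val_mul, mul_assoc, im_unitOmega_mul, re_unitOmega_mul, im_unitOmega_mul]
    grind

theorem exists_unit_odd_re_even_im_mul (hx : Odd x.norm) :
    ∃ u : GoldenIntˣ, Odd (↑u * x).re ∧ Even (↑u * x).im := by
  obtain him | him := Int.even_or_odd x.im
  · exact ⟨1, by simpa [him, ← Int.not_even_iff_odd] using odd_norm_iff.mp hx⟩
  obtain hre | hre := Int.even_or_odd x.re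
  · refine ⟨unitOmega ^ 2, ?_⟩
    simp only [sq, Units.val_mul, mul_assoc, re_unitOmega_mul, im_unitOmega_mul]
    exact ⟨hre.add_odd him, by grind⟩
  · refine ⟨unitOmega, ?_⟩
    rw [re_unitOmega_mul, im_unitOmega_mul]
    exact ⟨him, hre.add_odd him⟩

theorem four_dvd_sq_sub_one (hre : Odd x.re) (him : Even x.im) : 4 ∣ x ^ 2 - 1 := by
  obtain ⟨s, hs⟩ := hre
  obtain ⟨t, ht⟩ := him
  refine four_dvd_sub_one_iff.mpr ⟨?_, (2 * s + 1) * t + t ^ 2, ?_⟩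
  · simp only [sq, QuadraticAlgebra.re_mul, hs, ht]
    ring_nf
    lia
  · simp only [sq, QuadraticAlgebra.im_mul, hs, ht]
    ring

theorem exists_unit_four_dvd_sq_mul_sub_one (hα : Odd α.norm) {X : GoldenInt}
    (hX : 4 ∣ α - X ^ 2) : ∃ u : GoldenIntˣ, 4 ∣ (u ^ 2 : GoldenIntˣ) * α - 1 := by
  have hXodd : Odd X.norm := by
    rw [odd_norm_iff_not_two_dvd] at hα ⊢
    have h2 : (2 : GoldenInt) ∣ 4 := ⟨2, by norm_num⟩
    exact fun h => hα ((dvd_sub_left (h.pow two_ne_zero)).mp (h2.trans hX))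
  obtain ⟨u, hre, him⟩ := exists_unit_odd_re_even_im_mul hXodd
  refine ⟨u, ?_⟩
  have hsum : (u ^ 2 : GoldenIntˣ) * α - 1 = u ^ 2 * (α - X ^ 2) + ((u * X) ^ 2 - 1) := by
    push_cast
    ring
  rw [hsum]
  exact (hX.mul_left _).add (four_dvd_sq_sub_one hre him)

theorem explicitSym_neg_neg (z : GoldenInt) (k : ℤ) (x : GoldenInt) :
    explicitSym z (-k) (-x) = explicitSym z k x := by
  have him : (-x).im * (star z * -x).im = x.im * (star z * x).im := by
    rw [mul_neg, QuadraticAlgebra.im_neg, QuadraticAlgebra.im_neg, neg_mul_neg]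
  rw [explicitSym, explicitSym, him, Int.natAbs_neg, QuadraticAlgebra.norm_neg]

theorem TotallyPositive.unit_sq_mul (hx : x.TotallyPositive) (u : GoldenIntˣ) :
    TotallyPositive ((u ^ 2 : GoldenIntˣ) * x) := fun φ => by
  rw [Units.val_pow_eq_pow_val, map_mul, map_pow]
  exact mul_pos (sq_pos_of_ne_zero (u.isUnit.map φ).ne_zero) (hx φ)

theorem TotallyPositive.of_smul {k : ℤ} (hk : 0 < k) (hx : (k • x).TotallyPositive) :
    x.TotallyPositive := fun φ => by
  have h := hx φ
  rw [map_zsmul] at h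
  exact pos_of_smul_pos_left h hk.le

variable {β : GoldenInt} {K L : Type*} [Field K] [Fintype K] [DecidableEq K] [Field L] [Fintype L]
  [DecidableEq L] {f : GoldenInt →+* K} {g : GoldenInt →+* L}

theorem exists_forall_quadraticChar_eq_explicitSym_of_four_dvd_sub_one (hg : IsResidueMap g α)
    (hα : 4 ∣ α - 1) :
    ∃ (l : ℤ) (y : GoldenInt), α = l • y ∧ l % 4 = 1 ∧ y.re % 4 = 1 ∧ 4 ∣ y.im ∧
      ∀ z, quadraticChar L (g z) = explicitSym z l y := by
  obtain ⟨hre, him⟩ := four_dvd_sub_one_iff.mp hα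
  obtain ⟨l, y, -, rfl, hsym⟩ := exists_forall_quadraticChar_eq_explicitSym hg
    (odd_norm_iff.mpr (.inl (Int.odd_iff.mpr (by lia))))
  rw [QuadraticAlgebra.re_smul, smul_eq_mul] at hre
  rw [QuadraticAlgebra.im_smul, smul_eq_mul] at him
  have hl : Odd l := Int.Odd.of_mul_right (m := y.re) (Int.odd_iff.mpr (by lia))
  have hcop : IsCoprime 4 l := (Int.isCoprime_two_left.mpr hl).pow_left (m := 2)
  have him' : 4 ∣ y.im := hcop.dvd_of_dvd_mul_left him
  obtain ⟨hl1, hre1⟩ | ⟨hl1, hre1⟩ := emod_four_of_mul_emod_four_eq_one hre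
  · exact ⟨l, y, rfl, hl1, hre1, him', hsym⟩
  · refine ⟨-l, -y, (neg_smul_neg l y).symm, hl1, hre1, him'.neg_right, fun z => ?_⟩
    rw [hsym, explicitSym_neg_neg]

theorem quadraticChar_mul_quadraticChar_of_normalized (hf : IsResidueMap f β)
    (hg : IsResidueMap g α) (hpos : β.TotallyPositive) (hβ : Odd β.im) (hα : 4 ∣ α - 1)
    (hfα : f α ≠ 0) (hgβ : g β ≠ 0) :
    quadraticChar K (f α) * quadraticChar L (g β) = 1 := by
  obtain ⟨k, x, hk, rfl, hx⟩ :=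
    exists_forall_quadraticChar_eq_explicitSym hf (odd_norm_iff.mpr (.inr hβ))
  obtain ⟨l, y, rfl, hl, hre, him, hy⟩ :=
    exists_forall_quadraticChar_eq_explicitSym_of_four_dvd_sub_one hg hα
  rw [QuadraticAlgebra.im_smul, smul_eq_mul, Int.odd_mul] at hβ
  rw [Ne, ← quadraticChar_eq_zero_iff, hx] at hfα
  rw [Ne, ← quadraticChar_eq_zero_iff, hy] at hgβ
  rw [hx, hy]
  exact (hpos.of_smul hk).explicitSym_mul_explicitSym hk hβ.1 hl hβ.2 hre him hfα hgβ

theorem quadraticChar_map_unit_sq_mul (u : GoldenIntˣ) (z : GoldenInt) :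
    quadraticChar K (f ((u ^ 2 : GoldenIntˣ) * z)) = quadraticChar K (f z) := by
  rw [Units.val_pow_eq_pow_val, map_mul, map_pow, map_mul,
    quadraticChar_sq_one' (u.isUnit.map f).ne_zero, one_mul]

theorem quadraticChar_mul_quadraticChar (hf : IsResidueMap f β) (hg : IsResidueMap g α)
    (hβ : Odd β.norm) (hα : Odd α.norm) (hpos : β.TotallyPositive) {X : GoldenInt}
    (hX : 4 ∣ α - X ^ 2) (hfα : f α ≠ 0) (hgβ : g β ≠ 0) :
    quadraticChar K (f α) * quadraticChar L (g β) = 1 := by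
  obtain ⟨u, hu⟩ := exists_unit_odd_im_sq_mul hβ
  obtain ⟨v, hv⟩ := exists_unit_four_dvd_sq_mul_sub_one hα hX
  rw [← quadraticChar_map_unit_sq_mul u β, ← quadraticChar_map_unit_sq_mul v α]
  refine quadraticChar_mul_quadraticChar_of_normalized (hf.unit_mul _) (hg.unit_mul _)
    (hpos.unit_sq_mul u) hu hv ?_ ?_
  · simpa [(v.isUnit.map f).ne_zero] using hfα
  · simpa [(u.isUnit.map g).ne_zero] using hgβ

end GoldenInt

/-- The field `ℚ(ω)` with `ω² = 1 + ω`, a concrete model of `ℚ(√5)`. -/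
abbrev GoldenField := QuadraticAlgebra ℚ 1 1

theorem exists_intCast_eq_of_prime_mul_sq_eq {p d : ℤ} (hp : Prime p) {s : ℚ} (h : p * s ^ 2 = d) :
    ∃ n : ℤ, n = s := by
  have hint : IsIntegral ℤ (p * s) := by
    refine .of_pow two_pos ?_
    rw [mul_pow, sq, mul_assoc, h, ← Int.cast_mul]
    exact isIntegral_intCast _
  obtain ⟨m, hm⟩ := IsIntegrallyClosed.isIntegral_iff.mp hint
  rw [eq_intCast] at hm
  have hdvd : p ∣ m ^ 2 := ⟨d, by
    have h' : (m ^ 2 : ℚ) = p * d := by rw [hm, ← h]; ring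
    exact_mod_cast h'⟩
  obtain ⟨n, rfl⟩ := hp.dvd_of_dvd_pow hdvd
  refine ⟨n, mul_left_cancel₀ (Int.cast_ne_zero.mpr hp.ne_zero) ?_⟩
  rw [← hm, Int.cast_mul]

namespace GoldenField

/-- The inclusion of `ℤ[ω]` in `ℚ(ω)`. -/
instance : Algebra GoldenInt GoldenField := RingHom.toAlgebra
  { toFun y := ⟨y.re, y.im⟩
    map_one' := QuadraticAlgebra.ext Int.cast_one Int.cast_zero
    map_mul' _ _ := by ext <;> simp
    map_zero' := by ext <;> simp
    map_add' _ _ := by ext <;> simp }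

theorem algebraMap_apply (y : GoldenInt) : algebraMap GoldenInt GoldenField y = ⟨y.re, y.im⟩ :=
  rfl

theorem isIntegral_algebraMap_rat_iff {r : ℚ} :
    IsIntegral ℤ (algebraMap ℚ GoldenField r) ↔ ∃ n : ℤ, n = r := by
  rw [isIntegral_algebraMap_iff QuadraticAlgebra.algebraMap_injective]
  exact IsIntegrallyClosed.isIntegral_iff

theorem exists_algebraMap_eq_of_isIntegral {z : GoldenField} (hz : IsIntegral ℤ z) :
    ∃ y : GoldenInt, algebraMap GoldenInt GoldenField y = z := by
  have hz' : IsIntegral ℤ (star z) := hz.map (starRingEnd GoldenField).toIntAlgHom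
  obtain ⟨t, ht⟩ : ∃ t : ℤ, t = 2 * z.re + z.im := by
    refine isIntegral_algebraMap_rat_iff.mp ?_
    have htrace : z + star z = algebraMap ℚ GoldenField (2 * z.re + z.im) := by
      ext
      · rw [QuadraticAlgebra.re_add, QuadraticAlgebra.re_star, QuadraticAlgebra.algebraMap_re]
        ring
      · rw [QuadraticAlgebra.im_add, QuadraticAlgebra.im_star, QuadraticAlgebra.algebraMap_im,
          add_neg_cancel]
    exact htrace ▸ hz.add hz'
  obtain ⟨n, hn⟩ : ∃ n : ℤ, n = z.norm := by
    rw [← isIntegral_algebraMap_rat_iff, QuadraticAlgebra.algebraMap_norm_eq_mul_star]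
    exact hz.mul hz'
  rw [QuadraticAlgebra.norm_def] at hn
  have hdisc : 5 * z.im ^ 2 = (t ^ 2 - 4 * n : ℤ) := by
    push_cast
    rw [ht, hn]
    ring
  have h5 : Prime (5 : ℤ) := Nat.prime_iff_prime_int.mp Nat.prime_five
  obtain ⟨s, hs⟩ := exists_intCast_eq_of_prime_mul_sq_eq h5 hdisc
  obtain ⟨r, hr⟩ : Even (t - s) := by
    rw [← hs] at hdisc
    have hdisc' : 5 * s ^ 2 + 4 * n = t ^ 2 := by rw [← eq_sub_iff_add_eq]; exact_mod_cast hdisc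
    rw [Int.even_sub, ← Int.even_pow' (m := t) two_ne_zero, ← hdisc']
    simp [Int.even_add, Int.even_mul, Int.even_pow, show ¬Even (5 : ℤ) by decide,
      show Even (4 : ℤ) by decide]
  refine ⟨⟨r, s⟩, ?_⟩
  rw [algebraMap_apply]
  ext
  · have : (t : ℚ) = r + r + s := mod_cast sub_eq_iff_eq_add.mp hr
    dsimp only
    linarith
  · exact hs

instance : IsIntegralClosure GoldenInt ℤ GoldenField where
  algebraMap_injective x y h := by
    simp only [algebraMap_apply, QuadraticAlgebra.mk.injEq, Int.cast_inj] at h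
    exact QuadraticAlgebra.ext h.1 h.2
  isIntegral_iff := ⟨exists_algebraMap_eq_of_isIntegral, fun ⟨y, hy⟩ =>
    hy ▸ (Algebra.IsIntegral.isIntegral (R := ℤ) y).map
      (algebraMap GoldenInt GoldenField).toIntAlgHom⟩

instance : Fact (∀ r : ℚ, r ^ 2 ≠ 1 + 1 * r) := ⟨fun r hr => by
  have h : IsSquare (5 : ℚ) := ⟨2 * r - 1, by linear_combination -4 * hr⟩
  exact absurd h (by norm_num)⟩

variable {F : Type*} [Field F] [CharZero F]

theorem nonempty_algEquiv {s : F} (hs : s ^ 2 = 5)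
    (hgen : IntermediateField.adjoin ℚ {s} = ⊤) : Nonempty (GoldenField ≃ₐ[ℚ] F) := by
  let φ : GoldenField →ₐ[ℚ] F := QuadraticAlgebra.lift ⟨(1 + s) / 2, by
    rw [one_smul, one_smul]
    linear_combination hs / 4⟩
  refine ⟨AlgEquiv.ofBijective φ ⟨φ.injective, ?_⟩⟩
  rw [← AlgHom.fieldRange_eq_top, eq_top_iff, ← hgen, IntermediateField.adjoin_simple_le_iff]
  refine ⟨⟨-1, 2⟩, ?_⟩
  simp only [φ, AlgHom.toRingHom_eq_coe, RingHom.coe_coe, QuadraticAlgebra.lift_apply_apply,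
    Algebra.smul_def, eq_ratCast]
  push_cast
  ring

theorem nonempty_ringEquiv_ringOfIntegers {s : F} (hs : s ^ 2 = 5)
    (hgen : IntermediateField.adjoin ℚ {s} = ⊤) : Nonempty (GoldenInt ≃+* 𝓞 F) := by
  obtain ⟨e⟩ := nonempty_algEquiv hs hgen
  exact ⟨(NumberField.RingOfIntegers.equiv GoldenInt).symm.trans
    (NumberField.RingOfIntegers.mapRingEquiv (e : GoldenField ≃+* F))⟩

end GoldenField

theorem ringHom_injective_of_isIntegral_int {R S : Type*} [CommRing R] [IsDomain R]
    [Algebra.IsIntegral ℤ R] [CommRing S] [CharZero S] (φ : R →+* S) :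
    Function.Injective φ := by
  rw [RingHom.injective_iff_ker_eq_bot]
  refine Ideal.eq_bot_of_comap_eq_bot (R := ℤ) ?_
  rw [RingHom.comap_ker, ← RingHom.injective_iff_ker_eq_bot]
  exact RingHom.injective_int _

namespace GoldenInt

theorem norm_ringEquiv_symm {R : Type*} [CommRing R] (e : GoldenInt ≃+* R) (x : R) :
    (e.symm x).norm = Algebra.norm ℤ x := by
  rw [← algebraNorm_eq, ← Algebra.norm_eq_of_algEquiv e.symm.toIntAlgEquiv]
  rfl

theorem totallyPositive_ringEquiv_symm {F : Type*} [Field F] [NumberField F]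
    (e : GoldenInt ≃+* 𝓞 F) {β : 𝓞 F} (hβ : ∀ φ : F →+* ℝ, 0 < φ (algebraMap (𝓞 F) F β)) :
    TotallyPositive (e.symm β) := fun φ => by
  let ψ : 𝓞 F →+* ℝ := φ.comp (e.symm : 𝓞 F →+* GoldenInt)
  have h := hβ (IsFractionRing.lift (ringHom_injective_of_isIntegral_int ψ))
  rwa [IsFractionRing.lift_algebraMap] at h

end GoldenInt

theorem IsResidueMap.quadraticChar_mul_quadraticChar {F : Type*} [Field F] [NumberField F] {s : F}
    (hs : s ^ 2 = 5) (hgen : IntermediateField.adjoin ℚ {s} = ⊤) {α β : 𝓞 F} {K L : Type*}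
    [Field K] [Fintype K] [DecidableEq K] [Field L] [Fintype L] [DecidableEq L]
    {f : 𝓞 F →+* K} {g : 𝓞 F →+* L} (hf : IsResidueMap f β) (hg : IsResidueMap g α)
    (hβ : Odd (Algebra.norm ℤ β)) (hα : Odd (Algebra.norm ℤ α))
    (hpos : ∀ φ : F →+* ℝ, 0 < φ (algebraMap (𝓞 F) F β)) {X : 𝓞 F} (hX : 4 ∣ α - X ^ 2)
    (hfα : f α ≠ 0) (hgβ : g β ≠ 0) :
    quadraticChar K (f α) * quadraticChar L (g β) = 1 := by
  obtain ⟨e⟩ := GoldenField.nonempty_ringEquiv_ringOfIntegers hs hgen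
  rw [← GoldenInt.norm_ringEquiv_symm e] at hβ hα
  have hX' : 4 ∣ e.symm α - e.symm X ^ 2 := by simpa [map_ofNat] using map_dvd e.symm hX
  rw [← e.apply_symm_apply α] at hfα ⊢
  rw [← e.apply_symm_apply β] at hgβ ⊢
  exact GoldenInt.quadraticChar_mul_quadraticChar (hf.comp_ringEquiv e) (hg.comp_ringEquiv e)
    hβ hα (GoldenInt.totallyPositive_ringEquiv_symm e hpos) hX' hfα hgβ

/-- Quadratic reciprocity over `F₀ = ℚ(√5)`:  let `λ, β ∈ 𝓞 F₀` be relatively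
prime elements of odd norm, generating prime ideals, with `−λ` a square modulo
`4·𝓞 F₀` and `β` totally positive.  Then `(−λ/β)·(β/λ) = 1`, where the
quadratic residue symbol `(α/β) ∈ {±1}` is characterized by Euler's criterion
`(α/β) ≡ α^{(N(β)−1)/2} mod β`. -/
theorem quadratic_reciprocity_sqrt5
    (F₀ : Type*) [Field F₀] [NumberField F₀]
    (sq5 : F₀) (h5 : sq5 ^ 2 = 5)
    (hgen : IntermediateField.adjoin ℚ {sq5} = ⊤)
    (lam β : 𝓞 F₀)
    (hlam : Prime lam) (hβ : Prime β)
    (hoddlam : Odd (Algebra.norm ℤ lam)) (hoddβ : Odd (Algebra.norm ℤ β))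
    (hsq4 : ∃ X : 𝓞 F₀, (4 : 𝓞 F₀) ∣ (-lam - X ^ 2))
    (hβpos : ∀ φ : F₀ →+* ℝ, 0 < φ (algebraMap (𝓞 F₀) F₀ β))
    (hcop : IsCoprime lam β)
    (a b : ℤ) (ha : a = 1 ∨ a = -1) (hb : b = 1 ∨ b = -1)
    -- `a = (−λ/β)`, by Euler's criterion
    (hA : β ∣ ((-lam) ^ (((Algebra.norm ℤ β).natAbs - 1) / 2) - (a : 𝓞 F₀)))
    -- `b = (β/λ)`, by Euler's criterion
    (hB : lam ∣ (β ^ (((Algebra.norm ℤ lam).natAbs - 1) / 2) - (b : 𝓞 F₀))) :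
    a * b = 1 := by
  classical
  obtain ⟨K, _, _, f, hf⟩ := exists_isResidueMap_of_prime hβ
  obtain ⟨L, _, _, g, hg⟩ := exists_isResidueMap_of_prime hlam
  have hfa : quadraticChar K (f (-lam)) = a := hf.quadraticChar_eq_of_dvd hoddβ ha hA
  have hgb : quadraticChar L (g β) = b := hg.quadraticChar_eq_of_dvd hoddlam hb hB
  have hfne : f (-lam) ≠ 0 := by rw [Ne, ← quadraticChar_eq_zero_iff, hfa]; lia
  have hgne : g β ≠ 0 := by rw [Ne, ← quadraticChar_eq_zero_iff, hgb]; lia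
  have hg' : IsResidueMap g (-lam) := by simpa using hg.unit_mul (-1)
  have hodd' : Odd (Algebra.norm ℤ (-lam)) := by
    rwa [← Int.natAbs_odd, ← hg'.card_eq, hg.card_eq, Int.natAbs_odd]
  obtain ⟨X, hX⟩ := hsq4
  rw [← hfa, ← hgb]
  exact hf.quadraticChar_mul_quadraticChar h5 hgen hg' hoddβ hodd' hβpos hX hfne hgne
end
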